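/- There exist a finite alphabet α, a state B ∈ α, and a cellular automaton Φ : α^ℤ → α^ℤ with quiescent state B such that Φ is uniquely ergodic but not asymptotically nilpotent in density. -/

import Mathlib

open MeasureTheory Filter

/-- The Besicovitch pseudometric on `α^ℤ`:
`d_B(x,y) = limsup_{n→∞} |{i ∈ [-n,n] : x_i ≠ y_i}| / (2n+1)`. -/
noncomputable def besicovitchDist {α : Type} [DecidableEq α] (x y : ℤ → α) : ℝ :=
  Filter.limsup (fun n : ℕ =>
      (((Finset.Icc (-(n : ℤ)) (n : ℤ)).filter fun i => x i ≠ y i).card : ℝ) /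
        (2 * (n : ℝ) + 1))
    Filter.atTop


/-! ## Part 1 : abstract counting argument for self-simulating partitioned automata -/

/-- Directions of messages. -/
inductive Dir | L | C | R
deriving DecidableEq

instance : Fintype Dir := ⟨{Dir.L, Dir.C, Dir.R}, by intro x; cases x <;> decide⟩

/-- Displacement of a message. -/
def Dir.off : Dir → ℤ
  | .L => -1
  | .C => 0
  | .R => 1

theorem Dir.abs_off_le (d : Dir) : |d.off| ≤ 1 := by cases d <;> simp [Dir.off]

theorem Dir.card_eq : Fintype.card Dir = 3 := rfl

/-- Tags: address and age. -/
abbrev Tag (N T : ℕ) := ZMod N × ZMod T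

/-- Cell states. -/
abbrev CState (N T : ℕ) (Y : Type) := Dir → Option (Tag N T × Y)

/-- Space-time diagrams. -/
abbrev Orb (N T : ℕ) (Y : Type) := ℕ → ℤ → CState N T Y

set_option linter.unusedSectionVars false
set_option linter.unusedSimpArgs false

section Abstract

variable {N T : ℕ} {Y : Type}

/-- A faulty orbit: messages may be lost but never created. -/
def Faulty (out : CState N T Y → CState N T Y) (z : Orb N T Y) : Prop :=
  ∀ t j d m, z (t + 1) j d = some m → out (z t (j - d.off)) d = some m

def Live (z : Orb N T Y) (t : ℕ) (j : ℤ) : Prop := ∃ d m, z t j d = some m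

def phase (t : ℕ) (j : ℤ) (g : Tag N T) : Tag N T := ((j : ZMod N) - g.1, (t : ZMod T) - g.2)

def LiveP (p : Tag N T) (z : Orb N T Y) (t : ℕ) (j : ℤ) : Prop :=
  ∃ d m, z t j d = some m ∧ phase t j m.1 = p

def Eff (z : Orb N T Y) (t : ℕ) (j : ℤ) : Prop := ∃ d m, z (t + 1) (j + d.off) d = some m

def EffP (p : Tag N T) (z : Orb N T Y) (t : ℕ) (j : ℤ) : Prop :=
  ∃ d m, z (t + 1) (j + d.off) d = some m ∧ phase (t + 1) (j + d.off) m.1 = p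

open Classical in
/-- indicator -/
noncomputable def ind (P : Prop) : ℕ := if P then 1 else 0

theorem LiveP.live {p : Tag N T} {z : Orb N T Y} {t : ℕ} {j : ℤ} (h : LiveP p z t j) :
    Live z t j := by
  obtain ⟨d, m, h, _⟩ := h
  exact ⟨d, m, h⟩

theorem EffP.eff {p : Tag N T} {z : Orb N T Y} {t : ℕ} {j : ℤ} (h : EffP p z t j) :
    Eff z t j := by
  obtain ⟨d, m, h, _⟩ := h
  exact ⟨d, m, h⟩

open Classical in
/-- What the machine has to supply. -/
structure Hyp (N T V Q : ℕ) [NeZero N] [NeZero T] (Y : Type)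
    (out : CState N T Y → CState N T Y)
    (D : Tag N T → Orb N T Y → Orb N T Y) : Prop where
  N16 : 16 ≤ N
  N4 : 4 ∣ N
  T4 : 2 ∣ T
  TN : 2 * N ≤ T
  VT : V ≤ T
  VQ : 6 * Q < V
  h0 : ∀ s d m, out s d = some m →
    (∃ d' m', s d' = some m') ∧ ∀ d' m', s d' = some m' → m.1 = m'.1 + ((d.off : ZMod N), 1)
  h1 : ∀ p z, Faulty out z → Faulty out (D p z)
  h2 : ∀ p z θ X, Live (D p z) θ X → ∀ a : ℕ, a < N →
    LiveP p z (p.2.val + T * θ) (p.1.val + N * X + a)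
  h3 : ∀ p z, Faulty out z → ∀ θ X, Eff (D p z) θ X → ∀ τ < T,
    ∃ j, p.1.val + N * (X - 1) ≤ j ∧ j < p.1.val + N * (X + 2) ∧
      EffP p z (p.2.val + T * θ + τ) j
  h3' : ∀ p z, Faulty out z → ∀ θ X, Eff (D p z) θ X → ∀ τ < T - N, ∀ a : ℕ, a < N →
    ∃ j, |j - (p.1.val + N * X + a)| ≤ 1 ∧ EffP p z (p.2.val + T * θ + τ) j
  h4 : ∀ p z, Faulty out z → ∀ θ X, ∀ a : ℕ, a < N →
    ((Finset.range T).filter fun τ =>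
      LiveP p z (p.2.val + T * (θ + 1) + τ) (p.1.val + N * X + a)).card ≤
    (T - V) * ind (Live (D p z) (θ + 1) X) +
      Q * ∑ d : Dir, (ind (Live (D p z) (θ + 1) (X + d.off)) + ind (Live (D p z) θ (X + d.off)))

/-- Hierarchical objects. -/
def Obj (N T : ℕ) : ℕ → Type
  | 0 => ℕ × ℤ
  | k + 1 => Tag N T × Obj N T k

def tt : (k : ℕ) → Obj N T k → ℕ
  | 0, o => o.1
  | k + 1, o => o.1.2.val + T * tt k o.2

def xx : (k : ℕ) → Obj N T k → ℤ
  | 0, o => o.2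
  | k + 1, o => o.1.1.val + N * xx k o.2

variable (D : Tag N T → Orb N T Y → Orb N T Y)

def LiveO : (k : ℕ) → Orb N T Y → Obj N T k → Prop
  | 0, z, o => Live z o.1 o.2
  | k + 1, z, o => LiveO k (D o.1 z) o.2

def EffO : (k : ℕ) → Orb N T Y → Obj N T k → Prop
  | 0, z, o => Eff z o.1 o.2
  | k + 1, z, o => EffO k (D o.1 z) o.2

def child (d : Dir) : (k : ℕ) → Obj N T k → Obj N T k
  | 0, o => (o.1 + 1, o.2 + d.off)
  | k + 1, o => (o.1, child d k o.2)

variable {D} {V Q : ℕ} [NeZero N] [NeZero T] {out : CState N T Y → CState N T Y}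

theorem conflict (H : Hyp N T V Q Y out D) {z : Orb N T Y} (hz : Faulty out z)
    {p p' : Tag N T} {t : ℕ} {j : ℤ} (h : EffP p z t j) (h' : LiveP p' z t j) : p = p' := by
  obtain ⟨d, m, hm, rfl⟩ := h
  obtain ⟨d', m', hm', rfl⟩ := h'
  have h1 := hz t _ d m hm
  have h2 := (H.h0 _ _ _ h1).2 d' m' (by simpa using hm')
  simp only [phase, h2, Prod.fst_add, Prod.snd_add]
  ext <;> push_cast <;> ring

theorem Eff.live (H : Hyp N T V Q Y out D) {z : Orb N T Y} (hz : Faulty out z)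
    {t : ℕ} {j : ℤ} (h : Eff z t j) : Live z t j := by
  obtain ⟨d, m, hm⟩ := h
  have h1 := hz t _ d m hm
  have h2 := (H.h0 _ _ _ h1).1
  simpa [Live] using h2

theorem EffO.liveO (H : Hyp N T V Q Y out D) : ∀ (k : ℕ) {z : Orb N T Y} (_ : Faulty out z)
    (o : Obj N T k), EffO D k z o → LiveO D k z o
  | 0, _, hz, _, h => Eff.live H hz h
  | k + 1, _, hz, o, h => EffO.liveO H k (H.h1 _ _ hz) o.2 h

theorem solid (H : Hyp N T V Q Y out D) : ∀ (k : ℕ) {z : Orb N T Y} (p : Tag N T)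
    (o : Obj N T k), LiveO D (k + 1) z (p, o) →
    ∀ x : ℤ, p.1.val + N * xx k o ≤ x → x < p.1.val + N * xx k o + (N : ℤ) ^ (k + 1) →
      LiveP p z (p.2.val + T * tt k o) x
  | 0, z, p, o, h, x, h1, h2 => by
    have := H.h2 p z o.1 o.2 h (x - (p.1.val + N * o.2)).toNat
      (by simp only [xx, zero_add, pow_one] at h1 h2; zify; rw [Int.toNat_of_nonneg (by linarith)]; linarith)
    rw [Int.toNat_of_nonneg (by simp only [xx] at h1; linarith)] at this
    simpa [tt] using this
  | k + 1, z, p, (p', o), h, x, h1, h2 => by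
    have hN : (0 : ℤ) < N := by have := NeZero.pos N; exact_mod_cast this
    set x' := (x - p.1.val) / (N : ℤ) with hx'
    have e1 : (N : ℤ) * x' ≤ x - p.1.val := Int.mul_ediv_self_le hN.ne'
    have e2 : x - p.1.val < N * x' + N := by
      have := Int.lt_mul_ediv_self_add hN (x := x - p.1.val)
      linarith
    have e3 : xx (k + 1) ((p', o) : Obj N T (k + 1)) ≤ x' := by
      rw [hx', Int.le_ediv_iff_mul_le hN]; linarith
    have e4 : x' < xx (k + 1) ((p', o) : Obj N T (k + 1)) + (N : ℤ) ^ (k + 1) := by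
      rw [hx', Int.ediv_lt_iff_lt_mul hN]
      have : (N : ℤ) ^ (k + 1 + 1) = N ^ (k + 1) * N := pow_succ _ _
      nlinarith
    have h3 := solid H k (z := D p z) p' o h x' e3 e4
    have := H.h2 p z _ _ h3.live (x - (p.1.val + N * x')).toNat
      (by zify; rw [Int.toNat_of_nonneg (by linarith)]; linarith)
    rw [Int.toNat_of_nonneg (by linarith)] at this
    simpa [tt] using this

def ssR (N : ℕ) : ℕ → ℤ
  | 0 => 1
  | k + 1 => N * (ssR N k + 2)

theorem ssR_le (hN : 16 ≤ N) : ∀ k, ssR N k ≤ 4 * (N : ℤ) ^ k - 3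
  | 0 => by simp [ssR]
  | k + 1 => by
    have := ssR_le hN k
    have h : (16 : ℤ) ≤ N := by exact_mod_cast hN
    simp only [ssR, pow_succ]
    nlinarith

theorem emitFine (H : Hyp N T V Q Y out D) : ∀ (k : ℕ) {z : Orb N T Y} (_ : Faulty out z)
    (p : Tag N T) (o : Obj N T k), EffO D (k + 1) z (p, o) →
    ∀ (t : ℕ), p.2.val + T * tt k o ≤ t → 2 * (t - (p.2.val + T * tt k o)) < T ^ (k + 1) →
    ∀ y : ℤ, p.1.val + N * xx k o ≤ y → y < p.1.val + N * xx k o + (N : ℤ) ^ (k + 1) →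
      ∃ j, |j - y| ≤ ssR N k ∧ EffP p z t j
  | 0, z, hz, p, o, h, t, ht, ht', x, h1, h2 => by
    have hTN := H.TN
    have := H.h3' p z hz o.1 o.2 h (t - (p.2.val + T * o.1))
      (by simp only [tt, zero_add, pow_one] at ht ht'; omega) (x - (p.1.val + N * o.2)).toNat
      (by simp only [xx, zero_add, pow_one] at h1 h2; zify; rw [Int.toNat_of_nonneg (by linarith)]; linarith)
    rw [Int.toNat_of_nonneg (by simp only [xx] at h1; linarith)] at this
    simp only [tt] at ht
    rw [Nat.add_sub_cancel' ht] at this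
    simpa [ssR] using this
  | k + 1, z, hz, p, (p', o), h, t, ht, ht', x, h1, h2 => by
    have hN : (0 : ℤ) < N := by have := NeZero.pos N; exact_mod_cast this
    have hT : 0 < T := NeZero.pos T
    set x' := (x - p.1.val) / (N : ℤ) with hx'
    have e1 : (N : ℤ) * x' ≤ x - p.1.val := Int.mul_ediv_self_le hN.ne'
    have e2 : x - p.1.val < N * x' + N := by
      have := Int.lt_mul_ediv_self_add hN (x := x - p.1.val)
      linarith
    have e3 : xx (k + 1) ((p', o) : Obj N T (k + 1)) ≤ x' := by
      rw [hx', Int.le_ediv_iff_mul_le hN]; linarith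
    have e4 : x' < xx (k + 1) ((p', o) : Obj N T (k + 1)) + (N : ℤ) ^ (k + 1) := by
      rw [hx', Int.ediv_lt_iff_lt_mul hN]
      have : (N : ℤ) ^ (k + 1 + 1) = N ^ (k + 1) * N := pow_succ _ _
      nlinarith
    set t' := (t - p.2.val) / T with ht'd
    set t0 := tt (k + 1) ((p', o) : Obj N T (k + 1)) with ht0
    have f1 : T * t' + (t - p.2.val) % T = t - p.2.val := Nat.div_add_mod _ _
    have f2 : (t - p.2.val) % T < T := Nat.mod_lt _ hT
    have f3 : t0 ≤ t' := by
      rw [ht'd, Nat.le_div_iff_mul_le hT, mul_comm]; omega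
    have f4 : 2 * (t' - t0) < T ^ (k + 1) := by
      have h5 : T * (2 * (t' - t0)) < T * T ^ (k + 1) := by
        have : T ^ (k + 1 + 1) = T * T ^ (k + 1) := by ring
        rw [← this]
        refine lt_of_le_of_lt ?_ ht'
        have : T * (2 * (t' - t0)) = 2 * (T * t' - T * t0) := by
          rw [← Nat.mul_sub]; ring
        omega
      exact Nat.lt_of_mul_lt_mul_left h5
    obtain ⟨j', hj', he⟩ := emitFine H k (z := D p z) (H.h1 _ _ hz) p' o h t' f3 f4 x' e3 e4
    obtain ⟨j, g1, g2, g3⟩ := H.h3 p z hz t' j' he.eff _ f2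
    refine ⟨j, ?_, ?_⟩
    · rw [abs_le] at hj' ⊢
      simp only [ssR]
      constructor <;> nlinarith
    · rwa [add_assoc, f1, Nat.add_sub_cancel' (by omega)] at g3

theorem sep_aux (H : Hyp N T V Q Y out D) (k : ℕ) {z : Orb N T Y} (hz : Faulty out z)
    (p p' : Tag N T) (o o' : Obj N T k)
    (h : EffO D (k + 1) z (p, o)) (h' : EffO D (k + 1) z (p', o'))
    (h1 : 2 * |(tt (k + 1) ((p, o) : Obj N T (k + 1)) : ℤ) - tt (k + 1) ((p', o') : Obj N T (k + 1))|
      < (T : ℤ) ^ (k + 1))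
    (h2 : 2 * |xx (k + 1) ((p, o) : Obj N T (k + 1)) - xx (k + 1) ((p', o') : Obj N T (k + 1))|
      < (N : ℤ) ^ (k + 1))
    (hle : tt (k + 1) ((p, o) : Obj N T (k + 1)) ≤ tt (k + 1) ((p', o') : Obj N T (k + 1))) :
    p = p' := by
  have hN : (16 : ℤ) ≤ N := by have := H.N16; exact_mod_cast this
  have hs := ssR_le H.N16 k
  obtain ⟨c, hc⟩ : (4 : ℤ) ∣ (N : ℤ) ^ (k + 1) :=
    dvd_pow (by have := H.N4; exact_mod_cast this) (by omega)
  have hpos : (0 : ℤ) < (N : ℤ) ^ k := by positivity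
  have hcs : 4 * (N : ℤ) ^ k ≤ c := by
    have : (N : ℤ) ^ (k + 1) = N ^ k * N := pow_succ _ _
    nlinarith
  have hl' := EffO.liveO H (k + 1) hz _ h'
  set x := xx (k + 1) ((p, o) : Obj N T (k + 1)) with hx
  set x' := xx (k + 1) ((p', o') : Obj N T (k + 1)) with hx'
  set t := tt (k + 1) ((p, o) : Obj N T (k + 1)) with ht
  set t' := tt (k + 1) ((p', o') : Obj N T (k + 1)) with ht'
  rw [hc] at h2
  have h2a : |x - x'| < 2 * c := by linarith
  rw [abs_lt] at h2a
  have ht2 : 2 * (t' - t) < T ^ (k + 1) := by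
    zify [hle]
    rw [abs_sub_comm, abs_of_nonneg (by have : (t : ℤ) ≤ t' := by exact_mod_cast hle
                                        linarith)] at h1
    exact h1
  obtain ⟨y, hy1, hy2, hy3, hy4⟩ : ∃ y, x ≤ y ∧ y < x + 4 * c ∧ x' + c ≤ y ∧ y ≤ x' + 3 * c := by
    rcases le_total x x' with hxx | hxx
    · exact ⟨x + 3 * c, by linarith, by linarith, by linarith, by linarith⟩
    · exact ⟨x + c, by linarith, by linarith, by linarith, by linarith⟩
  obtain ⟨j, hj, hE⟩ := emitFine H k hz p o h t' hle ht2 y hy1 (by rw [hc]; exact hy2)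
  rw [abs_le] at hj
  have hL := solid H k p' o' hl' j
    (by change x' ≤ j; linarith) (by change j < x' + _; rw [hc]; linarith)
  exact conflict H hz hE hL

theorem sep (H : Hyp N T V Q Y out D) : ∀ (k : ℕ) {z : Orb N T Y} (_ : Faulty out z)
    (o o' : Obj N T k), EffO D k z o → EffO D k z o' →
    2 * |(tt k o : ℤ) - tt k o'| < (T : ℤ) ^ k → 2 * |xx k o - xx k o'| < (N : ℤ) ^ k → o = o'
  | 0, z, hz, o, o', h, h', h1, h2 => by
    simp only [tt, xx, pow_zero] at h1 h2
    have h3 : |(o.1 : ℤ) - o'.1| = 0 := by have := abs_nonneg ((o.1 : ℤ) - o'.1); omega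
    have h4 : |o.2 - o'.2| = 0 := by have := abs_nonneg (o.2 - o'.2); omega
    rw [abs_eq_zero, sub_eq_zero] at h3 h4
    exact Prod.ext (by exact_mod_cast h3) h4
  | k + 1, z, hz, (p, o), (p', o'), h, h', h1, h2 => by
    have hN : (0 : ℤ) < N := by have := NeZero.pos N; exact_mod_cast this
    have hT : (0 : ℤ) < T := by have := NeZero.pos T; exact_mod_cast this
    have hp : p = p' := by
      rcases le_total (tt (k + 1) ((p, o) : Obj N T (k + 1)))
        (tt (k + 1) ((p', o') : Obj N T (k + 1))) with hle | hle
      · exact sep_aux H k hz p p' o o' h h' h1 h2 hle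
      · exact (sep_aux H k hz p' p o' o h' h (by rwa [abs_sub_comm]) (by rwa [abs_sub_comm])
          hle).symm
    subst hp
    have e1 : o = o' := by
      refine sep H k (z := D p z) (H.h1 _ _ hz) o o' h h' ?_ ?_
      · simp only [tt, Nat.cast_add, Nat.cast_mul, add_sub_add_left_eq_sub, ← mul_sub, abs_mul,
          abs_of_pos hT, pow_succ] at h1
        nlinarith
      · simp only [xx, add_sub_add_left_eq_sub, ← mul_sub, abs_mul,
          abs_of_pos hN, pow_succ] at h2
        nlinarith
    rw [e1]

open Classical in
/-- number of live times in a column -/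
noncomputable def cnt (z : Orb N T Y) (j : ℤ) (W : ℕ) : ℕ :=
  ((Finset.range W).filter fun t => Live z t j).card

theorem cnt_eq_sum (z : Orb N T Y) (j : ℤ) (W : ℕ) :
    cnt z j W = ∑ t ∈ Finset.range W, ind (Live z t j) := by
  classical
  simp only [cnt, ind, Finset.card_filter]

theorem cntP_le (H : Hyp N T V Q Y out D) {z : Orb N T Y} (hz : Faulty out z)
    (p : Tag N T) (j : ℤ) (W : ℕ) :
    ∑ t ∈ Finset.range W, ind (LiveP p z t j) ≤ 2 * T +
      ((T - V) * cnt (D p z) ((j - p.1.val) / N) (W / T + 1) +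
      2 * Q * ∑ d : Dir, cnt (D p z) ((j - p.1.val) / N + d.off) (W / T + 1)) := by
  classical
  have hN : (0 : ℤ) < N := by have := NeZero.pos N; exact_mod_cast this
  have hT : 0 < T := NeZero.pos T
  set X := (j - p.1.val) / (N : ℤ) with hX
  have e1 : (N : ℤ) * X ≤ j - p.1.val := Int.mul_ediv_self_le hN.ne'
  have e2 : j - p.1.val < N * X + N := by
    have := Int.lt_mul_ediv_self_add hN (x := j - p.1.val)
    linarith
  obtain ⟨a, ha⟩ : ∃ a : ℕ, j = p.1.val + N * X + a :=
    ⟨(j - (p.1.val + N * X)).toNat, by rw [Int.toNat_of_nonneg (by linarith)]; ring⟩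
  have haN : a < N := by zify; linarith
  have hpT : p.2.val < T := ZMod.val_lt _
  set f : ℕ → ℕ := fun t => ind (LiveP p z t j) with hf
  have hf1 : ∀ t, f t ≤ 1 := fun t => by simp only [hf, ind]; split_ifs <;> omega
  -- block decomposition
  have step : ∀ n : ℕ, ∑ t ∈ Finset.range (p.2.val + T + T * n), f t ≤
      (p.2.val + T) + ∑ θ ∈ Finset.range n, ∑ τ ∈ Finset.range T, f (p.2.val + T * (θ + 1) + τ) := by
    intro n
    induction n with
    | zero =>
      simp only [mul_zero, add_zero, Finset.range_zero, Finset.sum_empty]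
      calc _ ≤ ∑ t ∈ Finset.range (p.2.val + T), 1 := Finset.sum_le_sum fun i _ => hf1 i
        _ = _ := by simp
    | succ n ih =>
      have : p.2.val + T + T * (n + 1) = (p.2.val + T + T * n) + T := by ring
      rw [this, Finset.sum_range_add, Finset.sum_range_succ]
      have e : ∀ τ, p.2.val + T + T * n + τ = p.2.val + T * (n + 1) + τ := fun τ => by ring
      simp only [e]
      omega
  have hblock : ∀ θ, ∑ τ ∈ Finset.range T, f (p.2.val + T * (θ + 1) + τ) ≤
      (T - V) * ind (Live (D p z) (θ + 1) X) + Q * ∑ d : Dir,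
        (ind (Live (D p z) (θ + 1) (X + d.off)) + ind (Live (D p z) θ (X + d.off))) := by
    intro θ
    have := H.h4 p z hz θ X a haN
    rw [← ha, Finset.card_filter] at this
    simpa only [hf, ind] using this
  have hW : W ≤ p.2.val + T + T * (W / T) := by
    have := Nat.lt_mul_div_succ W hT
    have : T * (W / T + 1) = T * (W / T) + T := by ring
    omega
  have hc1 : ∀ x : ℤ, ∑ θ ∈ Finset.range (W / T), ind (Live (D p z) (θ + 1) x) ≤
      cnt (D p z) x (W / T + 1) := by
    intro x
    rw [cnt_eq_sum, Finset.sum_range_succ']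
    omega
  have hc0 : ∀ x : ℤ, ∑ θ ∈ Finset.range (W / T), ind (Live (D p z) θ x) ≤
      cnt (D p z) x (W / T + 1) := by
    intro x
    rw [cnt_eq_sum, Finset.sum_range_succ]
    omega
  calc ∑ t ∈ Finset.range W, f t
      ≤ ∑ t ∈ Finset.range (p.2.val + T + T * (W / T)), f t :=
        Finset.sum_le_sum_of_subset (Finset.range_mono hW)
    _ ≤ _ := step _
    _ ≤ 2 * T + ∑ θ ∈ Finset.range (W / T), ((T - V) * ind (Live (D p z) (θ + 1) X) +
        Q * ∑ d : Dir, (ind (Live (D p z) (θ + 1) (X + d.off)) +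
          ind (Live (D p z) θ (X + d.off)))) :=
        add_le_add (by omega) (Finset.sum_le_sum fun θ _ => hblock θ)
    _ = 2 * T + ((T - V) * ∑ θ ∈ Finset.range (W / T), ind (Live (D p z) (θ + 1) X) +
        Q * ∑ d : Dir, (∑ θ ∈ Finset.range (W / T), ind (Live (D p z) (θ + 1) (X + d.off)) +
          ∑ θ ∈ Finset.range (W / T), ind (Live (D p z) θ (X + d.off)))) := by
        rw [Finset.sum_add_distrib, ← Finset.mul_sum, ← Finset.mul_sum, Finset.sum_comm]
        simp only [Finset.sum_add_distrib]
    _ ≤ 2 * T + ((T - V) * cnt (D p z) X (W / T + 1) +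
        Q * ∑ d : Dir, (cnt (D p z) (X + d.off) (W / T + 1) +
          cnt (D p z) (X + d.off) (W / T + 1))) := by
        gcongr
        · exact hc1 _
        · exact hc1 _
        · exact hc0 _
    _ = _ := by
        congr 2
        rw [Finset.mul_sum, Finset.mul_sum]
        refine Finset.sum_congr rfl fun d _ => by ring

theorem cnt_le_sum (z : Orb N T Y) (j : ℤ) (W : ℕ) :
    cnt z j W ≤ ∑ p : Tag N T, ∑ t ∈ Finset.range W, ind (LiveP p z t j) := by
  classical
  rw [cnt_eq_sum, Finset.sum_comm]
  refine Finset.sum_le_sum fun t _ => ?_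
  by_cases h : Live z t j
  · obtain ⟨d, m, hm⟩ := h
    have : ind (LiveP (phase t j m.1) z t j) = 1 := by
      simp only [ind]; rw [if_pos ⟨d, m, hm, rfl⟩]
    calc ind (Live z t j) ≤ 1 := by simp only [ind]; split_ifs <;> omega
      _ = _ := this.symm
      _ ≤ _ := Finset.single_le_sum (f := fun p => ind (LiveP p z t j)) (fun _ _ => Nat.zero_le _)
        (Finset.mem_univ _)
  · simp [ind, h]

def rrR (N : ℕ) : ℕ → ℤ
  | 0 => 0
  | k + 1 => N * (rrR N k + 2)

theorem rrR_le (hN : 16 ≤ N) : ∀ k, rrR N k ≤ 3 * (N : ℤ) ^ k - 3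
  | 0 => by simp [rrR]
  | k + 1 => by
    have := rrR_le hN k
    have h : (16 : ℤ) ≤ N := by exact_mod_cast hN
    simp only [rrR, pow_succ]
    nlinarith

def Obj.mk0 (t : ℕ) (j : ℤ) : Obj N T 0 := (t, j)

def Obj.mkS {k : ℕ} (p : Tag N T) (o : Obj N T k) : Obj N T (k + 1) := (p, o)

theorem Obj.mk0_inj {t t' : ℕ} {j j' : ℤ} (h : (Obj.mk0 t j : Obj N T 0) = Obj.mk0 t' j') :
    t = t' ∧ j = j' := Prod.ext_iff.1 h

theorem Obj.mkS_inj {k : ℕ} {p p' : Tag N T} {o o' : Obj N T k}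
    (h : Obj.mkS p o = Obj.mkS p' o') : p = p' ∧ o = o' := Prod.ext_iff.1 h

@[simp] theorem tt_mk0 (t : ℕ) (j : ℤ) : tt 0 (Obj.mk0 t j : Obj N T 0) = t := rfl
@[simp] theorem xx_mk0 (t : ℕ) (j : ℤ) : xx 0 (Obj.mk0 t j : Obj N T 0) = j := rfl
@[simp] theorem tt_mkS {k : ℕ} (p : Tag N T) (o : Obj N T k) :
    tt (k + 1) (Obj.mkS p o) = p.2.val + T * tt k o := rfl
@[simp] theorem xx_mkS {k : ℕ} (p : Tag N T) (o : Obj N T k) :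
    xx (k + 1) (Obj.mkS p o) = p.1.val + N * xx k o := rfl

theorem claim1 (H : Hyp N T V Q Y out D) : ∀ k : ℕ, ∃ C B : ℕ, ∀ z : Orb N T Y, Faulty out z →
    ∀ j W, ∃ F : Finset (Obj N T k), (∀ o ∈ F, LiveO D k z o ∧ T ^ k ≤ tt k o ∧ tt k o ≤ W + B ∧
      |xx k o - j| ≤ rrR N k) ∧ cnt z j W ≤ (T - V + 6 * Q) ^ k * F.card + C := by
  classical
  intro k
  induction k with
  | zero =>
    refine ⟨1, 0, fun z _ j W => ?_⟩
    refine ⟨(((Finset.range W).filter fun t => Live z t j).erase 0).map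
      ⟨fun t => Obj.mk0 t j, fun a b h => (Obj.mk0_inj h).1⟩, ?_, ?_⟩
    · intro o ho
      simp only [Finset.mem_map, Finset.mem_erase, Finset.mem_filter, Finset.mem_range,
        Function.Embedding.coeFn_mk] at ho
      obtain ⟨t, ⟨h1, h2, h3⟩, rfl⟩ := ho
      change LiveO D 0 z (Obj.mk0 t j) ∧ _ ≤ tt 0 (Obj.mk0 t j : Obj N T 0) ∧
        tt 0 (Obj.mk0 t j : Obj N T 0) ≤ _ ∧ |xx 0 (Obj.mk0 t j : Obj N T 0) - j| ≤ _
      simp only [tt_mk0, xx_mk0, rrR, pow_zero, sub_self, abs_zero, le_refl, and_true]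
      exact ⟨h3, by omega, by omega⟩
    · rw [Finset.card_map, pow_zero, one_mul, cnt]
      have := Finset.pred_card_le_card_erase (s := (Finset.range W).filter fun t => Live z t j)
        (a := 0)
      omega
  | succ k ih =>
    obtain ⟨C, B, ih⟩ := ih
    refine ⟨∑ p : Tag N T, (2 * T + (T - V + 6 * Q) * C), (T + T * B + T), fun z hz j W => ?_⟩
    have hN : (0 : ℤ) < N := by have := NeZero.pos N; exact_mod_cast this
    have hT : 0 < T := NeZero.pos T
    have ih' := fun (p : Tag N T) (d : Dir) => ih (D p z) (H.h1 p z hz) ((j - p.1.val) / N + d.off)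
      (W / T + 1)
    choose F hF hF' using ih'
    let G : Tag N T → Finset (Obj N T k) := fun p => Finset.univ.biUnion (F p)
    have hGc : ∀ p d, (F p d).card ≤ (G p).card := fun p d =>
      Finset.card_le_card (Finset.subset_biUnion_of_mem (F p) (Finset.mem_univ d))
    refine ⟨(Finset.univ.sigma G).map ⟨fun o => Obj.mkS o.1 o.2, ?_⟩, ?_, ?_⟩
    · rintro ⟨a, b⟩ ⟨c, d⟩ h
      obtain ⟨h1, h2⟩ := Obj.mkS_inj h
      simp only at h1 h2
      rw [h1, h2]
    · intro o ho
      simp only [Finset.mem_map, Finset.mem_sigma, Finset.mem_univ, true_and,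
        Function.Embedding.coeFn_mk, G, Finset.mem_biUnion] at ho
      obtain ⟨⟨p, q⟩, ⟨d, hq⟩, rfl⟩ := ho
      obtain ⟨h1, h2, h3, h4⟩ := hF p d q hq
      have hpT : p.2.val < T := ZMod.val_lt _
      change LiveO D (k + 1) z (Obj.mkS p q) ∧ _ ≤ tt (k + 1) (Obj.mkS p q) ∧
        tt (k + 1) (Obj.mkS p q) ≤ _ ∧ |xx (k + 1) (Obj.mkS p q) - j| ≤ _
      refine ⟨h1, ?_, ?_, ?_⟩
      · simp only [tt_mkS, pow_succ']
        have := Nat.mul_le_mul_left T h2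
        omega
      · simp only [tt_mkS]
        have h5 := Nat.mul_le_mul_left T h3
        have h6 := Nat.mul_div_le W T
        have h7 : T * (W / T + 1 + B) = T * (W / T) + T + T * B := by ring
        omega
      · simp only [xx_mkS, rrR]
        set X := (j - p.1.val) / (N : ℤ) with hX
        have e1 : (N : ℤ) * X ≤ j - p.1.val := Int.mul_ediv_self_le hN.ne'
        have e2 : j - p.1.val < N * X + N := by
          have := Int.lt_mul_ediv_self_add hN (x := j - p.1.val)
          linarith
        have hd := d.abs_off_le
        rw [abs_le] at h4 hd ⊢
        constructor <;> nlinarith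
    · rw [Finset.card_map, Finset.card_sigma, Finset.mul_sum, ← Finset.sum_add_distrib]
      refine (cnt_le_sum z j W).trans (Finset.sum_le_sum fun p _ => ?_)
      refine (cntP_le H hz p j W).trans ?_
      have hb : ∀ d : Dir, cnt (D p z) ((j - p.1.val) / N + d.off) (W / T + 1) ≤
          (T - V + 6 * Q) ^ k * (G p).card + C := fun d => (hF' p d).trans
            (by have := hGc p d; gcongr)
      have h0 := hb .C
      simp only [Dir.off, add_zero] at h0
      have hs : ∑ d : Dir, cnt (D p z) ((j - p.1.val) / N + d.off) (W / T + 1) ≤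
          3 * ((T - V + 6 * Q) ^ k * (G p).card + C) := by
        calc _ ≤ ∑ d : Dir, ((T - V + 6 * Q) ^ k * (G p).card + C) :=
              Finset.sum_le_sum fun d _ => hb d
          _ = _ := by simp [Dir.card_eq]
      calc _ ≤ 2 * T + ((T - V) * ((T - V + 6 * Q) ^ k * (G p).card + C) + 2 * Q *
            (3 * ((T - V + 6 * Q) ^ k * (G p).card + C))) := by gcongr
        _ = _ := by ring

theorem exists_parent : ∀ (k : ℕ) (z : Orb N T Y) (o : Obj N T k), LiveO D k z o → T ^ k ≤ tt k o →
    ∃ (e : Obj N T k) (d : Dir), child d k e = o ∧ EffO D k z e ∧ tt k e ≤ tt k o ∧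
      |xx k e - xx k o| ≤ (N : ℤ) ^ k
  | 0, z, (t, j), h, h1 => by
    simp only [tt, pow_zero] at h1
    obtain ⟨t, rfl⟩ : ∃ s, t = s + 1 := ⟨t - 1, by omega⟩
    obtain ⟨d, m, hm⟩ := h
    refine ⟨((t, j - d.off) : ℕ × ℤ), d, ?_, ⟨d, m, ?_⟩, ?_, ?_⟩
    · simp only [child, sub_add_cancel]; rfl
    · simpa using hm
    · simp [tt]
    · simpa [xx] using d.abs_off_le
  | k + 1, z, (p, o), h, h1 => by
    have hpT : p.2.val < T := ZMod.val_lt _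
    have hT : 0 < T := NeZero.pos T
    have h2 : T ^ k ≤ tt k o := by
      simp only [tt, pow_succ'] at h1
      by_contra hc
      have : tt k o + 1 ≤ T ^ k := by omega
      have := Nat.mul_le_mul_left T this
      have e : T * (tt k o + 1) = T * tt k o + T := by ring
      omega
    obtain ⟨e, d, he1, he2, he3, he4⟩ := exists_parent k (D p z) o h h2
    refine ⟨((p, e) : Tag N T × Obj N T k), d, ?_, he2, ?_, ?_⟩
    · simp only [child, he1]; rfl
    · simp only [tt]; gcongr
    · have hN : (0 : ℤ) < N := by have := NeZero.pos N; exact_mod_cast this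
      simp only [xx, add_sub_add_left_eq_sub, ← mul_sub, abs_mul, abs_of_pos hN, pow_succ']
      gcongr

theorem claim2 (H : Hyp N T V Q Y out D) (k : ℕ) : ∃ C B : ℕ, ∀ z : Orb N T Y, Faulty out z →
    ∀ j W, ∃ F : Finset (Obj N T k), (∀ o ∈ F, EffO D k z o ∧ tt k o ≤ W + B ∧
      |xx k o - j| ≤ 4 * (N : ℤ) ^ k) ∧ cnt z j W ≤ (T - V + 6 * Q) ^ k * (3 * F.card) + C := by
  classical
  obtain ⟨C, B, h⟩ := claim1 H k
  refine ⟨C, B, fun z hz j W => ?_⟩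
  obtain ⟨F, hF, hc⟩ := h z hz j W
  have hpar := fun o : F => exists_parent k z o.1 (hF o.1 o.2).1 (hF o.1 o.2).2.1
  choose e d h1 h2 h3 h4 using hpar
  refine ⟨Finset.univ.image e, ?_, hc.trans ?_⟩
  · intro o ho
    simp only [Finset.mem_image, Finset.mem_univ, true_and] at ho
    obtain ⟨q, rfl⟩ := ho
    refine ⟨h2 q, (h3 q).trans (hF q.1 q.2).2.2.1, ?_⟩
    have g1 := h4 q
    have g2 := (hF q.1 q.2).2.2.2
    have g3 := rrR_le H.N16 k
    rw [abs_le] at *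
    constructor <;> linarith
  · have : F ⊆ ((Finset.univ : Finset Dir) ×ˢ (Finset.univ.image e)).image
        (fun q => child q.1 k q.2) := by
      intro o ho
      refine Finset.mem_image.2 ⟨(d ⟨o, ho⟩, e ⟨o, ho⟩), ?_, h1 ⟨o, ho⟩⟩
      simp
    have := (Finset.card_le_card this).trans Finset.card_image_le
    rw [Finset.card_product, Finset.card_univ, Dir.card_eq] at this
    gcongr

theorem abs_lt_of_ediv_eq {a b h : ℤ} (hh : 0 < h) (e : a / h = b / h) : |a - b| < h := by
  have e1 := Int.mul_ediv_self_le (x := a) hh.ne'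
  have e2 := Int.lt_mul_ediv_self_add hh (x := a)
  have e3 := Int.mul_ediv_self_le (x := b) hh.ne'
  have e4 := Int.lt_mul_ediv_self_add hh (x := b)
  rw [e] at e1 e2
  rw [abs_lt]
  constructor <;> linarith

theorem claim4 (H : Hyp N T V Q Y out D) (k : ℕ) (hk : k ≠ 0) (z : Orb N T Y)
    (hz : Faulty out z) (j : ℤ) (W : ℕ) (F : Finset (Obj N T k))
    (hF : ∀ o ∈ F, EffO D k z o ∧ tt k o ≤ W ∧ |xx k o - j| ≤ 4 * (N : ℤ) ^ k) :
      F.card ≤ (W / (T ^ k / 2) + 1) * 17 := by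
  classical
  obtain ⟨h, hh⟩ : 2 ∣ T ^ k := dvd_pow H.T4 hk
  obtain ⟨n, hn⟩ : (2 : ℤ) ∣ (N : ℤ) ^ k :=
    dvd_pow (dvd_trans (by norm_num) (by have := H.N4; exact_mod_cast this : (4 : ℤ) ∣ N)) hk
  have hT : 0 < T ^ k := pow_pos (NeZero.pos T) k
  have hN : (0 : ℤ) < (N : ℤ) ^ k :=
    pow_pos (by have := NeZero.pos N; exact_mod_cast this) k
  have hh0 : 0 < h := by omega
  have hn0 : 0 < n := by omega
  have e : T ^ k / 2 = h := by omega
  rw [e]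
  have key : F.card ≤ ((Finset.range (W / h + 1)) ×ˢ (Finset.Icc (0 : ℤ) 16)).card := by
    refine Finset.card_le_card_of_injOn
      (fun o => (tt k o / h, (xx k o - (j - 4 * (N : ℤ) ^ k)) / n)) ?_ ?_
    · intro o ho
      obtain ⟨h1, h2, h3⟩ := hF o ho
      rw [abs_le] at h3
      simp only [Finset.coe_product, Set.mem_prod, Finset.mem_coe, Finset.mem_range,
        Finset.mem_Icc]
      refine ⟨Nat.lt_succ_of_le (Nat.div_le_div_right h2), ?_, ?_⟩
      · exact Int.ediv_nonneg (by linarith) hn0.le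
      · apply Int.ediv_le_of_le_mul hn0; linarith
    · intro o ho o' ho' heq
      simp only [Prod.mk.injEq] at heq
      obtain ⟨h1, h2⟩ := heq
      refine sep H k hz o o' (hF o ho).1 (hF o' ho').1 ?_ ?_
      · have : ((tt k o : ℤ)) / (h : ℤ) = (tt k o' : ℤ) / h := by exact_mod_cast h1
        have := abs_lt_of_ediv_eq (by exact_mod_cast hh0) this
        have e3 : (T : ℤ) ^ k = 2 * h := by exact_mod_cast hh
        linarith
      · have := abs_lt_of_ediv_eq hn0 h2
        simp only [sub_sub_sub_cancel_right] at this
        linarith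
  rw [Finset.card_product, Finset.card_range, Int.card_Icc] at key
  simpa using key

/-- The density of live times in a column tends to zero, uniformly. -/
theorem density_zero (H : Hyp N T V Q Y out D) (ε : ℝ) (hε : 0 < ε) : ∃ C : ℝ, ∀ z : Orb N T Y,
    Faulty out z → ∀ (j : ℤ) (W : ℕ), (cnt z j W : ℝ) ≤ ε * W + C := by
  have hT : (0 : ℝ) < T := by have := NeZero.pos T; exact_mod_cast this
  set l : ℕ := T - V + 6 * Q with hl
  have hlT : (l : ℝ) < T := by
    have h1 := H.VT
    have h2 := H.VQ
    have : l < T := by omega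
    exact_mod_cast this
  obtain ⟨k, hk⟩ : ∃ k : ℕ, ((l : ℝ) / T) ^ k < ε / 102 :=
    exists_pow_lt_of_lt_one (by positivity) ((div_lt_one hT).2 hlT)
  obtain ⟨k, hk0, hk⟩ : ∃ k : ℕ, k ≠ 0 ∧ ((l : ℝ) / T) ^ k < ε / 102 := by
    refine ⟨k + 1, by omega, lt_of_le_of_lt ?_ hk⟩
    rw [pow_succ]
    exact mul_le_of_le_one_right (by positivity) ((div_lt_one hT).2 hlT).le
  obtain ⟨C, B, h⟩ := claim2 H k
  refine ⟨102 * (l / T) ^ k * B + 51 * l ^ k + C, fun z hz j W => ?_⟩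
  obtain ⟨F, hF, hc⟩ := h z hz j W
  have h4 := claim4 H k hk0 z hz j (W + B) F hF
  obtain ⟨h, hh⟩ : 2 ∣ T ^ k := dvd_pow H.T4 hk0
  have e : T ^ k / 2 = h := by omega
  rw [e] at h4
  have h5 : (F.card : ℝ) ≤ ((W + B) / h + 1) * 17 := by
    have h6 : ((((W + B) / h : ℕ)) : ℝ) ≤ ((W + B : ℕ) : ℝ) / h := Nat.cast_div_le
    have h7 : (F.card : ℝ) ≤ (((W + B) / h : ℕ) + 1) * 17 := by exact_mod_cast h4
    push_cast at h6
    linarith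
  have hh' : (h : ℝ) = T ^ k / 2 := by
    have : (T : ℝ) ^ k = 2 * h := by exact_mod_cast hh
    linarith
  rw [hh'] at h5
  have hc' : (cnt z j W : ℝ) ≤ l ^ k * (3 * F.card) + C := by exact_mod_cast hc
  have hTk : (0 : ℝ) < (T : ℝ) ^ k := by positivity
  calc (cnt z j W : ℝ) ≤ l ^ k * (3 * F.card) + C := hc'
    _ ≤ l ^ k * (3 * (((W + B) / (T ^ k / 2) + 1) * 17)) + C := by gcongr
    _ = 102 * (l / T) ^ k * W + (102 * (l / T) ^ k * B + 51 * l ^ k + C) := by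
        rw [div_pow]; field_simp; ring
    _ ≤ 102 * (ε / 102) * W + (102 * (l / T) ^ k * B + 51 * l ^ k + C) := by gcongr
    _ = _ := by ring

end Abstract


/-! ## Part 2 : the machine -/

set_option linter.unusedSectionVars false
set_option linter.unusedSimpArgs false
set_option linter.unusedVariables false

/-- input tokens -/
inductive Tok | A | E | W | I (d : Dir)
deriving DecidableEq, Fintype

/-- output tag tokens -/
inductive OTok | A (d : Dir) | E | W
deriving DecidableEq, Fintype

@[ext] structure Content where
  pres : Dir → Bool
  tok : Tok → Bool
  ot : OTok → Bool
  oP : Dir → Bool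
  oY : Dir → Bool
deriving DecidableEq

noncomputable instance : Fintype Content := by
  classical
  exact Fintype.ofInjective (fun c : Content => (((c.pres, c.tok), (c.ot, c.oP)), c.oY))
    (by rintro ⟨⟩ ⟨⟩ h; simp only [Prod.mk.injEq] at h; simp [h])

@[ext] structure Reg where
  phi : Bool
  psi : Bool
  cp : Dir → Bool
  seen : Tok → Bool
deriving DecidableEq, Fintype

@[ext] structure Letter where
  A : Bool
  E : Bool
  W : Bool
  Y : Bool
deriving DecidableEq, Fintype

abbrev Body := Content × Option Reg

/-- payloads -/
inductive Yt
  | body (q : Body)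
  | pair (g o : Body)
  | head (r : Reg)
  | letter (l : Letter)
deriving DecidableEq

noncomputable instance : Fintype Yt := by
  classical
  exact Fintype.ofInjective (fun y : Yt => match y with
    | .body q => (.inl q : Body ⊕ ((Body × Body) ⊕ (Reg ⊕ Letter)))
    | .pair g o => .inr (.inl (g, o))
    | .head r => .inr (.inr (.inl r))
    | .letter l => .inr (.inr (.inr l)))
    (by intro a b h; cases a <;> cases b <;> simp_all)

theorem exists_code : ∃ (c : ℕ) (code : Yt → ℕ), Function.Injective code ∧
    (∀ y, code y < c) ∧ (∀ k < c, ∃ y, code y = k) ∧ 0 < c := by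
  refine ⟨Fintype.card Yt, fun y => (Fintype.equivFin Yt y).val, ?_, ?_, ?_, ?_⟩
  · intro a b h
    exact (Fintype.equivFin Yt).injective (Fin.ext h)
  · intro y; exact (Fintype.equivFin Yt y).2
  · intro k hk
    exact ⟨(Fintype.equivFin Yt).symm ⟨k, hk⟩, by simp⟩
  · exact Fintype.card_pos_iff.2 ⟨Yt.letter ⟨true, true, true, true⟩⟩

noncomputable def cY : ℕ := exists_code.choose
noncomputable def code : Yt → ℕ := exists_code.choose_spec.choose
theorem code_inj : Function.Injective code := exists_code.choose_spec.choose_spec.1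
theorem code_lt (y : Yt) : code y < cY := exists_code.choose_spec.choose_spec.2.1 y
theorem code_surj : ∀ k < cY, ∃ y, code y = k := exists_code.choose_spec.choose_spec.2.2.1
theorem cY_pos : 0 < cY := exists_code.choose_spec.choose_spec.2.2.2

/-- local position information -/
abbrev Pos := Fin (cY + 1) × Bool × Fin 4

def Pos.isFst (q : Pos) : Bool := q.1.val = 0
def Pos.isLst (q : Pos) : Bool := q.2.1
def Pos.odd (q : Pos) : Bool := q.2.2.val % 2 = 1

noncomputable def posOf (N a : ℕ) : Pos :=
  (⟨min a cY, by omega⟩, decide (a + 1 = N), ⟨a % 4, Nat.mod_lt _ (by norm_num)⟩)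

/-- the part of the local information that can be tested by one instruction -/
structure Q0 where
  a : Pos
  e : Pos
  w : Pos
  col : Bool
  y : Dir → Option Yt

noncomputable instance : Fintype Q0 := by
  classical
  exact Fintype.ofInjective
    (fun q : Q0 => ((q.a, q.e, q.w, q.col, q.y) : Pos × Pos × Pos × Bool × (Dir → Option Yt)))
    (by rintro ⟨⟩ ⟨⟩ h; simp only [Prod.mk.injEq] at h; simp [h])

inductive Base
  | start | dance | idle | launch | chk | nop | reset
  | test (q : Q0)
  | testT (b f : Bool)
  | emit (f : Dir → Option Yt)
  | shift (k : OTok)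
  | drop (k : OTok)

def Base.toSum : Base → (Fin 7) ⊕ (Q0 ⊕ ((Bool × Bool) ⊕ ((Dir → Option Yt) ⊕ (OTok ⊕ OTok))))
  | .start => .inl 0 | .dance => .inl 1 | .idle => .inl 2 | .launch => .inl 3
  | .chk => .inl 4 | .nop => .inl 5 | .reset => .inl 6
  | .test q => .inr (.inl q)
  | .testT b f => .inr (.inr (.inl (b, f)))
  | .emit f => .inr (.inr (.inr (.inl f)))
  | .shift k => .inr (.inr (.inr (.inr (.inl k))))
  | .drop k => .inr (.inr (.inr (.inr (.inr k))))

noncomputable instance : Fintype Base := by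
  classical
  exact Fintype.ofInjective Base.toSum (by
    intro a b h
    cases a <;> cases b <;> simp_all [Base.toSum])

theorem exists_bits : ∃ (n : ℕ) (f : (Base ⊕ (Bool × Fin n × Bool)) → (Fin n → Bool)),
    Function.Injective f := by
  classical
  obtain ⟨n, hn⟩ : ∃ n : ℕ, Fintype.card Base + 4 * n ≤ 2 ^ n := by
    refine ⟨Fintype.card Base + 8, ?_⟩
    generalize Fintype.card Base = b
    induction b with
    | zero => norm_num
    | succ b ih => rw [show b + 1 + 8 = (b + 8) + 1 by ring, pow_succ]; omega
  have : Fintype.card (Base ⊕ (Bool × Fin n × Bool)) ≤ Fintype.card (Fin n → Bool) := by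
    simp only [Fintype.card_sum, Fintype.card_prod, Fintype.card_bool, Fintype.card_fin,
      Fintype.card_fun]
    omega
  obtain ⟨f⟩ := Function.Embedding.nonempty_of_card_le this
  exact ⟨n, f, f.injective⟩

noncomputable def nB : ℕ := exists_bits.choose
abbrev Instr := Base ⊕ (Bool × Fin nB × Bool)
noncomputable def bitc : Instr → Fin nB → Bool := exists_bits.choose_spec.choose
theorem bitc_inj : Function.Injective bitc := exists_bits.choose_spec.choose_spec

/-- full local information -/
structure Kap where
  q : Q0
  ia : Instr
  ie : Instr

noncomputable instance : Fintype Kap := by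
  classical
  exact Fintype.ofInjective (fun k : Kap => ((k.q, k.ia, k.ie) : Q0 × Instr × Instr))
    (by rintro ⟨⟩ ⟨⟩ h; simp only [Prod.mk.injEq] at h; simp [h])

def bodyOf : Option Yt → Option Body
  | some (.body q) => some q
  | _ => none
def pairOf : Option Yt → Option (Body × Body)
  | some (.pair g o) => some (g, o)
  | _ => none
def headOf : Option Yt → Option Reg
  | some (.head r) => some r
  | _ => none
def letterOf : Option Yt → Option Letter
  | some (.letter l) => some l
  | _ => none

section
open Classical

noncomputable def locTest (q : Q0) (pa : Pos) (c : Content) : Bool :=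
  decide ((c.tok .A = true → pa = q.a ∧ c.tok .W = q.col) ∧ (c.tok .E = true → pa = q.e) ∧
    (c.tok .W = true → pa = q.w) ∧
    ∀ d, (q.y d = none → c.pres d = false) ∧
      ∀ y, q.y d = some y → pa.1.val = code y → c.tok (.I d) = true)

noncomputable def locTestT (b f : Bool) (pa : Pos) (c : Content) : Bool :=
  decide ((c.tok .E = true → pa.odd = b) ∧
    (c.tok .W = true → (if b = true then pa.isFst else pa.isLst) = f))

noncomputable def locBit (k : Bool) (j : Fin nB) (v : Bool) (ia : Instr) (c : Content) : Bool :=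
  decide (c.tok (if k = true then .E else .A) = true → bitc ia j = v)

noncomputable def chkOk (pa : Pos) (fin : Bool) (r : Reg) (c : Content) : Prop :=
  c.pres = r.cp ∧ (∀ k, c.tok k = true → r.seen k = false) ∧
    (∀ d, c.tok (.I d) = true → pa.1.val < cY) ∧
    (fin = true → ∀ k, r.seen k = true ∨ c.tok k = true)

noncomputable def stepT (pa : Pos) (ia : Instr) (fin : Bool) (i : Instr) (r : Reg) (c : Content) :
    Reg × Content :=
  match i with
  | .inl .reset => ({ r with phi := true, psi := false }, c)
  | .inl (.test q) => ({ r with phi := r.phi && locTest q pa c }, c)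
  | .inl (.testT b f) => ({ r with phi := r.phi && locTestT b f pa c }, c)
  | .inl (.emit f) => (r, if r.phi = true then
      { c with
        oP := fun d => c.oP d || (f d).isSome
        oY := fun d => match f d with
          | some y => decide (pa.1.val = code y)
          | none => c.oY d } else c)
  | .inl (.shift k) => if r.phi = true then
      ({ r with psi := c.ot k }, { c with ot := Function.update c.ot k r.psi }) else (r, c)
  | .inl (.drop k) => (r, if r.phi = true ∧ fin = true then
      { c with ot := Function.update c.ot k (c.ot k || r.psi) } else c)
  | .inr (k, j, v) => ({ r with phi := r.phi && locBit k j v ia c }, c)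
  | _ => (r, c)

noncomputable def step (pa : Pos) (ia : Instr) (fin : Bool) (i : Instr) (r : Reg) (c : Content) :
    Option (Reg × Content) :=
  if i = .inl .chk then
    (if chkOk pa fin r c then some ({ r with seen := fun k => r.seen k || c.tok k }, c) else none)
  else some (stepT pa ia fin i r c)

def stay (y : Dir → Option Yt) (d : Dir) : Option Yt :=
  if d = .C then (bodyOf (y .C)).map Yt.body else none

def StartOk (y : Dir → Option Yt) (l : Letter) : Prop :=
  (∃ d y', y d = some y') ∧
    ∀ d y', y d = some y' → ∃ b, y' = .letter { l with Y := b }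

noncomputable def mkC (y : Dir → Option Yt) (l : Letter) : Content where
  pres d := (y d).isSome
  tok k := match k with
    | .A => l.A
    | .E => l.E
    | .W => l.W
    | .I d => decide (y d = some (.letter { l with Y := true }))
  ot k := match k with
    | .A _ => l.A
    | .E => l.E
    | .W => l.W
  oP _ := false
  oY _ := false

def mkR (y : Dir → Option Yt) : Reg where
  phi := false
  psi := false
  cp d := (y d).isSome
  seen k := match k with
    | .I d => !(y d).isSome
    | _ => false

noncomputable def startOut (q : Q0) (d : Dir) : Option Yt :=
  if d = .C then
    (if h : ∃ l, StartOk q.y l then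
      some (.body (mkC q.y h.choose, if q.a.isLst = true then some (mkR q.y) else none)) else none)
  else none

def danceOut (q : Q0) (d : Dir) : Option Yt :=
  if q.w.2.2 = 0 then
    (if q.a.odd = true then stay q.y d else
      if d = .R then (bodyOf (q.y .C)).map Yt.body else none)
  else if q.w.2.2 = 1 then
    (if q.a.odd = true ∧ d = .L then
      (bodyOf (q.y .R)).bind fun g => (bodyOf (q.y .C)).map fun o => .pair g o else none)
  else if q.w.2.2 = 2 then
    (if q.a.odd = true then none else
      if d = .C then (pairOf (q.y .L)).map fun go => .body go.1 else
      if d = .R then (pairOf (q.y .L)).map fun go => .body go.2 else none)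
  else
    (if q.a.odd = true then
      (if d = .C then (bodyOf (q.y .R)).map Yt.body else none)
      else stay q.y d)

def launchLetter (c : Content) (d : Dir) : Option Yt :=
  if c.oP d = true then some (.letter ⟨c.ot (.A d), c.ot .E, c.ot .W, c.oY d⟩) else none

def launchOut (q : Q0) (d : Dir) : Option Yt :=
  if q.w.isLst = true then (bodyOf (q.y .C)).bind fun b => launchLetter b.1 d
  else (letterOf (q.y d)).map Yt.letter

/-- the head is at the start / end of a pass -/
def passFst (e q : Pos) : Bool := if e.odd = true then q.isLst else q.isFst
def passLst (e q : Pos) : Bool := if e.odd = true then q.isFst else q.isLst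
def passDir (e : Pos) : Dir := if e.odd = true then .L else .R

noncomputable def passRes (k : Kap) : Option (Reg × Content) :=
  (bodyOf (k.q.y .C)).bind fun b =>
    (if passFst k.q.e k.q.w = true then b.2 else headOf (k.q.y (passDir k.q.e))).bind fun r =>
      step k.q.a k.ia (passLst k.q.e k.q.w) k.ie r b.1

noncomputable def passOut (k : Kap) (d : Dir) : Option Yt :=
  if k.q.col = false then stay k.q.y d
  else if d = .C then
    (passRes k).map fun rc => .body (rc.2, if passLst k.q.e k.q.w = true then some rc.1 else none)
  else if d = passDir k.q.e ∧ passLst k.q.e k.q.w = false then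
    (passRes k).map fun rc => .head rc.1
  else none

/-- the local rule on payloads -/
noncomputable def GG (k : Kap) (d : Dir) : Option Yt :=
  match k.ie with
  | .inl .start => if k.q.w.isFst = true then startOut k.q d else stay k.q.y d
  | .inl .dance => danceOut k.q d
  | .inl .idle => stay k.q.y d
  | .inl .launch => launchOut k.q d
  | _ => passOut k d

end

/-- instructions executed by a pass of the head -/
def isPass : Instr → Prop
  | .inl .start => False
  | .inl .dance => False
  | .inl .idle => False
  | .inl .launch => False
  | _ => True

theorem GG_pass {k : Kap} (h : isPass k.ie) (d : Dir) : GG k d = passOut k d := by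
  unfold GG
  split <;> simp_all [isPass]

/-! ### the program -/

abbrev PP := List (Instr × Instr)

noncomputable def one (i : Base) : Instr × Instr := (.inl .nop, .inl i)
noncomputable def rotR (k : OTok) : PP := [(.inl .nop, .inl (.shift k)), (.inl (.drop k), .inl .nop)]
noncomputable def rotL (k : OTok) : PP := [(.inl (.shift k), .inl (.drop k))]

noncomputable def tagProg : PP :=
  (one .reset :: rotR (.A .R)) ++ (one .reset :: rotL (.A .L)) ++
  (one .reset :: one (.testT false false) :: rotR .W) ++
  (one .reset :: one (.testT true false) :: rotL .W) ++
  (one .reset :: one (.testT false true) :: rotR .E) ++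
  (one .reset :: one (.testT true true) :: rotR .E)

noncomputable def bitProg (ia ie : Instr) : PP :=
  (List.finRange nB).flatMap fun j =>
    [(.inl .nop, .inr (false, j, bitc ia j)), (.inl .nop, .inr (true, j, bitc ie j))]

noncomputable def kapProg (k : Kap) : PP :=
  one .reset :: one (.test k.q) :: (bitProg k.ia k.ie ++ [one (.emit (GG k))])

noncomputable def mainProg : PP := tagProg ++ (Finset.univ : Finset Kap).toList.flatMap kapProg

noncomputable def prog : PP := (.inl .chk, .inl .nop) :: mainProg

/-- instruction of slot `e` -/
noncomputable def instr (N e : ℕ) : Instr :=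
  if e = 0 then .inl .start
  else if e + 1 = N then .inl .launch
  else match prog[(e - 1) / 2]? with
    | some lr => if e % 2 = 1 then lr.1 else lr.2
    | none => if e % 2 = 1 then .inl .idle else .inl .dance

noncomputable def kof (N a e w : ℕ) (y : Dir → Option Yt) : Kap :=
  ⟨⟨posOf N a, posOf N e, posOf N w, decide (a = w), y⟩, instr N a, instr N e⟩

/-- head position in slot `e` at step `s` -/
def hd (N e s : ℕ) : ℕ := if e % 2 = 1 then N - 1 - s else s

/-- local rule with address and time -/
noncomputable def gg (N a τ : ℕ) (y : Dir → Option Yt) (d : Dir) : Option Yt :=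
  GG (kof N a (τ / N) (hd N (τ / N) (τ % N)) y) d


set_option linter.unusedSectionVars false
set_option linter.unusedSimpArgs false
set_option linter.unusedVariables false

/-- size requirements -/
structure GoodN (N : ℕ) : Prop where
  d4 : 4 ∣ N
  cy : cY < N
  len : 2 * prog.length + 210 ≤ N

/-! ### positions and instructions -/

theorem posOf_isFst (N a : ℕ) : (posOf N a).isFst = true ↔ a = 0 := by
  have := cY_pos
  simp only [Pos.isFst, decide_eq_true_eq]
  change min a cY = 0 ↔ _
  omega

theorem posOf_isLst (N a : ℕ) : (posOf N a).isLst = true ↔ a + 1 = N := by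
  simp only [Pos.isLst, posOf, decide_eq_true_eq]

theorem posOf_odd (N a : ℕ) : (posOf N a).odd = true ↔ a % 2 = 1 := by
  simp only [Pos.odd, decide_eq_true_eq]
  change a % 4 % 2 = 1 ↔ _
  omega

theorem posOf_code (N a : ℕ) (y : Yt) : (posOf N a).1.val = code y ↔ a = code y := by
  have := code_lt y
  simp only [posOf]
  omega

theorem posOf_lt (N a : ℕ) : (posOf N a).1.val < cY ↔ a < cY := by
  simp only [posOf]
  omega

theorem posOf_mod (N a : ℕ) : (posOf N a).2.2.val = a % 4 := rfl

theorem instr_zero (N : ℕ) : instr N 0 = .inl .start := by simp [instr]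

theorem instr_last {N e : ℕ} (he : e ≠ 0) (h : e + 1 = N) : instr N e = .inl .launch := by
  simp [instr, he, h]

theorem instr_odd {N i : ℕ} (hN : GoodN N) (hi : i < prog.length) :
    instr N (2 * i + 1) = prog[i].1 := by
  have := hN.len
  have h1 : (2 * i + 1 - 1) / 2 = i := by omega
  rw [instr, if_neg (by omega), if_neg (by omega), h1, List.getElem?_eq_getElem hi]
  simp only
  rw [if_pos (by omega)]

theorem instr_even {N i : ℕ} (hN : GoodN N) (hi : i < prog.length) :
    instr N (2 * i + 2) = prog[i].2 := by
  have := hN.len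
  have h1 : (2 * i + 2 - 1) / 2 = i := by omega
  rw [instr, if_neg (by omega), if_neg (by omega), h1, List.getElem?_eq_getElem hi]
  simp only
  rw [if_neg (by omega)]

theorem instr_idle {N e : ℕ} (h1 : 2 * prog.length < e) (h2 : e + 1 < N) (h3 : e % 2 = 1) :
    instr N e = .inl .idle := by
  rw [instr, if_neg (by omega), if_neg (by omega), List.getElem?_eq_none (by omega)]
  simp only
  rw [if_pos h3]

theorem instr_dance {N e : ℕ} (h1 : 2 * prog.length < e) (h2 : e + 1 < N) (h3 : e % 2 = 0) :
    instr N e = .inl .dance := by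
  rw [instr, if_neg (by omega), if_neg (by omega), List.getElem?_eq_none (by omega)]
  simp only
  rw [if_neg (by omega)]

theorem mainProg_nochk : ∀ lr ∈ mainProg, (isPass lr.1 ∧ lr.1 ≠ .inl .chk) ∧
    (isPass lr.2 ∧ lr.2 ≠ .inl .chk) := by
  intro lr h
  simp only [mainProg, tagProg, rotR, rotL, one, kapProg, bitProg, List.mem_append, List.mem_cons,
    List.mem_flatMap, List.not_mem_nil, or_false, false_or] at h
  rcases h with h | ⟨k, _, h⟩
  · rcases h with ((((h | h) | h) | h) | h) | h <;>
    (repeat' (first | subst h | rcases h with h | h)) <;> simp [isPass]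
  · rcases h with h | h | ⟨j, _, h | h⟩ | h <;> subst h <;> simp [isPass]

theorem prog_isPass : ∀ lr ∈ prog, isPass lr.1 ∧ isPass lr.2 := by
  intro lr h
  rcases List.mem_cons.1 h with h | h
  · subst h; simp [isPass]
  · exact ⟨(mainProg_nochk lr h).1.1, (mainProg_nochk lr h).2.1⟩

theorem instr_isPass {N e : ℕ} (hN : GoodN N) (h1 : 0 < e) (h2 : e ≤ 2 * prog.length) :
    isPass (instr N e) := by
  rcases Nat.even_or_odd' e with ⟨i, rfl | rfl⟩
  · obtain ⟨k, rfl⟩ : ∃ k, i = k + 1 := ⟨i - 1, by omega⟩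
    have hk : k < prog.length := by omega
    have := instr_even hN hk
    rw [show 2 * (k + 1) = 2 * k + 2 by ring, this]
    exact (prog_isPass _ (List.getElem_mem hk)).2
  · have hk : i < prog.length := by omega
    rw [instr_odd hN hk]
    exact (prog_isPass _ (List.getElem_mem hk)).1

/-- classification of slots -/
theorem slot_cases {N e : ℕ} (hN : GoodN N) (he : e < N) :
    e = 0 ∨ (0 < e ∧ e ≤ 2 * prog.length ∧ isPass (instr N e)) ∨
    (2 * prog.length < e ∧ e + 1 < N ∧ e % 2 = 1 ∧ instr N e = .inl .idle) ∨
    (2 * prog.length < e ∧ e + 1 < N ∧ e % 2 = 0 ∧ instr N e = .inl .dance) ∨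
    (e + 1 = N ∧ instr N e = .inl .launch) := by
  have := hN.len
  by_cases h0 : e = 0
  · exact .inl h0
  by_cases h1 : e ≤ 2 * prog.length
  · exact .inr (.inl ⟨by omega, h1, instr_isPass hN (by omega) h1⟩)
  by_cases h2 : e + 1 = N
  · exact .inr (.inr (.inr (.inr ⟨h2, instr_last h0 h2⟩)))
  rcases Nat.mod_two_eq_zero_or_one e with h3 | h3
  · exact .inr (.inr (.inr (.inl ⟨by omega, by omega, h3, instr_dance (by omega) (by omega) h3⟩)))
  · exact .inr (.inr (.inl ⟨by omega, by omega, h3, instr_idle (by omega) (by omega) h3⟩))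

/-! ### payload dynamics -/

abbrev PCf := ℤ → Dir → Option Yt
abbrev Blk := ℕ → Dir → Option Yt

noncomputable def pstep (N τ : ℕ) (c : PCf) : PCf := fun j d =>
  gg N (((j - d.off) % N).toNat) τ (c (j - d.off)) d

noncomputable def run (N : ℕ) : ℕ → PCf → PCf
  | 0, c => c
  | n + 1, c => pstep N n (run N n c)

/-- local rule with address, slot, step -/
noncomputable def gs (N a e s : ℕ) (y : Dir → Option Yt) (d : Dir) : Option Yt :=
  GG (kof N a e (hd N e s) y) d

theorem gg_eq_gs {N a e s : ℕ} (hs : s < N) (y : Dir → Option Yt) (d : Dir) :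
    gg N a (e * N + s) y d = gs N a e s y d := by
  have h1 : (e * N + s) / N = e := by
    rw [mul_comm, Nat.mul_add_div (by omega), Nat.div_eq_of_lt hs, add_zero]
  have h2 : (e * N + s) % N = s := by
    rw [mul_comm, Nat.mul_add_mod, Nat.mod_eq_of_lt hs]
  rw [gg, gs, h1, h2]

noncomputable def bstep (N e s : ℕ) (b : Blk) : Blk := fun a d =>
  match d with
  | .C => gs N a e s (b a) .C
  | .R => if a = 0 then none else gs N (a - 1) e s (b (a - 1)) .R
  | .L => if a + 1 = N then none else gs N (a + 1) e s (b (a + 1)) .L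

noncomputable def brun (N e : ℕ) : ℕ → Blk → Blk
  | 0, b => b
  | s + 1, b => bstep N e s (brun N e s b)

def blk (N : ℕ) (c : PCf) (X : ℤ) : Blk := fun a d => c (N * X + a) d

theorem bodyOf_mono {y y' : Dir → Option Yt} (h : ∀ d v, y d = some v → y' d = some v) (d : Dir)
    {q : Body} (hq : bodyOf (y d) = some q) : bodyOf (y' d) = some q := by
  cases hy : y d with
  | none => simp [hy, bodyOf] at hq
  | some v => rw [h d v hy, ← hy]; exact hq

theorem pairOf_mono {y y' : Dir → Option Yt} (h : ∀ d v, y d = some v → y' d = some v) (d : Dir)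
    {q : Body × Body} (hq : pairOf (y d) = some q) : pairOf (y' d) = some q := by
  cases hy : y d with
  | none => simp [hy, pairOf] at hq
  | some v => rw [h d v hy, ← hy]; exact hq

theorem headOf_mono {y y' : Dir → Option Yt} (h : ∀ d v, y d = some v → y' d = some v) (d : Dir)
    {q : Reg} (hq : headOf (y d) = some q) : headOf (y' d) = some q := by
  cases hy : y d with
  | none => simp [hy, headOf] at hq
  | some v => rw [h d v hy, ← hy]; exact hq

theorem letterOf_mono {y y' : Dir → Option Yt} (h : ∀ d v, y d = some v → y' d = some v) (d : Dir)
    {q : Letter} (hq : letterOf (y d) = some q) : letterOf (y' d) = some q := by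
  cases hy : y d with
  | none => simp [hy, letterOf] at hq
  | some v => rw [h d v hy, ← hy]; exact hq

theorem stay_mono {y y' : Dir → Option Yt} (h : ∀ d v, y d = some v → y' d = some v) (d : Dir)
    {v : Yt} (hv : stay y d = some v) : stay y' d = some v := by
  unfold stay at *
  split_ifs at * with h1
  rw [Option.map_eq_some_iff] at *
  obtain ⟨q, h1, h2⟩ := hv
  exact ⟨q, bodyOf_mono h _ h1, h2⟩

theorem passRes_mono {q : Q0} {ia ie : Instr} {y' : Dir → Option Yt}
    (h : ∀ d v, q.y d = some v → y' d = some v) {v : Reg × Content}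
    (hv : passRes ⟨q, ia, ie⟩ = some v) : passRes ⟨{ q with y := y' }, ia, ie⟩ = some v := by
  simp only [passRes, Option.bind_eq_some_iff] at *
  obtain ⟨b, h1, r, h2, h3⟩ := hv
  refine ⟨b, bodyOf_mono h _ h1, r, ?_, h3⟩
  split_ifs at * with h4
  · exact h2
  · exact headOf_mono h _ h2

theorem GG_mono {q : Q0} {ia ie : Instr} {y' : Dir → Option Yt}
    (h : ∀ d v, q.y d = some v → y' d = some v) (hs : ie = .inl .start → q.w.isFst = false)
    (d : Dir) {v : Yt} (hv : GG ⟨q, ia, ie⟩ d = some v) :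
    GG ⟨{ q with y := y' }, ia, ie⟩ d = some v := by
  by_cases hp : isPass ie
  · rw [GG_pass hp] at *
    simp only [passOut] at *
    split_ifs at * with h1 h2 h3 h4
    · exact stay_mono h _ hv
    all_goals
      rw [Option.map_eq_some_iff] at *
      obtain ⟨a, ha, hb⟩ := hv
      exact ⟨a, passRes_mono h ha, hb⟩
  · rcases ie with (_ | _ | _ | _ | _ | _ | _ | _ | _ | _ | _ | _) | _ <;>
      simp only [isPass, not_true, not_false_eq_true] at hp
    · have := hs rfl
      simp only [GG, this] at *
      exact stay_mono h _ hv
    · simp only [GG, danceOut] at *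
      split_ifs at * with h1 h2 h3 h4
      · exact stay_mono h _ hv
      all_goals first
        | exact stay_mono h _ hv
        | (rw [Option.map_eq_some_iff] at *
           obtain ⟨a, ha, hb⟩ := hv
           first
            | exact ⟨a, bodyOf_mono h _ ha, hb⟩
            | exact ⟨a, pairOf_mono h _ ha, hb⟩)
        | (rw [Option.bind_eq_some_iff] at *
           obtain ⟨a, ha, hb⟩ := hv
           rw [Option.map_eq_some_iff] at hb
           obtain ⟨o, ho, hb⟩ := hb
           refine ⟨a, bodyOf_mono h _ ha, ?_⟩
           rw [Option.map_eq_some_iff]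
           exact ⟨o, bodyOf_mono h _ ho, hb⟩)
    · simp only [GG] at *
      exact stay_mono h _ hv
    · simp only [GG, launchOut] at *
      split_ifs at * with h1
      · rw [Option.bind_eq_some_iff] at *
        obtain ⟨a, ha, hb⟩ := hv
        exact ⟨a, bodyOf_mono h _ ha, hb⟩
      · rw [Option.map_eq_some_iff] at *
        obtain ⟨a, ha, hb⟩ := hv
        exact ⟨a, letterOf_mono h _ ha, hb⟩

theorem GG_none {q : Q0} {ia ie : Instr} (h : ∀ d, q.y d = none) (d : Dir) :
    GG ⟨q, ia, ie⟩ d = none := by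
  have hb : ∀ d, bodyOf (q.y d) = none := fun d => by rw [h]; rfl
  have hp' : ∀ d, pairOf (q.y d) = none := fun d => by rw [h]; rfl
  have hl : ∀ d, letterOf (q.y d) = none := fun d => by rw [h]; rfl
  by_cases hp : isPass ie
  · rw [GG_pass hp]
    simp [passOut, stay, passRes, hb]
  · rcases ie with (_ | _ | _ | _ | _ | _ | _ | _ | _ | _ | _ | _) | _ <;>
      simp only [isPass, not_true, not_false_eq_true] at hp
    · have : ¬ ∃ l, StartOk q.y l := by
        rintro ⟨l, ⟨d, y, hy⟩, _⟩
        rw [h] at hy; cases hy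
      simp [GG, startOut, this, stay, hb]
    · simp [GG, danceOut, stay, hb, hp']
    · simp [GG, stay, hb]
    · simp [GG, launchOut, hb, hl]

theorem gs_none {N a e s : ℕ} {y : Dir → Option Yt} (h : ∀ d, y d = none) (d : Dir) :
    gs N a e s y d = none := GG_none h d

theorem gg_none {N a τ : ℕ} {y : Dir → Option Yt} (h : ∀ d, y d = none) (d : Dir) :
    gg N a τ y d = none := GG_none h d

/-- extension order on configurations -/
def cle (c c' : PCf) : Prop := ∀ j d v, c j d = some v → c' j d = some v

theorem pstep_mono {N τ : ℕ} (hN : GoodN N) (hτ : τ ≠ 0) (hT : τ < N * N) {c c' : PCf}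
    (h : cle c c') : cle (pstep N τ c) (pstep N τ c') := by
  intro j d v hv
  have := hN.len
  simp only [pstep, gg] at *
  refine GG_mono (h _) ?_ d hv
  intro hi
  have he : τ / N < N := Nat.div_lt_of_lt_mul hT
  have he0 : τ / N = 0 := by
    rcases slot_cases hN he with h | h | h | h | h
    · exact h
    · exfalso
      have h2 := h.2.2
      rw [show instr N (τ / N) = _ from hi] at h2
      exact h2
    · rw [h.2.2.2] at hi; cases hi
    · rw [h.2.2.2] at hi; cases hi
    · rw [h.2] at hi; cases hi
  have hlt : τ < N := by
    have := Nat.div_add_mod τ N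
    have := Nat.mod_lt τ (show 0 < N by omega)
    rw [he0] at *
    omega
  rw [Bool.eq_false_iff, ne_eq]
  have : ¬ (posOf N (hd N (τ / N) (τ % N))).isFst = true := by
    rw [posOf_isFst, he0, hd, Nat.mod_eq_of_lt hlt]
    simpa using hτ
  exact this

/-- no messages cross block boundaries before the launch slot -/
theorem noCrossR {N e s : ℕ} (hN : GoodN N) (he : e + 1 < N) (hs : s < N)
    (y : Dir → Option Yt) : gs N (N - 1) e s y .R = none := by
  have hlen := hN.len
  have h4 := hN.d4
  have hodd : (posOf N (N - 1)).odd = true := by rw [posOf_odd]; omega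
  have hst : stay y .R = none := by simp [stay]
  rcases slot_cases hN (show e < N by omega) with h | h | h | h | h
  · subst h
    simp [gs, GG, kof, instr_zero, startOut, hst]
  · rw [gs, GG_pass (by exact h.2.2)]
    simp only [passOut, kof, reduceCtorEq, if_false]
    split_ifs with h1 h3
    · exact hst
    · exfalso
      rw [decide_eq_false_iff_not, not_not] at h1
      obtain ⟨h3, h4⟩ := h3
      simp only [passDir] at h3
      simp only [passLst] at h4
      split_ifs at h3 with h5
      simp only [h5, if_true, if_false, Bool.false_eq_true] at h4
      rw [← h1] at h4
      rw [← Bool.not_eq_true, posOf_isLst] at h4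
      omega
    · exact if_neg h3
  · simp [gs, GG, kof, h.2.2.2, hst]
  · simp [gs, GG, kof, h.2.2.2, danceOut, hodd, hst]
  · omega

theorem noCrossL {N e s : ℕ} (hN : GoodN N) (he : e + 1 < N) (hs : s < N)
    (y : Dir → Option Yt) : gs N 0 e s y .L = none := by
  have hlen := hN.len
  have hodd : ¬ (posOf N 0).odd = true := by rw [posOf_odd]; omega
  have hst : stay y .L = none := by simp [stay]
  rcases slot_cases hN (show e < N by omega) with h | h | h | h | h
  · subst h
    simp [gs, GG, kof, instr_zero, startOut, hst]
  · rw [gs, GG_pass (by exact h.2.2)]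
    simp only [passOut, kof, reduceCtorEq, if_false]
    split_ifs with h1 h3
    · exact hst
    · exfalso
      rw [decide_eq_false_iff_not, not_not] at h1
      obtain ⟨h3, h4⟩ := h3
      simp only [passDir] at h3
      simp only [passLst] at h4
      split_ifs at h3 with h5
      simp only [h5, if_true, if_false, Bool.false_eq_true] at h4
      rw [← h1] at h4
      rw [← Bool.not_eq_true, posOf_isFst] at h4
      omega
    · exact if_neg h3
  · simp [gs, GG, kof, h.2.2.2, hst]
  · simp [gs, GG, kof, h.2.2.2, danceOut, hodd, hst]
  · omega

theorem addr_eq {N a : ℕ} (ha : a < N) (X : ℤ) : (((N : ℤ) * X + a) % N).toNat = a := by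
  rw [Int.mul_add_emod_self_left, Int.emod_eq_of_lt (by omega) (by omega)]
  simp

theorem pstep_blk {N e s : ℕ} (hN : GoodN N) (he : e + 1 < N) (hs : s < N) (c : PCf) (X : ℤ)
    {a : ℕ} (ha : a < N) (d : Dir) :
    blk N (pstep N (e * N + s) c) X a d = bstep N e s (blk N c X) a d := by
  simp only [blk, pstep, gg_eq_gs hs]
  cases d with
  | C =>
    simp only [Dir.off, sub_zero, addr_eq ha, bstep]
    rfl
  | R =>
    simp only [Dir.off, bstep]
    split_ifs with h
    · subst h
      have : (N : ℤ) * X + (0 : ℕ) - 1 = N * (X - 1) + (N - 1 : ℕ) := by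
        push_cast [show 1 ≤ N by omega]; ring
      rw [this, addr_eq (by omega)]
      exact noCrossR hN he hs _
    · have : (N : ℤ) * X + a - 1 = N * X + (a - 1 : ℕ) := by
        push_cast [show 1 ≤ a by omega]; ring
      rw [this, addr_eq (by omega)]
      rfl
  | L =>
    simp only [Dir.off, bstep]
    split_ifs with h
    · have : (N : ℤ) * X + a - (-1) = N * (X + 1) + (0 : ℕ) := by
        have : (N : ℤ) = a + 1 := by exact_mod_cast h.symm
        rw [this]; push_cast; ring
      rw [this, addr_eq (by omega)]
      exact noCrossL hN he hs _
    · have : (N : ℤ) * X + a - (-1) = N * X + (a + 1 : ℕ) := by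
        push_cast; ring
      rw [this, addr_eq (by omega)]
      rfl

theorem bstep_congr {N e s : ℕ} {b b' : Blk} (h : ∀ a < N, ∀ d, b a d = b' a d) {a : ℕ}
    (ha : a < N) (d : Dir) : bstep N e s b a d = bstep N e s b' a d := by
  have h' : ∀ a < N, b a = b' a := fun a ha => funext (h a ha)
  cases d with
  | C => simp only [bstep, h' a ha]
  | R =>
    simp only [bstep]
    rw [h' (a - 1) (by omega)]
  | L =>
    simp only [bstep]
    split_ifs with h1
    · rfl
    · rw [h' (a + 1) (by omega)]

theorem brun_congr {N e : ℕ} {b b' : Blk} (h : ∀ a < N, ∀ d, b a d = b' a d) : ∀ (s : ℕ),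
    ∀ a < N, ∀ d, brun N e s b a d = brun N e s b' a d
  | 0, a, ha, d => h a ha d
  | s + 1, a, ha, d => bstep_congr (brun_congr h s) ha d

theorem run_blk {N e : ℕ} (hN : GoodN N) (he : e + 1 < N) (c : PCf) (X : ℤ) :
    ∀ (s : ℕ), s ≤ N → ∀ a < N, ∀ d,
      blk N (run N (e * N + s) c) X a d = brun N e s (blk N (run N (e * N) c) X) a d
  | 0, _, a, ha, d => rfl
  | s + 1, hs, a, ha, d => by
    have := run_blk hN he c X s (by omega)
    rw [← add_assoc, run, pstep_blk hN he (by omega) _ X ha d, brun]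
    exact bstep_congr this ha d

theorem brun_none {N e : ℕ} {b : Blk} (h : ∀ a < N, ∀ d, b a d = none) : ∀ (s : ℕ),
    ∀ a < N, ∀ d, brun N e s b a d = none
  | 0, a, ha, d => h a ha d
  | s + 1, a, ha, d => by
    have ih := brun_none (e := e) h s
    rw [brun]
    cases d with
    | C => exact gs_none (ih a ha) _
    | R =>
      simp only [bstep]
      split_ifs with h1
      · rfl
      · exact gs_none (ih _ (by omega)) _
    | L =>
      simp only [bstep]
      split_ifs with h1
      · rfl
      · exact gs_none (ih _ (by omega)) _


set_option linter.unusedSectionVars false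
set_option linter.unusedSimpArgs false
set_option linter.unusedVariables false

/-! ### slots in which the head makes a pass -/

def pdir (e : ℕ) : Dir := if e % 2 = 1 then .L else .R

theorem hd_lt {N e s : ℕ} (hs : s < N) : hd N e s < N := by
  unfold hd; split_ifs <;> omega

theorem hd_hd {N e s : ℕ} (hs : s < N) : hd N e (hd N e s) = s := by
  unfold hd; split_ifs <;> omega

theorem hd_eq_iff {N e s a : ℕ} (hs : s < N) (ha : a < N) : a = hd N e s ↔ hd N e a = s := by
  constructor
  · rintro rfl; exact hd_hd hs
  · rintro rfl; exact (hd_hd ha).symm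

noncomputable def pres (N e a s : ℕ) (y : Dir → Option Yt) : Option (Reg × Content) :=
  (bodyOf (y .C)).bind fun b =>
    (if s = 0 then b.2 else headOf (y (pdir e))).bind fun r =>
      step (posOf N a) (instr N a) (decide (s + 1 = N)) (instr N e) r b.1

theorem passFst_eq {N e s : ℕ} (hs : s < N) :
    passFst (posOf N e) (posOf N (hd N e s)) = decide (s = 0) := by
  rw [Bool.eq_iff_iff, decide_eq_true_eq, passFst]
  by_cases h : e % 2 = 1
  · rw [if_pos ((posOf_odd N e).2 h), posOf_isLst, hd, if_pos h]; omega
  · rw [if_neg (mt (posOf_odd N e).1 h), posOf_isFst, hd, if_neg h]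

theorem passLst_eq {N e s : ℕ} (hs : s < N) :
    passLst (posOf N e) (posOf N (hd N e s)) = decide (s + 1 = N) := by
  rw [Bool.eq_iff_iff, decide_eq_true_eq, passLst]
  by_cases h : e % 2 = 1
  · rw [if_pos ((posOf_odd N e).2 h), posOf_isFst, hd, if_pos h]; omega
  · rw [if_neg (mt (posOf_odd N e).1 h), posOf_isLst, hd, if_neg h]

theorem passDir_eq (N e : ℕ) : passDir (posOf N e) = pdir e := by
  rw [passDir, pdir]
  by_cases h : e % 2 = 1
  · rw [if_pos ((posOf_odd N e).2 h), if_pos h]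
  · rw [if_neg (mt (posOf_odd N e).1 h), if_neg h]

theorem gs_off {N a e s : ℕ} (hp : isPass (instr N e)) (h : a ≠ hd N e s)
    (y : Dir → Option Yt) (d : Dir) : gs N a e s y d = stay y d := by
  rw [gs, GG_pass hp, passOut, if_pos (by simpa [kof] using h)]
  rfl

theorem gs_on {N a e s : ℕ} (hs : s < N) (hp : isPass (instr N e)) (h : a = hd N e s)
    (y : Dir → Option Yt) (d : Dir) : gs N a e s y d =
      if d = .C then (pres N e a s y).map fun rc =>
          .body (rc.2, if s + 1 = N then some rc.1 else none)
      else if d = pdir e ∧ s + 1 ≠ N then (pres N e a s y).map fun rc => .head rc.1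
      else none := by
  have hr : passRes (kof N a e (hd N e s) y) = pres N e a s y := by
    simp only [passRes, pres, kof, passFst_eq hs, passLst_eq hs, passDir_eq, decide_eq_true_eq]
  have h1 : ¬ (kof N a e (hd N e s) y).q.col = false := by simp [kof, h]
  rw [gs, GG_pass hp, passOut, if_neg h1, hr]
  simp only [kof, passLst_eq hs, passDir_eq, decide_eq_true_eq, decide_eq_false_iff_not, ne_eq]

/-- registers along a pass -/
noncomputable def regs (N e : ℕ) (v : ℕ → Option Content) (r : Option Reg) : ℕ → Option Reg
  | 0 => r
  | s + 1 => (v (hd N e s)).bind fun c => (regs N e v r s).bind fun r =>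
      (step (posOf N (hd N e s)) (instr N (hd N e s)) (decide (s + 1 = N)) (instr N e) r c).map
        Prod.fst

noncomputable def vnew (N e : ℕ) (v : ℕ → Option Content) (r : Option Reg) (a : ℕ) :
    Option Content :=
  (v a).bind fun c => (regs N e v r (hd N e a)).bind fun r =>
      (step (posOf N a) (instr N a) (decide (hd N e a + 1 = N)) (instr N e) r c).map Prod.snd

noncomputable def PC (N e : ℕ) (v : ℕ → Option Content) (r : Option Reg) (s : ℕ) : Blk :=
  fun a d =>
    if d = .C then
      (if hd N e a < s then
        (vnew N e v r a).map fun c => .body (c, if hd N e a + 1 = N then regs N e v r N else none)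
      else (v a).map fun c => .body (c, if hd N e a = 0 then r else none))
    else if d = pdir e ∧ 0 < s ∧ s < N ∧ hd N e a = s then (regs N e v r s).map .head
    else none

theorem PC_body (N e v r s a) : (bodyOf (PC N e v r s a .C)).map Yt.body = PC N e v r s a .C := by
  simp only [PC, if_true]
  by_cases h : hd N e a < s
  · rw [if_pos h]; cases vnew N e v r a <;> rfl
  · rw [if_neg h]; cases v a <;> rfl

theorem pres_PC {N e s : ℕ} (hs : s < N) (v r) : pres N e (hd N e s) s (PC N e v r s (hd N e s)) =
    (v (hd N e s)).bind fun c => (regs N e v r s).bind fun r =>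
      step (posOf N (hd N e s)) (instr N (hd N e s)) (decide (s + 1 = N)) (instr N e) r c := by
  rw [pres]
  have h1 : hd N e (hd N e s) = s := hd_hd hs
  have h2 : PC N e v r s (hd N e s) .C =
      (v (hd N e s)).map fun c => .body (c, if s = 0 then r else none) := by
    simp [PC, h1]
  rw [h2]
  cases hv : v (hd N e s) with
  | none => rfl
  | some c =>
    simp only [Option.map_some, bodyOf, Option.bind_some]
    by_cases h0 : s = 0
    · subst h0
      simp [regs]
    · have h3 : PC N e v r s (hd N e s) (pdir e) = (regs N e v r s).map .head := by
        have : pdir e ≠ .C := by unfold pdir; split_ifs <;> simp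
        simp only [PC, if_neg this]
        rw [if_pos ⟨trivial, by omega, hs, h1⟩]
      rw [h3, if_neg h0]
      congr 1
      cases regs N e v r s <;> rfl

theorem pass_step {N e s : ℕ} (hs : s < N) (hp : isPass (instr N e)) (v r) {a : ℕ} (ha : a < N)
    (d : Dir) : bstep N e s (PC N e v r s) a d = PC N e v r (s + 1) a d := by
  have hC : gs N a e s (PC N e v r s a) .C = PC N e v r (s + 1) a .C := by
    by_cases h : a = hd N e s
    · rw [gs_on hs hp h, if_pos rfl, h, pres_PC hs]
      simp only [PC, if_true]
      rw [if_pos (by rw [hd_hd hs]; omega), hd_hd hs, vnew, hd_hd hs]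
      cases hv : v (hd N e s) with
      | none => rfl
      | some c =>
        cases hr : regs N e v r s with
        | none => rfl
        | some r' =>
          simp only [Option.bind_some]
          cases hst : step (posOf N (hd N e s)) (instr N (hd N e s)) (decide (s + 1 = N))
            (instr N e) r' c with
          | none => rfl
          | some rc =>
            simp only [Option.map_some]
            split_ifs with h1
            · have : regs N e v r N = some rc.1 := by
                have h2 : regs N e v r N = regs N e v r (s + 1) := by rw [h1]
                rw [h2, regs, hv, hr, Option.bind_some, Option.bind_some, hst]; rfl
              rw [this]
            · rfl
    · rw [gs_off hp h, stay, if_pos rfl, PC_body]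
      have : hd N e a ≠ s := fun h' => h ((hd_eq_iff hs ha).2 h')
      simp only [PC, if_true]
      by_cases h2 : hd N e a < s
      · rw [if_pos h2, if_pos (show hd N e a < s + 1 by omega)]
      · rw [if_neg h2, if_neg (show ¬ hd N e a < s + 1 by omega)]
  have hside : ∀ a' < N, d ≠ .C → (a' = hd N e s ∧ d = pdir e → s + 1 ≠ N → hd N e a = s + 1) →
      (hd N e a = s + 1 → d = pdir e → a' = hd N e s) →
      gs N a' e s (PC N e v r s a') d = PC N e v r (s + 1) a d := by
    intro a' ha' hd1 h1 h2
    by_cases h : a' = hd N e s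
    · rw [gs_on hs hp h, if_neg hd1, h, pres_PC hs]
      simp only [PC, if_neg hd1]
      by_cases h3 : d = pdir e ∧ s + 1 ≠ N
      · rw [if_pos h3, if_pos ⟨h3.1, by omega, by omega, h1 ⟨h, h3.1⟩ h3.2⟩, regs]
        cases hv : v (hd N e s) with
        | none => rfl
        | some c =>
          cases hr : regs N e v r s with
          | none => rfl
          | some r' =>
            simp only [Option.bind_some, Option.map_map]
            rfl
      · rw [if_neg h3, if_neg]
        intro h4
        exact h3 ⟨h4.1, by omega⟩
    · rw [gs_off hp h, stay, if_neg hd1]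
      simp only [PC, if_neg hd1]
      rw [if_neg]
      intro h3
      exact h (h2 h3.2.2.2 h3.1)
  cases d with
  | C => exact hC
  | R =>
    simp only [bstep]
    split_ifs with h0
    · simp only [PC]
      rw [if_neg (by simp), if_neg]
      intro h3
      have h4 := h3.1
      have h5 := h3.2.2.2
      simp only [pdir] at h4
      split_ifs at h4 with h6
      simp only [hd, if_neg h6] at h5
      omega
    · apply hside _ (by omega) (by simp)
      · intro h1 h2
        have h4 := h1.2
        have h5 := h1.1
        simp only [pdir] at h4
        split_ifs at h4 with h6
        simp only [hd, if_neg h6] at h5 ⊢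
        omega
      · intro h1 h4
        simp only [pdir] at h4
        split_ifs at h4 with h6
        simp only [hd, if_neg h6] at h1 ⊢
        omega
  | L =>
    simp only [bstep]
    split_ifs with h0
    · simp only [PC]
      rw [if_neg (by simp), if_neg]
      intro h3
      have h4 := h3.1
      have h5 := h3.2.2.2
      simp only [pdir] at h4
      split_ifs at h4 with h6
      simp only [hd, if_pos h6] at h5
      omega
    · apply hside _ (by omega) (by simp)
      · intro h1 h2
        have h4 := h1.2
        have h5 := h1.1
        simp only [pdir] at h4
        split_ifs at h4 with h6
        simp only [hd, if_pos h6] at h5 ⊢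
        omega
      · intro h1 h4
        simp only [pdir] at h4
        split_ifs at h4 with h6
        simp only [hd, if_pos h6] at h1 ⊢
        omega

/-- block with a parked head at `q` -/
noncomputable def PB (q : ℕ) (v : ℕ → Option Content) (r : Option Reg) : Blk := fun a d =>
  if d = .C then (v a).map fun c => .body (c, if a = q then r else none) else none

theorem pass_run {N e : ℕ} (hp : isPass (instr N e)) (v r) {b : Blk}
    (hb : ∀ a < N, ∀ d, b a d = PB (hd N e 0) v r a d) :
    ∀ s, s ≤ N → ∀ a < N, ∀ d, brun N e s b a d = PC N e v r s a d
  | 0, _, a, ha, d => by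
    rw [brun, hb a ha, PB, PC]
    simp only [Nat.not_lt_zero, if_false, hd_eq_iff (show 0 < N by omega) ha]
    simp
  | s + 1, hs, a, ha, d => by
    rw [brun, ← pass_step (by omega) hp v r ha d]
    exact bstep_congr (pass_run hp v r hb s (by omega)) ha d

theorem hd_next {N e : ℕ} : hd N (e + 1) 0 = hd N e (N - 1) := by
  unfold hd
  split_ifs <;> omega

theorem pass_end {N e : ℕ} (hp : isPass (instr N e)) (v r) {b : Blk}
    (hb : ∀ a < N, ∀ d, b a d = PB (hd N e 0) v r a d) :
    ∀ a < N, ∀ d, brun N e N b a d = PB (hd N (e + 1) 0) (vnew N e v r) (regs N e v r N) a d := by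
  intro a ha d
  rw [pass_run hp v r hb N le_rfl a ha d, PC, PB]
  simp only [lt_irrefl, false_and, and_false, if_false, if_pos (hd_lt ha)]
  rw [hd_next]
  have : a = hd N e (N - 1) ↔ hd N e a + 1 = N := by
    rw [hd_eq_iff (by omega) ha]; omega
  simp only [this]


set_option linter.unusedSectionVars false
set_option linter.unusedSimpArgs false
set_option linter.unusedVariables false

/-! ### start slot and check -/

noncomputable def sv (b : Blk) (a : ℕ) : Option _root_.Content :=
  open Classical in
  if h : ∃ l, StartOk (b a) l then some (mkC (b a) h.choose) else none

theorem stay_PB (q v r a d) : stay (PB q v r a) d = PB q v r a d := by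
  by_cases h : d = .C
  · subst h
    simp only [stay, PB, if_true]
    cases v a <;> rfl
  · simp [stay, PB, h]

theorem bstep_stay {N e s : ℕ} (hg : ∀ a < N, ∀ y d, gs N a e s y d = stay y d) {b : Blk} {q v r}
    (hb : ∀ a < N, ∀ d, b a d = PB q v r a d) :
    ∀ a < N, ∀ d, bstep N e s b a d = PB q v r a d := by
  intro a ha d
  rw [bstep_congr hb ha d]
  cases d with
  | C => simp only [bstep]; rw [hg a ha, stay_PB]
  | R =>
    simp only [bstep]
    split_ifs with h
    · simp [PB]
    · rw [hg _ (by omega), stay_PB]; simp [PB]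
  | L =>
    simp only [bstep]
    split_ifs with h
    · simp [PB]
    · rw [hg _ (by omega), stay_PB]; simp [PB]

theorem startOut_pos {q : Q0} (h : ∃ l, StartOk q.y l) : startOut q .C =
    some (.body (mkC q.y h.choose, if q.a.isLst = true then some (mkR q.y) else none)) := by
  rw [startOut, if_pos rfl, dif_pos h]

theorem startOut_neg {q : Q0} (h : ¬ ∃ l, StartOk q.y l) : startOut q .C = none := by
  rw [startOut, if_pos rfl, dif_neg h]

theorem start_step {N : ℕ} (b : Blk) :
    ∀ a < N, ∀ d, bstep N 0 0 b a d = PB (hd N 1 0) (sv b) (some (mkR (b (N - 1)))) a d := by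
  have hg : ∀ a < N, ∀ y d, gs N a 0 0 y d = startOut (kof N a 0 0 y).q d := by
    intro a ha y d
    have : (posOf N (hd N 0 0)).isFst = true := by rw [posOf_isFst]; rfl
    simp only [gs, GG, kof, instr_zero, this, if_true]
    rfl
  intro a ha d
  cases d with
  | C =>
    simp only [bstep, PB, if_true]
    rw [hg a ha]
    by_cases h1 : ∃ l, StartOk (b a) l
    · have hh : ((posOf N a).isLst = true) ↔ (a = hd N 1 0) := by
        rw [posOf_isLst]; simp only [hd]; norm_num; omega
      have hst : startOut (kof N a 0 0 (b a)).q .C = some (.body (mkC (b a) h1.choose,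
          if (posOf N a).isLst = true then some (mkR (b a)) else none)) :=
        startOut_pos (q := (kof N a 0 0 (b a)).q) h1
      rw [hst, sv, dif_pos h1, Option.map_some]
      by_cases h2 : a = hd N 1 0
      · rw [if_pos (hh.2 h2), if_pos h2]
        have h3 : mkR (b a) = mkR (b (N - 1)) := by rw [show a = N - 1 by rw [h2]; simp [hd]]
        rw [h3]
      · rw [if_neg (mt hh.1 h2), if_neg h2]
    · rw [startOut_neg (q := (kof N a 0 0 (b a)).q) h1, sv, dif_neg h1]
      rfl
  | R =>
    simp only [bstep, PB, reduceCtorEq, if_false]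
    by_cases h : a = 0
    · rw [if_pos h]
    · rw [if_neg h, hg _ (by omega)]; simp [startOut]
  | L =>
    simp only [bstep, PB, reduceCtorEq, if_false]
    by_cases h : a + 1 = N
    · rw [if_pos h]
    · rw [if_neg h, hg _ (by omega)]; simp [startOut]

theorem start_run {N : ℕ} (b : Blk) : ∀ s, s < N →
    ∀ a < N, ∀ d, brun N 0 (s + 1) b a d = PB (hd N 1 0) (sv b) (some (mkR (b (N - 1)))) a d
  | 0, _ => start_step b
  | s + 1, hs => by
    have ih := start_run (N := N) b s (by omega)
    rw [brun]
    refine bstep_stay ?_ ih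
    intro a ha y d
    have : ¬ (posOf N (hd N 0 (s + 1))).isFst = true := by rw [posOf_isFst]; simp [hd]
    simp only [gs, GG, kof, instr_zero, this, if_false, Bool.false_eq_true]

/-- seen tokens -/
noncomputable def Sn (N : ℕ) (c : ℕ → _root_.Content) (r0 : Reg) (s : ℕ) (k : Tok) : Bool :=
  open Classical in
  r0.seen k || decide (∃ i < s, (c (hd N 1 i)).tok k = true)

theorem Sn_iff {N c r0 s k} : Sn N c r0 s k = true ↔
    r0.seen k = true ∨ ∃ i < s, (c (hd N 1 i)).tok k = true := by
  simp [Sn]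

theorem regs_some {N e v r} : ∀ {s r'}, regs N e v r s = some r' → ∀ i < s, ∃ c, v (hd N e i) = some c
  | 0, r', h, i, hi => by omega
  | s + 1, r', h, i, hi => by
    rw [regs, Option.bind_eq_some_iff] at h
    obtain ⟨c, hc, h⟩ := h
    rw [Option.bind_eq_some_iff] at h
    obtain ⟨r1, hr, h⟩ := h
    rcases Nat.lt_succ_iff_lt_or_eq.1 hi with h1 | h1
    · exact regs_some hr i h1
    · exact ⟨c, h1 ▸ hc⟩

def OkTo (N : ℕ) (c : ℕ → _root_.Content) (r0 : Reg) (s : ℕ) : Prop :=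
  ∀ i < s, chkOk (posOf N (hd N 1 i)) (decide (i + 1 = N)) { r0 with seen := Sn N c r0 i }
    (c (hd N 1 i))

theorem prog_zero_lt : 0 < prog.length := by simp [prog]

theorem instr_one {N : ℕ} (hN : GoodN N) : instr N 1 = .inl .chk := by
  have := instr_odd hN prog_zero_lt
  simpa [prog] using this

theorem instr_two {N : ℕ} (hN : GoodN N) : instr N 2 = .inl .nop := by
  have := instr_even hN prog_zero_lt
  simpa [prog] using this

theorem step_chk (pa ia fin r c) : step pa ia fin (.inl .chk) r c = open Classical in
    (if chkOk pa fin r c then some ({ r with seen := fun k => r.seen k || c.tok k }, c) else none) := by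
  simp [step]

theorem chk_regs {N : ℕ} (hN : GoodN N) {v : ℕ → Option _root_.Content} {c r0}
    (hv : ∀ a < N, v a = some (c a)) : ∀ s ≤ N,
    (OkTo N c r0 s → regs N 1 v (some r0) s = some { r0 with seen := Sn N c r0 s }) ∧
    (∀ r, regs N 1 v (some r0) s = some r → OkTo N c r0 s)
  | 0, _ => by
    refine ⟨fun _ => ?_, fun r _ i hi => by omega⟩
    rw [regs]
    congr 1
    ext k
    · rfl
    · rfl
    · rfl
    · rename_i k
      simp [Sn]
  | s + 1, hs => by
    obtain ⟨h1, h2⟩ := chk_regs hN hv s (by omega) (r0 := r0)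
    have key : OkTo N c r0 s → regs N 1 v (some r0) (s + 1) = open Classical in
        (if chkOk (posOf N (hd N 1 s)) (decide (s + 1 = N)) { r0 with seen := Sn N c r0 s }
          (c (hd N 1 s)) then some { r0 with seen := Sn N c r0 (s + 1) } else none) := by
      intro h3
      rw [regs, hv _ (hd_lt (by omega)), h1 h3, Option.bind_some, Option.bind_some, instr_one hN,
        step_chk]
      split_ifs with h4
      · simp only [Option.map_some]
        congr 2
        funext k
        rw [Bool.eq_iff_iff, Bool.or_eq_true, Sn_iff, Sn_iff, or_assoc]
        apply or_congr Iff.rfl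
        constructor
        · rintro (⟨i, hi, h⟩ | h)
          · exact ⟨i, by omega, h⟩
          · exact ⟨s, by omega, h⟩
        · rintro ⟨i, hi, h⟩
          rcases Nat.lt_succ_iff_lt_or_eq.1 hi with h5 | h5
          · exact .inl ⟨i, h5, h⟩
          · exact .inr (h5 ▸ h)
      · rfl
    constructor
    · intro h3
      rw [key (fun i hi => h3 i (by omega)), if_pos (h3 s (by omega))]
    · intro r hr
      have h3 : OkTo N c r0 s := by
        have hr' := hr
        rw [regs, hv _ (hd_lt (by omega)), Option.bind_some, Option.bind_eq_some_iff] at hr'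
        obtain ⟨r1, hr1, _⟩ := hr'
        exact h2 r1 hr1
      rw [key h3] at hr
      intro i hi
      rcases Nat.lt_succ_iff_lt_or_eq.1 hi with h5 | h5
      · exact h3 i h5
      · subst h5
        by_contra h6
        rw [if_neg h6] at hr
        cases hr

/-- global form of the check -/
structure OkG (N : ℕ) (c : ℕ → _root_.Content) (r0 : Reg) : Prop where
  cp : ∀ a < N, (c a).pres = r0.cp
  uniq : ∀ k, ∀ a < N, ∀ a' < N, (c a).tok k = true → (c a').tok k = true → a = a'
  seen : ∀ k, ∀ a < N, (c a).tok k = true → r0.seen k = false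
  lt : ∀ d, ∀ a < N, (c a).tok (.I d) = true → a < cY
  ex : ∀ k, r0.seen k = true ∨ ∃ a < N, (c a).tok k = true

theorem okTo_iff {N : ℕ} (hN : 0 < N) {c r0} : OkTo N c r0 N ↔ OkG N c r0 := by
  constructor
  · intro h
    have h' : ∀ a < N, chkOk (posOf N a) (decide (hd N 1 a + 1 = N))
        { r0 with seen := Sn N c r0 (hd N 1 a) } (c a) := by
      intro a ha
      have := h (hd N 1 a) (hd_lt ha)
      rwa [hd_hd ha] at this
    have huniq : ∀ k, ∀ a < N, ∀ a' < N, (c a).tok k = true → (c a').tok k = true →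
        ¬ hd N 1 a < hd N 1 a' := by
      intro k a ha a' ha' h1 h2 h3
      have := (h' a' ha').2.1 k h2
      simp only at this
      rw [← Bool.not_eq_true, Sn_iff] at this
      exact this (.inr ⟨hd N 1 a, h3, by rwa [hd_hd ha]⟩)
    refine ⟨fun a ha => (h' a ha).1, ?_, ?_, ?_, ?_⟩
    · intro k a ha a' ha' h1 h2
      have h3 := huniq k a ha a' ha' h1 h2
      have h4 := huniq k a' ha' a ha h2 h1
      have h5 : hd N 1 a = hd N 1 a' := by omega
      rw [← hd_hd (e := 1) ha, h5, hd_hd ha']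
    · intro k a ha h1
      have := (h' a ha).2.1 k h1
      simp only at this
      rw [← Bool.not_eq_true, Sn_iff, not_or] at this
      simpa using this.1
    · intro d a ha h1
      exact (posOf_lt N a).1 ((h' a ha).2.2.1 d h1)
    · intro k
      have := (h' 0 hN).2.2.2 (by simp [hd]; omega) k
      simp only [Sn_iff] at this
      rcases this with (h1 | ⟨i, hi, h1⟩) | h1
      · exact .inl h1
      · exact .inr ⟨hd N 1 i, hd_lt (by have := hd_lt (e := 1) hN; omega), h1⟩
      · exact .inr ⟨0, hN, h1⟩
  · intro h i hi
    have hh := hd_lt (e := 1) hi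
    refine ⟨h.cp _ hh, ?_, ?_, ?_⟩
    · intro k hk
      simp only
      rw [← Bool.not_eq_true, Sn_iff, not_or]
      refine ⟨by simp [h.seen k _ hh hk], ?_⟩
      rintro ⟨i', hi', h1⟩
      have := h.uniq k _ hh _ (hd_lt (by omega)) hk h1
      have h3 := congrArg (hd N 1) this
      rw [hd_hd hi, hd_hd (by omega)] at h3
      omega
    · intro d hd'
      exact (posOf_lt _ _).2 (h.lt d _ hh hd')
    · intro hfin k
      rw [decide_eq_true_eq] at hfin
      simp only [Sn_iff]
      rcases h.ex k with h1 | ⟨a, ha, h1⟩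
      · exact .inl (.inl h1)
      · have : hd N 1 a < N := hd_lt ha
        by_cases h2 : hd N 1 a = i
        · right; rw [← h2, hd_hd ha]; exact h1
        · exact .inl (.inr ⟨hd N 1 a, by omega, by rwa [hd_hd ha]⟩)

theorem step_nop (pa ia fin r c) : step pa ia fin (.inl .nop) r c = some (r, c) := by
  simp [step, stepT]

theorem regs_none {N e v} : ∀ s, regs N e v none s = none
  | 0 => rfl
  | s + 1 => by
    rw [regs, regs_none s]
    cases v (hd N e s) <;> rfl

/-- the state of a block after start, check and nop -/
theorem chk_good {N : ℕ} (hN : GoodN N) {b : Blk} {c : ℕ → _root_.Content}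
    (hv : ∀ a < N, sv b a = some (c a)) (hok : OkG N c (mkR (b (N - 1)))) :
    ∃ r, ∀ a < N, ∀ d, brun N 2 N (brun N 1 N (brun N 0 N b)) a d =
      PB (hd N 3 0) (fun a => some (c a)) (some r) a d := by
  have hlen := hN.len
  set r0 := mkR (b (N - 1)) with hr0
  have h0 := start_run (N := N) b (N - 1) (by omega)
  rw [show N - 1 + 1 = N by omega] at h0
  have hto := (okTo_iff (show 0 < N by omega)).2 hok
  have hp1 : isPass (instr N 1) := by rw [instr_one hN]; trivial
  have hp2 : isPass (instr N 2) := by rw [instr_two hN]; trivial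
  have h1 := pass_end hp1 _ _ h0
  have h2 := pass_end hp2 _ _ h1
  have hr := chk_regs hN hv (r0 := r0)
  have hvn : ∀ a < N, vnew N 1 (sv b) (some r0) a = some (c a) := by
    intro a ha
    have hto' : OkTo N c r0 (hd N 1 a) := fun i hi => hto i (by have := hd_lt (e := 1) ha; omega)
    rw [vnew, hv a ha, (hr _ (hd_lt ha).le).1 hto', Option.bind_some, Option.bind_some,
      instr_one hN, step_chk, if_pos]
    · rfl
    · have := hto (hd N 1 a) (hd_lt ha)
      rwa [hd_hd ha] at this
  set v1 := vnew N 1 (sv b) (some r0) with hv1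
  set r1 : Reg := { r0 with seen := Sn N c r0 N }
  have hr1 : regs N 1 (sv b) (some r0) N = some r1 := (hr N le_rfl).1 hto
  have hrr : ∀ s ≤ N, regs N 2 v1 (some r1) s = some r1 := by
    intro s hs
    induction s with
    | zero => rfl
    | succ s ih =>
      rw [regs, hvn _ (hd_lt (by omega)), ih (by omega), Option.bind_some, Option.bind_some,
        instr_two hN, step_nop]
      rfl
  refine ⟨r1, fun a ha d => ?_⟩
  rw [h2 a ha d]
  simp only [PB]
  rw [hr1, hrr N le_rfl]
  have : vnew N 2 v1 (some r1) a = some (c a) := by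
    rw [vnew, hvn a ha, hrr _ (hd_lt ha).le, Option.bind_some, Option.bind_some, instr_two hN,
      step_nop]
    rfl
  rw [this]

theorem chk_bad {N : ℕ} (hN : GoodN N) {b : Blk}
    (h : ¬ ∃ c : ℕ → _root_.Content, (∀ a < N, sv b a = some (c a)) ∧ OkG N c (mkR (b (N - 1)))) :
    ∀ a < N, ∀ d, brun N 2 N (brun N 1 N (brun N 0 N b)) a d = none := by
  have hlen := hN.len
  set r0 := mkR (b (N - 1)) with hr0
  have h0 := start_run (N := N) b (N - 1) (by omega)
  rw [show N - 1 + 1 = N by omega] at h0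
  have hp1 : isPass (instr N 1) := by rw [instr_one hN]; trivial
  have hp2 : isPass (instr N 2) := by rw [instr_two hN]; trivial
  have h1 := pass_end hp1 _ _ h0
  have h2 := pass_end hp2 _ _ h1
  have hn : regs N 1 (sv b) (some r0) N = none := by
    by_contra hne
    obtain ⟨r, hr⟩ := Option.ne_none_iff_exists'.1 hne
    have hs := regs_some hr
    have hs' : ∀ a, ∃ c, a < N → sv b a = some c := by
      intro a
      by_cases ha : a < N
      · obtain ⟨c, hc⟩ := hs (hd N 1 a) (hd_lt ha)
        rw [hd_hd ha] at hc
        exact ⟨c, fun _ => hc⟩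
      · exact ⟨⟨fun _ => true, fun _ => true, fun _ => true, fun _ => true, fun _ => true⟩,
          fun h => absurd h ha⟩
    choose c hc using hs'
    exact h ⟨c, hc, (okTo_iff (by omega)).1 ((chk_regs hN hc N le_rfl).2 r hr)⟩
  intro a ha d
  rw [h2 a ha d, hn]
  simp only [PB]
  have : vnew N 2 (vnew N 1 (sv b) (some r0)) none a = none := by
    rw [vnew, regs_none]
    cases vnew N 1 (sv b) (some r0) a <;> rfl
  rw [this]
  simp

/-! ### valid blocks -/

noncomputable def encN (N A e w : ℕ) (y : Yt) (a : ℕ) : Letter :=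
  ⟨decide (a = A), decide (a = e), decide (a = w), decide (a = code y)⟩

structure VB (N : ℕ) (b : Blk) (A e w : ℕ) (P : Dir → Option Yt) : Prop where
  hA : A < N
  he : e < N
  hw : w < N
  ne : ∃ d y, P d = some y
  eq : ∀ a < N, ∀ d, b a d = (P d).map fun y => .letter (encN N A e w y a)

noncomputable def baseC (A e w : ℕ) (P : Dir → Option Yt) (a : ℕ) : _root_.Content where
  pres d := (P d).isSome
  tok k := match k with
    | .A => decide (a = A)
    | .E => decide (a = e)
    | .W => decide (a = w)
    | .I d => (P d).any fun y => decide (a = code y)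
  ot k := match k with
    | .A _ => decide (a = A)
    | .E => decide (a = e)
    | .W => decide (a = w)
  oP _ := false
  oY _ := false

theorem VB.sv {N b A e w P} (h : VB N b A e w P) {a : ℕ} (ha : a < N) :
    sv b a = some (baseC A e w P a) := by
  have hex : ∃ l, StartOk (b a) l := by
    obtain ⟨d, y, hd⟩ := h.ne
    refine ⟨encN N A e w y a, ⟨d, _, by rw [h.eq a ha, hd]; rfl⟩, ?_⟩
    intro d' y' hy'
    rw [h.eq a ha, Option.map_eq_some_iff] at hy'
    obtain ⟨y2, hy2, rfl⟩ := hy'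
    exact ⟨decide (a = code y2), rfl⟩
  rw [_root_.sv, dif_pos hex]
  have hl := hex.choose_spec
  set l := hex.choose
  obtain ⟨d, y, hd⟩ := h.ne
  obtain ⟨bb, hb⟩ := hl.2 d (.letter (encN N A e w y a)) (by rw [h.eq a ha, hd]; rfl)
  simp only [Yt.letter.injEq, encN, Letter.mk.injEq] at hb
  obtain ⟨hb1, hb2, hb3, hb4⟩ := hb
  congr 1
  simp only [mkC, baseC, ← hb1, ← hb2, ← hb3]
  congr 1
  · funext d; rw [h.eq a ha]; simp
  · funext k
    cases k with
    | I d =>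
      simp only
      rw [h.eq a ha]
      cases P d with
      | none => simp
      | some y => simp [encN]
    | _ => rfl

theorem VB.okG {N b A e w P} (hN : GoodN N) (h : VB N b A e w P) :
    OkG N (baseC A e w P) (mkR (b (N - 1))) := by
  have hcy := hN.cy
  have hbs : ∀ d, (b (N - 1) d).isSome = (P d).isSome := by
    intro d; rw [h.eq _ (by omega)]; simp
  refine ⟨?_, ?_, ?_, ?_, ?_⟩
  · intro a ha; funext d; simp [baseC, mkR, hbs]
  · intro k a ha a' ha' h1 h2
    cases k with
    | I d =>
      simp only [baseC] at h1 h2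
      cases hP : P d with
      | none => simp [hP] at h1
      | some y => simp [hP] at h1 h2; omega
    | _ => simp [baseC] at h1 h2; omega
  · intro k a ha h1
    cases k with
    | I d =>
      simp only [baseC] at h1
      simp only [mkR, hbs]
      cases hP : P d with
      | none => simp [hP] at h1
      | some y => simp
    | _ => simp [mkR]
  · intro d a ha h1
    simp only [baseC] at h1
    cases hP : P d with
    | none => simp [hP] at h1
    | some y =>
      simp [hP] at h1
      rw [h1]; exact code_lt y
  · intro k
    cases k with
    | A => right; exact ⟨A, h.hA, by simp [baseC]⟩
    | E => right; exact ⟨e, h.he, by simp [baseC]⟩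
    | W => right; exact ⟨w, h.hw, by simp [baseC]⟩
    | I d =>
      simp only [mkR, hbs]
      cases hP : P d with
      | none => simp
      | some y =>
        right
        exact ⟨code y, by have := code_lt y; omega, by simp [baseC, hP]⟩

theorem OkG.vb {N b} (hN : GoodN N) {c : ℕ → _root_.Content} (hv : ∀ a < N, sv b a = some (c a))
    (h : OkG N c (mkR (b (N - 1)))) : ∃ A e w P, VB N b A e w P := by
  have hcy := hN.cy
  have hl : ∀ a < N, ∃ l, StartOk (b a) l ∧ c a = mkC (b a) l := by
    intro a ha
    have := hv a ha
    rw [sv] at this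
    split_ifs at this with h1
    exact ⟨_, h1.choose_spec, (Option.some.inj this).symm⟩
  have : Nonempty Letter := ⟨⟨true, true, true, true⟩⟩
  have : Nonempty Yt := ⟨.letter ⟨true, true, true, true⟩⟩
  choose! l hl1 hl2 using hl
  have hex : ∀ k, (mkR (b (N - 1))).seen k = false → ∃ x < N, ∀ a < N, (c a).tok k = decide (a = x) := by
    intro k hk
    rcases h.ex k with h1 | ⟨x, hx, h1⟩
    · rw [hk] at h1; cases h1
    · refine ⟨x, hx, fun a ha => ?_⟩
      rw [Bool.eq_iff_iff, decide_eq_true_eq]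
      exact ⟨fun h2 => h.uniq k a ha x hx h2 h1, fun h2 => h2 ▸ h1⟩
  obtain ⟨A, hA, hA'⟩ := hex .A rfl
  obtain ⟨e, he, he'⟩ := hex .E rfl
  obtain ⟨w, hw, hw'⟩ := hex .W rfl
  have hpres : ∀ a < N, ∀ d, (b a d).isSome = (b (N - 1) d).isSome := by
    intro a ha d
    have := congrFun (h.cp a ha) d
    rw [hl2 a ha] at this
    exact this
  have hI : ∀ d, (b (N - 1) d).isSome = true → ∃ y, ∀ a < N, (c a).tok (.I d) = decide (a = code y) := by
    intro d hd
    obtain ⟨x, hx, hx'⟩ := hex (.I d) (by simp [mkR, hd])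
    obtain ⟨y, hy⟩ := code_surj x (h.lt d x hx (by rw [hx' x hx]; simp))
    exact ⟨y, by rw [hy]; exact hx'⟩
  choose! y hy using hI
  refine ⟨A, e, w, fun d => if (b (N - 1) d).isSome = true then some (y d) else none,
    hA, he, hw, ?_, ?_⟩
  · obtain ⟨d, y', h1⟩ := (hl1 (N - 1) (by omega)).1
    exact ⟨d, y d, by simp [h1]⟩
  · intro a ha d
    split_ifs with h1
    · have h2 := hpres a ha d
      rw [h1] at h2
      obtain ⟨y', hy'⟩ := Option.isSome_iff_exists.1 h2
      obtain ⟨bb, hbb⟩ := (hl1 a ha).2 d y' hy'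
      have hA2 := hA' a ha
      have he2 := he' a ha
      have hw2 := hw' a ha
      have hI2 := hy d h1 a ha
      rw [hl2 a ha] at hA2 he2 hw2 hI2
      simp only [mkC] at hA2 he2 hw2 hI2
      rw [hy', hbb] at hI2 ⊢
      simp only [Option.some.injEq, Yt.letter.injEq, Letter.mk.injEq, true_and] at hI2
      simp only [Option.map_some, encN, hA2, he2, hw2]
      rw [← hI2]
      simp
    · have h2 := hpres a ha d
      rw [Bool.not_eq_true] at h1
      rw [h1] at h2
      simpa using h2

theorem start3_good {N : ℕ} (hN : GoodN N) {b : Blk} {A e w P} (h : VB N b A e w P) :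
    ∃ r, ∀ a < N, ∀ d, brun N 2 N (brun N 1 N (brun N 0 N b)) a d =
      PB (hd N 3 0) (fun a => some (baseC A e w P a)) (some r) a d :=
  chk_good hN (fun a ha => h.sv ha) (h.okG hN)

theorem start3_bad {N : ℕ} (hN : GoodN N) {b : Blk} (h : ¬ ∃ A e w P, VB N b A e w P) :
    ∀ a < N, ∀ d, brun N 2 N (brun N 1 N (brun N 0 N b)) a d = none :=
  chk_bad hN (fun ⟨c, h1, h2⟩ => h (h2.vb hN h1))


set_option linter.unusedSectionVars false
set_option linter.unusedSimpArgs false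
set_option linter.unusedVariables false

/-! ### total execution of the program -/

abbrev St := Reg × (ℕ → _root_.Content)

noncomputable def treg (N p : ℕ) (i : Instr) (st : St) : ℕ → Reg
  | 0 => st.1
  | s + 1 => (stepT (posOf N (hd N p s)) (instr N (hd N p s)) (decide (s + 1 = N)) i
      (treg N p i st s) (st.2 (hd N p s))).1

noncomputable def sw (N p : ℕ) (i : Instr) (st : St) : St :=
  (treg N p i st N, fun a => (stepT (posOf N a) (instr N a) (decide (hd N p a + 1 = N)) i
      (treg N p i st (hd N p a)) (st.2 a)).2)

theorem regs_tot {N e : ℕ} (hc : instr N e ≠ .inl .chk) {v : ℕ → Option _root_.Content} {st : St}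
    (hv : ∀ a < N, v a = some (st.2 a)) : ∀ s ≤ N,
    regs N e v (some st.1) s = some (treg N e (instr N e) st s)
  | 0, _ => rfl
  | s + 1, hs => by
    rw [regs, hv _ (hd_lt (by omega)), regs_tot hc hv s (by omega), Option.bind_some,
      Option.bind_some, step, if_neg hc]
    rfl

theorem pass_tot {N e : ℕ} (hp : isPass (instr N e)) (hc : instr N e ≠ .inl .chk) {st : St} {b : Blk}
    (hb : ∀ a < N, ∀ d, b a d = PB (hd N e 0) (fun a => some (st.2 a)) (some st.1) a d) :
    ∀ a < N, ∀ d, brun N e N b a d = PB (hd N (e + 1) 0)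
      (fun a => some ((sw N e (instr N e) st).2 a)) (some (sw N e (instr N e) st).1) a d := by
  intro a ha d
  have hr := regs_tot hc (v := fun a => some (st.2 a)) (st := st) (fun _ _ => rfl)
  rw [pass_end hp _ _ hb a ha d]
  simp only [PB]
  rw [hr N le_rfl]
  have : vnew N e (fun a => some (st.2 a)) (some st.1) a = some ((sw N e (instr N e) st).2 a) := by
    rw [vnew, hr _ (hd_lt ha).le, Option.bind_some, Option.bind_some, step, if_neg hc]
    rfl
  rw [this]
  rfl

theorem hd_par {N e p : ℕ} (h : e % 2 = p % 2) : hd N e = hd N p := by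
  funext s; simp only [hd, h]

theorem sw_par {N e p : ℕ} (h : e % 2 = p % 2) (i st) : sw N e i st = sw N p i st := by
  have : treg N e i st = treg N p i st := by
    funext s
    induction s with
    | zero => rfl
    | succ s ih => rw [treg, treg, ih, hd_par h]
  simp only [sw, this, hd_par h]

noncomputable def exec (N : ℕ) : PP → St → St
  | [], st => st
  | lr :: l, st => exec N l (sw N 0 lr.2 (sw N 1 lr.1 st))

theorem exec_append (N : ℕ) : ∀ (l l' : PP) (st : St), exec N (l ++ l') st = exec N l' (exec N l st)
  | [], l', st => rfl
  | lr :: l, l', st => by rw [List.cons_append, exec, exec, exec_append N l l']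

/-! #### single instructions -/

theorem sw_nop (N p st) : sw N p (.inl .nop) st = st := by
  have : ∀ s, treg N p (.inl .nop) st s = st.1 := by
    intro s
    induction s with
    | zero => rfl
    | succ s ih => rw [treg, ih]; rfl
  simp only [sw, this]
  rfl

theorem sw_reset {N p st} (hN : 0 < N) :
    sw N p (.inl .reset) st = ({ st.1 with phi := true, psi := false }, st.2) := by
  have : ∀ s, treg N p (.inl .reset) st (s + 1) = { st.1 with phi := true, psi := false } := by
    intro s
    induction s with
    | zero => rfl
    | succ s ih => rw [treg, ih]; rfl
  obtain ⟨n, rfl⟩ : ∃ n, N = n + 1 := ⟨N - 1, by omega⟩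
  simp only [sw, this]
  rfl

def isTest : Instr → Prop
  | .inl (.test _) => True
  | .inl (.testT _ _) => True
  | .inr _ => True
  | _ => False

noncomputable def tv : Instr → Pos → Instr → _root_.Content → Bool
  | .inl (.test q), pa, _, c => locTest q pa c
  | .inl (.testT b f), pa, _, c => locTestT b f pa c
  | .inr (k, j, v), _, ia, c => locBit k j v ia c
  | _, _, _, _ => true

theorem stepT_test {i : Instr} (h : isTest i) (pa ia fin r c) :
    stepT pa ia fin i r c = ({ r with phi := r.phi && tv i pa ia c }, c) := by
  rcases i with (_ | _ | _ | _ | _ | _ | _ | _ | _ | _ | _ | _) | _ <;>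
    first | rfl | exact absurd h (by simp [isTest])

open Classical in
theorem sw_test {i : Instr} (h : isTest i) (N p st) : sw N p i st =
    ({ st.1 with phi := st.1.phi && decide (∀ a < N, tv i (posOf N a) (instr N a) (st.2 a) = true) },
      st.2) := by
  have key : ∀ s, treg N p i st s = { st.1 with
      phi := st.1.phi && decide (∀ j < s, tv i (posOf N (hd N p j)) (instr N (hd N p j))
        (st.2 (hd N p j)) = true) } := by
    intro s
    induction s with
    | zero => simp [treg]
    | succ s ih =>
      rw [treg, ih, stepT_test h]
      simp only [Reg.mk.injEq, and_true]
      rw [Bool.eq_iff_iff]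
      simp only [Bool.and_eq_true, decide_eq_true_eq, and_assoc, and_congr_right_iff]
      intro _
      constructor
      · rintro ⟨h1, h2⟩ j hj
        rcases Nat.lt_succ_iff_lt_or_eq.1 hj with h3 | h3
        · exact h1 j h3
        · exact h3 ▸ h2
      · intro h1
        exact ⟨fun j hj => h1 j (by omega), h1 s (by omega)⟩
  simp only [sw, stepT_test h, key]
  have : (∀ j < N, tv i (posOf N (hd N p j)) (instr N (hd N p j)) (st.2 (hd N p j)) = true) ↔
      ∀ a < N, tv i (posOf N a) (instr N a) (st.2 a) = true := by
    constructor
    · intro h1 a ha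
      have := h1 (hd N p a) (hd_lt ha)
      rwa [hd_hd ha] at this
    · intro h1 j hj
      exact h1 _ (hd_lt hj)
  simp only [this]

noncomputable def oneI (i : Instr) : Instr × Instr := (.inl .nop, i)

open Classical in
theorem exec_tests (N : ℕ) : ∀ (ts : List Instr), (∀ i ∈ ts, isTest i) → ∀ st : St,
    exec N (ts.map oneI) st = 
      ({ st.1 with
        phi := st.1.phi && decide (∀ i ∈ ts, ∀ a < N, tv i (posOf N a) (instr N a) (st.2 a) = true) },
        st.2)
  | [], _, st => by simp [exec]
  | i :: ts, h, st => by
    rw [List.map_cons, exec, oneI]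
    simp only
    rw [sw_nop, sw_test (h i (by simp)), exec_tests N ts (fun j hj => h j (by simp [hj]))]
    simp only [List.forall_mem_cons, Bool.decide_and, Bool.and_assoc]

theorem sw_emit_false {N p f st} (h : st.1.phi = false) : sw N p (.inl (.emit f)) st = st := by
  have : ∀ s, treg N p (.inl (.emit f)) st s = st.1 := by
    intro s
    induction s with
    | zero => rfl
    | succ s ih => rw [treg, ih]; rfl
  simp only [sw, this, stepT, h]
  rfl

theorem sw_emit_true {N p f st} (h : st.1.phi = true) : sw N p (.inl (.emit f)) st =
    (st.1, fun a => { st.2 a with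
        oP := fun d => (st.2 a).oP d || (f d).isSome
        oY := fun d => match f d with
          | some y => decide ((posOf N a).1.val = code y)
          | none => (st.2 a).oY d }) := by
  have : ∀ s, treg N p (.inl (.emit f)) st s = st.1 := by
    intro s
    induction s with
    | zero => rfl
    | succ s ih => rw [treg, ih]; rfl
  simp only [sw, this, stepT, h, if_true]
  try congr 1

theorem sw_shift_false {N p k st} (h : st.1.phi = false) : sw N p (.inl (.shift k)) st = st := by
  have : ∀ s, treg N p (.inl (.shift k)) st s = st.1 := by
    intro s
    induction s with
    | zero => rfl
    | succ s ih => rw [treg, ih]; simp [stepT, h]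
  simp only [sw, this, stepT, h]
  rfl

theorem sw_drop_false {N p k st} (h : st.1.phi = false) : sw N p (.inl (.drop k)) st = st := by
  have : ∀ s, treg N p (.inl (.drop k)) st s = st.1 := by
    intro s
    induction s with
    | zero => rfl
    | succ s ih => rw [treg, ih]; rfl
  simp only [sw, this, stepT, h]
  simp

theorem sw_shift_true {N p k st} (h : st.1.phi = true) : sw N p (.inl (.shift k)) st =
    ({ st.1 with psi := if N = 0 then st.1.psi else (st.2 (hd N p (N - 1))).ot k },
      fun a => { st.2 a with
        ot := Function.update (st.2 a).ot k
          (if hd N p a = 0 then st.1.psi else (st.2 (hd N p (hd N p a - 1))).ot k) }) := by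
  have : ∀ s, treg N p (.inl (.shift k)) st s =
      { st.1 with psi := if s = 0 then st.1.psi else (st.2 (hd N p (s - 1))).ot k } := by
    intro s
    induction s with
    | zero => rfl
    | succ s ih => rw [treg, ih]; simp [stepT, h]
  simp only [sw, this, stepT, h, if_true]

theorem sw_drop_true {N p k st} (h : st.1.phi = true) : sw N p (.inl (.drop k)) st =
    (st.1, fun a => if hd N p a + 1 = N then
      { st.2 a with ot := Function.update (st.2 a).ot k ((st.2 a).ot k || st.1.psi) }
      else st.2 a) := by
  have : ∀ s, treg N p (.inl (.drop k)) st s = st.1 := by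
    intro s
    induction s with
    | zero => rfl
    | succ s ih => rw [treg, ih]; rfl
  simp only [sw, this, stepT, h, true_and, decide_eq_true_eq]

/-! #### block contents during the program -/

noncomputable def fc (A e w : ℕ) (P : Dir → Option Yt) (x : OTok → ℕ) (o : Dir → Option Yt) (a : ℕ) :
    _root_.Content :=
  { baseC A e w P a with
    ot := fun k => decide (a = x k)
    oP := fun d => (o d).isSome
    oY := fun d => (o d).any fun y => decide (a = code y) }

def x0 (A e w : ℕ) : OTok → ℕ
  | .A _ => A
  | .E => e
  | .W => w

theorem baseC_eq_fc (A e w P a) : baseC A e w P a = fc A e w P (x0 A e w) (fun _ => none) a := by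
  ext k
  · rfl
  · rfl
  · cases k <;> rfl
  · rfl
  · rfl

def up (N x : ℕ) : ℕ := if x + 1 = N then 0 else x + 1
def dn (N x : ℕ) : ℕ := if x = 0 then N - 1 else x - 1

theorem up_lt {N x : ℕ} (h : x < N) : up N x < N := by unfold up; split_ifs <;> omega
theorem dn_lt {N x : ℕ} (h : x < N) : dn N x < N := by unfold dn; split_ifs <;> omega

/-- state predicate -/
def Sx (N A e w : ℕ) (P : Dir → Option Yt) (x : OTok → ℕ) (o : Dir → Option Yt) (st : St) : Prop :=
  ∀ a < N, st.2 a = fc A e w P x o a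

theorem rotR_false {N k st} (h : st.1.phi = false) : exec N (rotR k) st = st := by
  simp only [rotR, exec, sw_nop, sw_shift_false h, sw_drop_false h]

theorem rotL_false {N k st} (h : st.1.phi = false) : exec N (rotL k) st = st := by
  simp only [rotL, exec, sw_nop, sw_shift_false h, sw_drop_false h]

theorem fc_upd (A e w P x o a k) (m : ℕ) (bb : Bool) (h : bb = decide (a = m)) :
    { fc A e w P x o a with ot := Function.update (fc A e w P x o a).ot k bb } =
      fc A e w P (Function.update x k m) o a := by
  simp only [fc]
  congr 1
  funext k'
  by_cases hk : k' = k
  · subst hk; simp [h]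
  · simp [Function.update_of_ne hk]

theorem rotR_true {N A e w P x o k} {st : St} (hN : 1 < N) (h : st.1.phi = true)
    (hpsi : st.1.psi = false) (hx : x k < N) (hs : Sx N A e w P x o st) :
    Sx N A e w P (Function.update x k (up N (x k))) o (exec N (rotR k) st) := by
  intro a ha
  simp only [rotR, exec, sw_nop]
  rw [sw_shift_true h]
  rw [sw_drop_true (by exact h)]
  have h0 : hd N 0 = fun s => s := by funext s; simp [hd]
  have h1 : hd N 1 = fun s => N - 1 - s := by funext s; simp [hd]
  simp only [h0, h1, if_neg (show N ≠ 0 by omega), hpsi, hs a ha, hs (N - 1) (by omega)]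
  have hot : ∀ a', (fc A e w P x o a').ot k = decide (a' = x k) := fun _ => rfl
  by_cases h2 : a = 0
  · subst h2
    rw [if_pos (by omega)]
    simp only [if_true, Function.update_self, Function.update_idem, Bool.false_or, hot]
    apply fc_upd
    rw [Bool.eq_iff_iff, decide_eq_true_eq, decide_eq_true_eq]
    unfold up; split_ifs  <;> constructor <;> intro hq <;> first | omega | exact hq.elim
  · rw [if_neg (by omega), if_neg h2, hs (a - 1) (by omega), hot]
    apply fc_upd
    rw [Bool.eq_iff_iff, decide_eq_true_eq, decide_eq_true_eq]
    unfold up; split_ifs <;> omega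

theorem rotL_true {N A e w P x o k} {st : St} (hN : 1 < N) (h : st.1.phi = true)
    (hpsi : st.1.psi = false) (hx : x k < N) (hs : Sx N A e w P x o st) :
    Sx N A e w P (Function.update x k (dn N (x k))) o (exec N (rotL k) st) := by
  intro a ha
  simp only [rotL, exec]
  rw [sw_shift_true h]
  rw [sw_drop_true (by exact h)]
  have h0 : hd N 0 = fun s => s := by funext s; simp [hd]
  have h1 : hd N 1 = fun s => N - 1 - s := by funext s; simp [hd]
  simp only [h0, h1, if_neg (show N ≠ 0 by omega), hpsi, hs a ha,
    show N - 1 - (N - 1) = 0 by omega, hs 0 (by omega)]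
  have hot : ∀ a', (fc A e w P x o a').ot k = decide (a' = x k) := fun _ => rfl
  by_cases h2 : a + 1 = N
  · rw [if_pos h2, if_pos (by omega)]
    simp only [if_true, Function.update_self, Function.update_idem, Bool.false_or, hot]
    apply fc_upd
    rw [Bool.eq_iff_iff, decide_eq_true_eq, decide_eq_true_eq]
    unfold dn; split_ifs <;> omega
  · rw [if_neg h2, if_neg (by omega), hs (N - 1 - (N - 1 - a - 1)) (by omega), hot]
    apply fc_upd
    rw [Bool.eq_iff_iff, decide_eq_true_eq, decide_eq_true_eq]
    unfold dn; split_ifs <;> omega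

open Classical in
theorem reset_tests {N A e w P x o} {st : St} (hN : 0 < N) (hs : Sx N A e w P x o st)
    (ts : List Instr) (hts : ∀ i ∈ ts, isTest i) (l : PP) :
    ∃ st' : St, exec N (one .reset :: (ts.map oneI ++ l)) st = exec N l st' ∧
      Sx N A e w P x o st' ∧ st'.1.psi = false ∧ st'.1.phi = decide (∀ i ∈ ts, ∀ a < N,
        tv i (posOf N a) (instr N a) (fc A e w P x o a) = true) := by
  rw [exec, one]
  simp only
  rw [sw_nop, sw_reset hN, exec_append, exec_tests N ts hts]
  refine ⟨_, rfl, hs, rfl, ?_⟩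
  simp only [Bool.true_and, decide_eq_decide]
  constructor
  · intro h i hi a ha; rw [← hs a ha]; exact h i hi a ha
  · intro h i hi a ha; rw [hs a ha]; exact h i hi a ha

open Classical in
theorem segR {N A e w P x o} {st : St} (hN : 1 < N) (hs : Sx N A e w P x o st)
    (ts : List Instr) (hts : ∀ i ∈ ts, isTest i) {k : OTok} (hx : x k < N) (C : Prop)
    (hC : C ↔ ∀ i ∈ ts, ∀ a < N, tv i (posOf N a) (instr N a) (fc A e w P x o a) = true) :
    ∃ x', Sx N A e w P x' o (exec N (one .reset :: (ts.map oneI ++ rotR k)) st) ∧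
      x' = if C then Function.update x k (up N (x k)) else x := by
  refine ⟨_, ?_, rfl⟩
  obtain ⟨st', h1, h2, h3, h4⟩ := reset_tests (by omega) hs ts hts (rotR k)
  rw [h1]
  split_ifs with h
  · exact rotR_true hN (by rw [h4]; simpa using hC.1 h) h3 hx h2
  · rw [rotR_false]
    · exact h2
    · rw [h4, decide_eq_false_iff_not]; exact mt hC.2 h

open Classical in
theorem segL {N A e w P x o} {st : St} (hN : 1 < N) (hs : Sx N A e w P x o st)
    (ts : List Instr) (hts : ∀ i ∈ ts, isTest i) {k : OTok} (hx : x k < N) (C : Prop)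
    (hC : C ↔ ∀ i ∈ ts, ∀ a < N, tv i (posOf N a) (instr N a) (fc A e w P x o a) = true) :
    ∃ x', Sx N A e w P x' o (exec N (one .reset :: (ts.map oneI ++ rotL k)) st) ∧
      x' = if C then Function.update x k (dn N (x k)) else x := by
  refine ⟨_, ?_, rfl⟩
  obtain ⟨st', h1, h2, h3, h4⟩ := reset_tests (by omega) hs ts hts (rotL k)
  rw [h1]
  split_ifs with h
  · exact rotL_true hN (by rw [h4]; simpa using hC.1 h) h3 hx h2
  · rw [rotL_false]
    · exact h2
    · rw [h4, decide_eq_false_iff_not]; exact mt hC.2 h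

/-- next (slot, head position) -/
def nxt (N e w : ℕ) : ℕ × ℕ :=
  if e % 2 = 1 then (if w = 0 then (up N e, w) else (e, w - 1))
  else (if w + 1 = N then (up N e, w) else (e, w + 1))

def xf (N A e w : ℕ) : OTok → ℕ
  | .A .R => up N A
  | .A .L => dn N A
  | .A .C => A
  | .E => (nxt N e w).1
  | .W => (nxt N e w).2

theorem testT_iff {N A e w P x o} (he : e < N) (hw : w < N) (b f : Bool) :
    (∀ i ∈ [(.inl (.testT b f) : Instr)], ∀ a < N,
      tv i (posOf N a) (instr N a) (fc A e w P x o a) = true) ↔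
    ((e % 2 = 1 ↔ b = true) ∧ ((if b = true then w = 0 else w + 1 = N) ↔ f = true)) := by
  simp only [List.mem_singleton, forall_eq, tv, locTestT, decide_eq_true_eq, fc, baseC]
  have h1 : ∀ a, ((posOf N a).odd = b ↔ (a % 2 = 1 ↔ b = true)) := by
    intro a; rw [Bool.eq_iff_iff, posOf_odd]
  have h2 : ∀ a, ((if b = true then (posOf N a).isFst else (posOf N a).isLst) = f ↔
      ((if b = true then a = 0 else a + 1 = N) ↔ f = true)) := by
    intro a
    rw [Bool.eq_iff_iff]
    cases b
    · simp [posOf_isLst]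
    · simp [posOf_isFst]
  constructor
  · intro h
    exact ⟨(h1 e).1 ((h e he).1 rfl), (h2 w).1 ((h w hw).2 rfl)⟩
  · intro h a ha
    refine ⟨?_, ?_⟩
    · rintro rfl; exact (h1 a).2 h.1
    · rintro rfl; exact (h2 a).2 h.2

theorem exec_tag {N A e w P o} {st : St} (hN : 1 < N) (hA : A < N) (he : e < N) (hw : w < N)
    (hs : Sx N A e w P (x0 A e w) o st) : Sx N A e w P (xf N A e w) o (exec N tagProg st) := by
  classical
  simp only [tagProg, exec_append]
  obtain ⟨x1, s1, hx1⟩ := segR hN hs [] (by simp) (k := .A .R) hA True (by simp)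
  rw [if_pos trivial] at hx1
  obtain ⟨x2, s2, hx2⟩ := segL hN s1 [] (by simp) (k := .A .L) (by subst hx1; simpa [x0] using hA) True (by simp)
  rw [if_pos trivial] at hx2
  have hx2A : x2 (.A .R) = up N A ∧ x2 (.A .L) = dn N A ∧ x2 (.A .C) = A ∧ x2 .E = e ∧ x2 .W = w := by
    subst hx2 hx1; simp [x0]
  obtain ⟨y1, y2, y3, y4, y5⟩ := hx2A
  obtain ⟨x3, s3, hx3⟩ := segR hN s2 [.inl (.testT false false)] (by simp [isTest]) (k := .W) (by rw [y5]; exact hw)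
    _ (testT_iff he hw false false).symm
  obtain ⟨x4, s4, hx4⟩ := segL hN s3 [.inl (.testT true false)] (by simp [isTest]) (k := .W)
    (by rw [hx3]; split_ifs <;> simp only [Function.update_self, y5] <;> first | exact up_lt hw | exact hw)
    _ (testT_iff he hw true false).symm
  have hx4A : x4 (.A .R) = up N A ∧ x4 (.A .L) = dn N A ∧ x4 (.A .C) = A ∧ x4 .E = e ∧
      x4 .W = (nxt N e w).2 := by
    subst hx4 hx3
    unfold nxt up dn
    by_cases h1 : e % 2 = 1
    · by_cases h2 : w = 0
      · simp [h1, h2, y1, y2, y3, y4, y5, up, dn]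
      · simp [h1, h2, y1, y2, y3, y4, y5, up, dn]
    · by_cases h2 : w + 1 = N
      · simp [h1, h2, y1, y2, y3, y4, y5, up, dn]
      · simp [h1, h2, y1, y2, y3, y4, y5, up, dn]
  clear hx4 s3 hx3
  obtain ⟨z1, z2, z3, z4, z5⟩ := hx4A
  obtain ⟨x5, s5, hx5⟩ := segR hN s4 [.inl (.testT false true)] (by simp [isTest]) (k := .E) (by rw [z4]; exact he)
    _ (testT_iff he hw false true).symm
  obtain ⟨x6, s6, hx6⟩ := segR hN s5 [.inl (.testT true true)] (by simp [isTest]) (k := .E)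
    (by rw [hx5]; split_ifs <;> simp only [Function.update_self, z4] <;> first | exact up_lt he | exact he)
    _ (testT_iff he hw true true).symm
  have : x6 = xf N A e w := by
    subst hx6 hx5
    funext k
    by_cases h1 : e % 2 = 1
    · by_cases h2 : w = 0
      · rcases k with (_ | _ | _) | _ | _ <;> simp [h1, h2, xf, z1, z2, z3, z4, z5, nxt]
      · rcases k with (_ | _ | _) | _ | _ <;> simp [h1, h2, xf, z1, z2, z3, z4, z5, nxt]
    · by_cases h2 : w + 1 = N
      · rcases k with (_ | _ | _) | _ | _ <;> simp [h1, h2, xf, z1, z2, z3, z4, z5, nxt]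
      · rcases k with (_ | _ | _) | _ | _ <;> simp [h1, h2, xf, z1, z2, z3, z4, z5, nxt]
  rw [this] at s6
  exact s6


set_option linter.unusedSectionVars false
set_option linter.unusedSimpArgs false
set_option linter.unusedVariables false

/-! #### lookup of the local rule -/

noncomputable def kts (k : Kap) : List Instr :=
  .inl (.test k.q) :: (List.finRange nB).flatMap fun j =>
    [.inr (false, j, bitc k.ia j), .inr (true, j, bitc k.ie j)]

theorem kapProg_eq (k : Kap) :
    kapProg k = one .reset :: ((kts k).map oneI ++ [one (.emit (GG k))]) := by
  simp only [kapProg, kts, bitProg, List.map_cons, List.map_flatMap]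
  rfl

theorem kts_isTest (k : Kap) : ∀ i ∈ kts k, isTest i := by
  intro i hi
  simp only [kts, List.mem_cons, List.mem_flatMap, List.mem_singleton, List.not_mem_nil, or_false] at hi
  rcases hi with rfl | ⟨j, -, rfl | rfl⟩ <;> trivial

theorem kts_iff {N A e w P x o} (hN : GoodN N) (hA : A < N) (he : e < N) (hw : w < N) (k : Kap) :
    (∀ i ∈ kts k, ∀ a < N, tv i (posOf N a) (instr N a) (fc A e w P x o a) = true) ↔
      k = kof N A e w P := by
  have hcy := hN.cy
  have hb : (∀ i ∈ kts k, ∀ a < N, tv i (posOf N a) (instr N a) (fc A e w P x o a) = true) ↔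
      (∀ a < N, locTest k.q (posOf N a) (fc A e w P x o a) = true) ∧ k.ia = instr N A ∧
        k.ie = instr N e := by
    rw [kts, List.forall_mem_cons]
    apply and_congr_right
    intro _
    have : (∀ i ∈ (List.finRange nB).flatMap fun j =>
        [(.inr (false, j, bitc k.ia j) : Instr), .inr (true, j, bitc k.ie j)],
        ∀ a < N, tv i (posOf N a) (instr N a) (fc A e w P x o a) = true) ↔
        ∀ j, bitc (instr N A) j = bitc k.ia j ∧ bitc (instr N e) j = bitc k.ie j := by
      constructor
      · intro h j
        have h1 := h (.inr (false, j, bitc k.ia j)) (by simp) A hA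
        have h2 := h (.inr (true, j, bitc k.ie j)) (by simp) e he
        simp only [tv, locBit, decide_eq_true_eq, fc, baseC] at h1 h2
        exact ⟨h1 (by simp), h2 (by simp)⟩
      · intro h i hi a ha
        simp only [List.mem_cons, List.mem_flatMap, List.mem_singleton, List.not_mem_nil, or_false] at hi
        rcases hi with ⟨j, -, rfl | rfl⟩
        · refine decide_eq_true ?_
          simp only [fc, baseC]
          intro h1
          have : a = A := by simpa using h1
          rw [this]; exact (h j).1
        · refine decide_eq_true ?_
          simp only [fc, baseC]
          intro h1
          have : a = e := by simpa using h1
          rw [this]; exact (h j).2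
    rw [this]
    constructor
    · intro h
      exact ⟨bitc_inj (funext fun j => (h j).1.symm), bitc_inj (funext fun j => (h j).2.symm)⟩
    · rintro ⟨h1, h2⟩ j
      rw [h1, h2]; simp
  rw [hb]
  obtain ⟨⟨qa, qe, qw, col, y⟩, ia, ie⟩ := k
  simp only [kof, Kap.mk.injEq, Q0.mk.injEq, locTest, decide_eq_true_eq]
  apply and_congr_left
  intro _
  have tA : ∀ a, (fc A e w P x o a).tok .A = true ↔ a = A := by intro a; simp [fc, baseC]
  have tE : ∀ a, (fc A e w P x o a).tok .E = true ↔ a = e := by intro a; simp [fc, baseC]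
  have tW : ∀ a, (fc A e w P x o a).tok .W = true ↔ a = w := by intro a; simp [fc, baseC]
  have tW' : ∀ a, (fc A e w P x o a).tok .W = decide (a = w) := by intro a; simp [fc, baseC]
  have tP : ∀ a d, (fc A e w P x o a).pres d = (P d).isSome := by intro a d; simp [fc, baseC]
  have tI : ∀ a d, (fc A e w P x o a).tok (.I d) = true ↔ ∃ y', P d = some y' ∧ a = code y' := by
    intro a d; simp [fc, baseC, Option.any_eq_true]
  simp only [tA, tE, tW, tI, tP, tW', posOf_code]
  constructor
  · intro h
    have h1 := h A hA
    have h2 := h e he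
    have h3 := h w hw
    refine ⟨(h1.1 rfl).1.symm, (h2.2.1 rfl).symm, (h3.2.2.1 (by simp)).symm, (h1.1 rfl).2.symm, ?_⟩
    funext d
    cases hy : y d with
    | none =>
      have := (h1.2.2.2 d).1 hy
      cases hP : P d with
      | none => rfl
      | some y' => simp [hP] at this
    | some y' =>
      have hl := code_lt y'
      obtain ⟨y'', h4, h5⟩ := ((h (code y') (by omega)).2.2.2 d).2 y' hy rfl
      rw [h4, code_inj h5]
  · rintro ⟨rfl, rfl, rfl, rfl, rfl⟩ a ha
    refine ⟨?_, ?_, ?_, ?_⟩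
    · rintro rfl; exact ⟨rfl, rfl⟩
    · rintro rfl; rfl
    · intro h; rw [of_decide_eq_true h]
    · intro d
      refine ⟨fun h => by simp [h], fun y' h1 h2 => ⟨y', h1, h2⟩⟩

open Classical in
theorem exec_kap {N A e w P x o} {st : St} (hN : GoodN N) (hA : A < N) (he : e < N) (hw : w < N)
    (k : Kap) (ho : o = (fun _ => none) ∨ o = GG (kof N A e w P)) (hs : Sx N A e w P x o st) :
    Sx N A e w P x (if k = kof N A e w P then GG (kof N A e w P) else o) (exec N (kapProg k) st) := by
  rw [kapProg_eq]
  have hl := hN.len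
  obtain ⟨st', h1, h2, h3, h4⟩ := reset_tests (by omega) hs (kts k) (kts_isTest k)
    [one (.emit (GG k))]
  rw [h1]
  have h5 := kts_iff (P := P) (x := x) (o := o) hN hA he hw k
  have h7 : st'.1.phi = true ↔ k = kof N A e w P := by rw [h4, decide_eq_true_eq]; exact h5
  simp only [exec, one, sw_nop]
  split_ifs with h
  · have h6 : st'.1.phi = true := h7.2 h
    rw [sw_emit_true h6]
    subst h
    intro a ha
    simp only [h2 a ha, posOf_code]
    simp only [fc, _root_.Content.mk.injEq, true_and]
    constructor
    · funext d
      rcases ho with rfl | rfl <;> simp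
    · funext d
      cases hg : GG (kof N A e w P) d with
      | some y => simp
      | none => rcases ho with rfl | rfl <;> simp [hg]
  · have h6 : st'.1.phi = false := Bool.eq_false_iff.2 (mt h7.1 h)
    rw [sw_emit_false h6]
    exact h2

open Classical in
theorem exec_kaps {N A e w P x} (hN : GoodN N) (hA : A < N) (he : e < N) (hw : w < N) :
    ∀ (l : List Kap) {o st}, (o = (fun _ => none) ∨ o = GG (kof N A e w P)) → Sx N A e w P x o st →
    Sx N A e w P x (if kof N A e w P ∈ l then GG (kof N A e w P) else o) (exec N (l.flatMap kapProg) st)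
  | [], o, st, ho, hs => by simpa [exec] using hs
  | k :: l, o, st, ho, hs => by
    rw [List.flatMap_cons, exec_append]
    have h1 := exec_kap hN hA he hw k ho hs
    have h2 := exec_kaps hN hA he hw l (by split_ifs <;> simp [ho]) h1
    convert h2 using 1
    by_cases h3 : kof N A e w P ∈ l
    · simp [h3]
    · by_cases h4 : k = kof N A e w P
      · simp [h4]
      · simp [h3, h4, Ne.symm h4]

theorem exec_main {N A e w P} {st : St} (hN : GoodN N) (hA : A < N) (he : e < N) (hw : w < N)
    (hs : Sx N A e w P (x0 A e w) (fun _ => none) st) :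
    Sx N A e w P (xf N A e w) (GG (kof N A e w P)) (exec N mainProg st) := by
  have hl := hN.len
  rw [mainProg, exec_append]
  have := exec_kaps hN hA he hw Finset.univ.toList (Or.inl rfl) (exec_tag (by omega) hA he hw hs)
  rwa [if_pos (by simp)] at this

/-! #### whole blocks -/

noncomputable def bslot (N : ℕ) : ℕ → Blk → Blk
  | 0, b => b
  | e + 1, b => brun N e N (bslot N e b)

def EqB (N : ℕ) (b b' : Blk) : Prop := ∀ a < N, ∀ d, b a d = b' a d

theorem main_slots {N : ℕ} (hN : GoodN N) {b : Blk} {st : St}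
    (h : EqB N (bslot N 3 b) (PB (hd N 3 0) (fun a => some (st.2 a)) (some st.1))) :
    ∀ i ≤ mainProg.length, EqB N (bslot N (2 * i + 3) b)
      (PB (hd N 3 0) (fun a => some ((exec N (mainProg.take i) st).2 a))
        (some (exec N (mainProg.take i) st).1))
  | 0, _ => h
  | i + 1, hi => by
    have ih := main_slots hN h i (by omega)
    have hl := hN.len
    have hpl : prog.length = mainProg.length + 1 := by simp [prog]
    have e1 : instr N (2 * i + 3) = (mainProg[i]).1 := by
      have := instr_odd hN (i := i + 1) (by omega)
      rw [show 2 * i + 3 = 2 * (i + 1) + 1 by ring, this]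
      simp [prog]
    have e2 : instr N (2 * i + 4) = (mainProg[i]).2 := by
      have := instr_even hN (i := i + 1) (by omega)
      rw [show 2 * i + 4 = 2 * (i + 1) + 2 by ring, this]
      simp [prog]
    obtain ⟨⟨p1, p2⟩, p3, p4⟩ := mainProg_nochk (mainProg[i]) (List.getElem_mem _)
    rw [← e1] at p1 p2
    rw [← e2] at p3 p4
    have h3 : hd N (2 * i + 3) 0 = hd N 3 0 := by rw [hd_par (p := 3) (by omega)]
    rw [← h3] at ih
    have s1 := pass_tot p1 p2 ih
    have s2 := pass_tot p3 p4 s1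
    rw [e1, e2, sw_par (e := 2 * i + 3) (p := 1) (by omega),
      sw_par (e := 2 * i + 3 + 1) (p := 0) (by omega)] at s2
    have h5 : hd N (2 * i + 3 + 1 + 1) 0 = hd N 3 0 := by rw [hd_par (p := 3) (by omega)]
    rw [h5] at s2
    have : exec N (mainProg.take (i + 1)) st =
        sw N 0 mainProg[i].2 (sw N 1 mainProg[i].1 (exec N (mainProg.take i) st)) := by
      rw [List.take_succ_eq_append_getElem (by omega), exec_append]
      rfl
    rw [this]
    exact s2

theorem prog_good {N b A e w P} (hN : GoodN N) (h : VB N b A e w P) :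
    ∃ r, EqB N (bslot N (2 * prog.length + 1) b)
      (PB (hd N 3 0) (fun a => some (fc A e w P (xf N A e w) (GG (kof N A e w P)) a)) (some r)) := by
  obtain ⟨r, hr⟩ := start3_good hN h
  have h1 := main_slots hN (st := (r, baseC A e w P)) (b := b) hr mainProg.length le_rfl
  have hpl : prog.length = mainProg.length + 1 := by simp [prog]
  rw [List.take_length] at h1
  have h2 := exec_main hN h.hA h.he h.hw (P := P) (st := (r, baseC A e w P))
    (fun a _ => baseC_eq_fc A e w P a)
  refine ⟨(exec N mainProg (r, baseC A e w P)).1, ?_⟩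
  rw [show 2 * prog.length + 1 = 2 * mainProg.length + 3 by omega]
  intro a ha d
  rw [h1 a ha d]
  simp only [PB, h2 a ha]


set_option linter.unusedSectionVars false
set_option linter.unusedSimpArgs false
set_option linter.unusedVariables false

/-! ### the dance -/

theorem gs_dance {N a e s : ℕ} (hi : instr N e = .inl .dance) (he : e % 2 = 0)
    (y : Dir → Option Yt) (d : Dir) : gs N a e s y d =
      if s % 4 = 0 then
        (if a % 2 = 1 then stay y d else
          if d = .R then (bodyOf (y .C)).map Yt.body else none)
      else if s % 4 = 1 then
        (if a % 2 = 1 ∧ d = .L then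
          (bodyOf (y .R)).bind fun g => (bodyOf (y .C)).map fun o => .pair g o else none)
      else if s % 4 = 2 then
        (if a % 2 = 1 then none else
          if d = .C then (pairOf (y .L)).map fun go => .body go.1 else
          if d = .R then (pairOf (y .L)).map fun go => .body go.2 else none)
      else
        (if a % 2 = 1 then
          (if d = .C then (bodyOf (y .R)).map Yt.body else none)
          else stay y d) := by
  have h1 : gs N a e s y d = danceOut (kof N a e (hd N e s) y).q d := by
    rw [gs, GG]
    have : (kof N a e (hd N e s) y).ie = .inl .dance := hi
    rw [this]
  have hw : ∀ i : Fin 4, ((kof N a e (hd N e s) y).q.w.2.2 = i ↔ s % 4 = i.val) := by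
    intro i
    rw [Fin.ext_iff]
    have : hd N e s = s := by simp [hd, he]
    change hd N e s % 4 = _ ↔ _
    rw [this]
  have ho : (kof N a e (hd N e s) y).q.a.odd = true ↔ a % 2 = 1 := posOf_odd N a
  have hy : (kof N a e (hd N e s) y).q.y = y := rfl
  rw [h1, danceOut]
  simp only [hw, ho, hy]
  rfl

def DB (x : ℕ → Body) (i : ℕ) (a : ℕ) (d : Dir) : Option Yt :=
  if i = 0 then (if d = .C then some (.body (x a)) else none)
  else if i = 1 then
    (if a % 2 = 1 then (if d = .C then some (.body (x a)) else
      if d = .R then some (.body (x (a - 1))) else none) else none)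
  else if i = 2 then (if a % 2 = 0 ∧ d = .L then some (.pair (x a) (x (a + 1))) else none)
  else (if a % 2 = 0 then (if d = .C then some (.body (x a)) else none) else
    (if d = .R then some (.body (x a)) else none))

theorem DB_step {N e s : ℕ} (hN : GoodN N) (hi : instr N e = .inl .dance) (he : e % 2 = 0)
    (x : ℕ → Body) {a : ℕ} (ha : a < N) (d : Dir) :
    bstep N e s (DB x (s % 4)) a d = DB x ((s + 1) % 4) a d := by
  have h4 := hN.d4
  have hs : s % 4 < 4 := Nat.mod_lt _ (by norm_num)
  have hs1 : (s + 1) % 4 = (s % 4 + 1) % 4 := by omega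
  rw [hs1]
  have key : ∀ i < 4, s % 4 = i → bstep N e s (DB x i) a d = DB x ((i + 1) % 4) a d := by
    intro i hi4 hsi
    rcases Nat.mod_two_eq_zero_or_one a with hp | hp
    · have hL : a + 1 ≠ N := by omega
      have h2 : (a + 1) % 2 = 1 := by omega
      have hR : a ≠ 0 → (a - 1) % 2 = 1 := by omega
      interval_cases i <;> cases d <;>
        simp [bstep, gs_dance hi he, hsi, hp, h2, hL, DB, stay, bodyOf, pairOf] <;>
        (intro h0; simp [hR h0])
    · have h0 : a ≠ 0 := by omega
      have h2 : (a + 1) % 2 = 0 := by omega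
      have h3 : (a - 1) % 2 = 0 := by omega
      have h5 : a - 1 + 1 = a := by omega
      interval_cases i <;> cases d <;>
        simp [bstep, gs_dance hi he, hsi, hp, h0, h2, h3, h5, DB, stay, bodyOf, pairOf]
  exact key _ hs rfl

theorem dance_run {N e : ℕ} (hN : GoodN N) (hi : instr N e = .inl .dance) (he : e % 2 = 0)
    {x : ℕ → Body} {b : Blk} (hb : EqB N b (DB x 0)) : ∀ s, EqB N (brun N e s b) (DB x (s % 4))
  | 0 => hb
  | s + 1 => by
    intro a ha d
    rw [← DB_step hN hi he x ha d]
    exact bstep_congr (dance_run hN hi he hb s) ha d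

/-! ### blocks over a whole period -/

theorem run_slot {N : ℕ} (hN : GoodN N) (c : PCf) (X : ℤ) : ∀ e, e < N →
    EqB N (blk N (run N (e * N) c) X) (bslot N e (blk N c X))
  | 0, _ => by
    intro a ha d
    rw [Nat.zero_mul]
    rfl
  | e + 1, he => by
    intro a ha d
    rw [show (e + 1) * N = e * N + N by ring, run_blk hN he c X N le_rfl a ha d]
    exact brun_congr (run_slot hN c X e (by omega)) N a ha d

theorem bslot_bad {N : ℕ} (hN : GoodN N) {b : Blk} (h : ¬ ∃ A e w P, VB N b A e w P) :
    ∀ e, ∀ a < N, ∀ d, bslot N (e + 3) b a d = none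
  | 0 => start3_bad hN h
  | e + 1 => brun_none (bslot_bad hN h e) N

theorem run_bad {N : ℕ} (hN : GoodN N) (c : PCf) (X : ℤ)
    (h : ¬ ∃ A e w P, VB N (blk N c X) A e w P) {n : ℕ} (h1 : 3 * N ≤ n) (h2 : n ≤ (N - 1) * N)
    {a : ℕ} (ha : a < N) (d : Dir) : run N n c (N * X + a) d = none := by
  have hl := hN.len
  have hNp : 0 < N := by omega
  have hdm := Nat.div_add_mod n N
  have hm := Nat.mod_lt n hNp
  set e := n / N with he
  set s := n % N with hs
  have he3 : 3 ≤ e := by rw [he, Nat.le_div_iff_mul_le hNp]; exact h1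
  have heN : e ≤ N - 1 := by
    rw [he]; exact Nat.div_le_of_le_mul (by rw [mul_comm]; exact h2)
  have hb := bslot_bad hN h (e - 3)
  rw [show e - 3 + 3 = e by omega] at hb
  have hr := run_slot hN c X e (by omega)
  rw [← hdm, mul_comm]
  by_cases h5 : e + 1 < N
  · have := run_blk hN h5 c X s hm.le a ha d
    rw [blk] at this
    rw [this]
    refine brun_none (fun a ha d => ?_) s a ha d
    rw [hr a ha d, hb a ha d]
  · have h6 : s = 0 := by
      by_contra h7
      have : e = N - 1 := by omega
      rw [this, mul_comm] at hdm
      omega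
    rw [h6, add_zero]
    exact (hr a ha d).trans (hb a ha d)

theorem gs_idle {N a e s : ℕ} (hi : instr N e = .inl .idle) (y : Dir → Option Yt) (d : Dir) :
    gs N a e s y d = stay y d := by
  rw [gs, GG]
  have : (kof N a e (hd N e s) y).ie = .inl .idle := hi
  rw [this]
  rfl

def xB (v : ℕ → _root_.Content) (q : ℕ) (r : Reg) (a : ℕ) : Body := (v a, if a = q then some r else none)

theorem PB_eq_DB (q v r) : PB q (fun a => some (v a)) (some r) = DB (xB v q r) 0 := by
  funext a d
  simp [PB, DB, xB]

theorem bslot_good {N : ℕ} (hN : GoodN N) {b : Blk} {A e w P} (h : VB N b A e w P) :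
    ∃ r, ∀ i, 2 * prog.length + 1 + i < N → EqB N (bslot N (2 * prog.length + 1 + i) b)
      (DB (xB (fc A e w P (xf N A e w) (GG (kof N A e w P))) (hd N 3 0) r) 0) := by
  have hl := hN.len
  have h4 := hN.d4
  obtain ⟨r, hr⟩ := prog_good hN h
  refine ⟨r, ?_⟩
  intro i
  induction i with
  | zero => intro _; rw [← PB_eq_DB]; exact hr
  | succ i ih =>
    intro hi
    have ih := ih (by omega)
    rcases slot_cases hN (show 2 * prog.length + 1 + i < N by omega) with h1 | h1 | h1 | h1 | h1
    · omega
    · omega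
    · rw [← PB_eq_DB] at ih ⊢
      have : ∀ s, EqB N (brun N (2 * prog.length + 1 + i) s (bslot N (2 * prog.length + 1 + i) b))
          (PB (hd N 3 0) (fun a => some (fc A e w P (xf N A e w) (GG (kof N A e w P)) a)) (some r)) := by
        intro s
        induction s with
        | zero => exact ih
        | succ s ih2 => exact bstep_stay (fun a ha y d => gs_idle h1.2.2.2 y d) ih2
      exact this N
    · have := dance_run hN h1.2.2.2 h1.2.2.1 ih N
      rw [Nat.mod_eq_zero_of_dvd h4] at this
      exact this
    · omega

/-! ### transit -/

theorem gg_launch {N s : ℕ} (hN : GoodN N) (hs : s < N) (a : ℕ) (y : Dir → Option Yt) (d : Dir) :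
    gg N a ((N - 1) * N + s) y d =
      if s = 0 then (bodyOf (y .C)).bind fun b => launchLetter b.1 d
      else (letterOf (y d)).map Yt.letter := by
  have hl := hN.len
  have h4 := hN.d4
  rw [gg_eq_gs hs, gs, GG]
  have : (kof N a (N - 1) (hd N (N - 1) s) y).ie = .inl .launch :=
    instr_last (N := N) (e := N - 1) (by omega) (by omega)
  rw [this]
  have hy : (kof N a (N - 1) (hd N (N - 1) s) y).q.y = y := rfl
  have hw : (kof N a (N - 1) (hd N (N - 1) s) y).q.w.isLst = true ↔ s = 0 := by
    refine (posOf_isLst N _).trans ?_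
    rw [hd, if_pos (by omega)]; omega
  simp only [launchOut, hw, hy]

theorem run_transit {N : ℕ} (hN : GoodN N) (c : PCf) : ∀ s, s < N → ∀ j d,
    run N ((N - 1) * N + (s + 1)) c j d =
      (bodyOf (run N ((N - 1) * N) c (j - (s + 1) * d.off) .C)).bind fun b => launchLetter b.1 d
  | 0, hs, j, d => by
    have := gg_launch hN hs ((j - d.off) % N).toNat (run N ((N - 1) * N) c (j - d.off)) d
    rw [if_pos rfl, add_zero] at this
    rw [zero_add, run, pstep, this]
    simp
  | s + 1, hs, j, d => by
    rw [← add_assoc, run, pstep, gg_launch hN hs, if_neg (by omega), run_transit hN c s (by omega)]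
    rw [show j - d.off - ((s : ℤ) + 1) * d.off = j - (((s + 1 : ℕ) : ℤ) + 1) * d.off by push_cast; ring]
    cases bodyOf (run N ((N - 1) * N) c (j - (((s + 1 : ℕ) : ℤ) + 1) * d.off) .C) with
    | none => rfl
    | some b =>
      simp only [Option.bind_some, launchLetter]
      split_ifs <;> rfl

/-- the result of a period -/
theorem run_period_good {N : ℕ} (hN : GoodN N) (c : PCf) (X : ℤ) (d : Dir) {A e w P}
    (h : VB N (blk N c (X - d.off)) A e w P) {a : ℕ} (ha : a < N) :
    run N (N * N) c (N * X + a) d = (GG (kof N A e w P) d).map fun y =>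
      .letter (encN N (xf N A e w (.A d)) (xf N A e w .E) (xf N A e w .W) y a) := by
  have hl := hN.len
  obtain ⟨r, hr⟩ := bslot_good hN h
  have h1 := hr (N - 1 - (2 * prog.length + 1)) (by omega)
  rw [show 2 * prog.length + 1 + (N - 1 - (2 * prog.length + 1)) = N - 1 by omega] at h1
  have h2 := run_slot hN c (X - d.off) (N - 1) (by omega) a ha .C
  rw [h1 a ha .C] at h2
  have h3 := run_transit hN c (N - 1) (by omega) (N * X + a) d
  rw [show (N - 1) * N + (N - 1 + 1) = N * N by
    obtain ⟨n, rfl⟩ : ∃ n, N = n + 1 := ⟨N - 1, by omega⟩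
    simp; ring] at h3
  rw [h3, show (N : ℤ) * X + a - (((N - 1 : ℕ) : ℤ) + 1) * d.off = N * (X - d.off) + a by
    rw [Nat.cast_sub (by omega)]; push_cast; ring]
  rw [blk] at h2
  rw [h2]
  simp only [DB, if_true, bodyOf, Option.bind_some, xB, launchLetter, fc, encN]
  cases GG (kof N A e w P) d <;> simp

theorem run_period_bad {N : ℕ} (hN : GoodN N) (c : PCf) (X : ℤ) (d : Dir) 
    (h : ¬ ∃ A e w P, VB N (blk N c (X - d.off)) A e w P) {a : ℕ} (ha : a < N) :
    run N (N * N) c (N * X + a) d = none := by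
  have hl := hN.len
  have h3 := run_transit hN c (N - 1) (by omega) (N * X + a) d
  rw [show (N - 1) * N + (N - 1 + 1) = N * N by
    obtain ⟨n, rfl⟩ : ∃ n, N = n + 1 := ⟨N - 1, by omega⟩
    simp; ring] at h3
  rw [h3, show (N : ℤ) * X + a - (((N - 1 : ℕ) : ℤ) + 1) * d.off = N * (X - d.off) + a by
    rw [Nat.cast_sub (by omega)]; push_cast; ring]
  rw [run_bad hN c _ h (by gcongr; omega) le_rfl ha]
  rfl


set_option linter.unusedSectionVars false
set_option linter.unusedSimpArgs false
set_option linter.unusedVariables false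

/-! ### faulty payload orbits over one period -/

def FO (N : ℕ) (c : ℕ → PCf) : Prop := ∀ n < N * N, cle (c (n + 1)) (pstep N n (c n))

theorem FO.dom {N : ℕ} (hN : GoodN N) {c : ℕ → PCf} (h : FO N c) : ∀ n ≤ N * N, cle (c n) (run N n (c 0))
  | 0, _ => fun _ _ _ h => h
  | n + 1, hn => by
    have ih := FO.dom hN h n (by omega)
    intro j d v hv
    have h1 := h n (by omega) j d v hv
    rcases Nat.eq_zero_or_pos n with rfl | h0
    · exact h1
    · exact pstep_mono hN (by omega) (by omega) ih j d v h1

theorem ne_none_cle {c c' : PCf} (h : cle c c') {j d} (hv : c j d ≠ none) : c' j d ≠ none := by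
  obtain ⟨v, hv⟩ := Option.ne_none_iff_exists'.1 hv
  rw [h j d v hv]; simp

theorem transit_step0 {N : ℕ} (hN : GoodN N) {c : ℕ → PCf} (h : FO N c) {j d}
    (hv : c ((N - 1) * N + 1) j d ≠ none) : c ((N - 1) * N) (j - d.off) .C ≠ none := by
  have hl := hN.len
  have h0 : (N - 1) * N < N * N := Nat.mul_lt_mul_of_pos_right (by omega) (by omega)
  have h1 := ne_none_cle (h _ h0) hv
  have := gg_launch hN (show 0 < N by omega) ((j - d.off) % N).toNat (c ((N - 1) * N) (j - d.off)) d
  rw [if_pos rfl, add_zero] at this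
  rw [pstep, this] at h1
  intro h2
  rw [h2] at h1
  exact h1 rfl

theorem transit_step {N s : ℕ} (hN : GoodN N) {c : ℕ → PCf} (h : FO N c) {j d} (h0 : 0 < s) (hs : s < N)
    (hv : c ((N - 1) * N + (s + 1)) j d ≠ none) : c ((N - 1) * N + s) (j - d.off) d ≠ none := by
  have hl := hN.len
  have h0 : (N - 1) * N + s < N * N := by
    obtain ⟨n, rfl⟩ : ∃ n, N = n + 1 := ⟨N - 1, by omega⟩
    simp; nlinarith
  have h1 := ne_none_cle (h _ h0) hv
  rw [pstep, gg_launch hN hs, if_neg (by omega)] at h1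
  intro h2
  rw [h2] at h1
  exact h1 rfl

theorem transit_back {N : ℕ} (hN : GoodN N) {c : ℕ → PCf} (h : FO N c) {j d} :
    ∀ s < N, c ((N - 1) * N + (s + 1)) j d ≠ none →
      c ((N - 1) * N) (j - (s + 1) * d.off) .C ≠ none := by
  intro s
  induction s generalizing j with
  | zero => intro hs hv; simpa using transit_step0 hN h hv
  | succ s ih =>
    intro hs hv
    have := ih (by omega) (transit_step hN h (by omega) hs hv)
    convert this using 2
    push_cast; ring

theorem transit_back' {N : ℕ} (hN : GoodN N) {c : ℕ → PCf} (h : FO N c) {j d}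
    (hv : c (N * N) j d ≠ none) : ∀ k < N, c (N * N - k) (j - k * d.off) d ≠ none := by
  have hl := hN.len
  intro k
  induction k with
  | zero => intro _; simpa using hv
  | succ k ih =>
    intro hk
    have h1 := ih (by omega)
    have e1 : N * N - k = (N - 1) * N + ((N - k - 1) + 1) := by
      obtain ⟨n, rfl⟩ : ∃ n, N = n + 1 := ⟨N - 1, by omega⟩
      simp only [Nat.add_sub_cancel]
      have : (n + 1) * (n + 1) = n * (n + 1) + (n + 1) := by ring
      omega
    rw [e1] at h1
    have h2 := transit_step hN h (by omega) (by omega) h1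
    have e2 : N * N - (k + 1) = (N - 1) * N + (N - k - 1) := by omega
    rw [e2]
    convert h2 using 2
    push_cast; ring

/-! #### backward invariant -/

def QI (N : ℕ) (D : Prop) (s : ℕ) (b : Blk) : Prop :=
  (¬ D ∨ s % 4 = 0 → ∀ a < N, b a .C ≠ none) ∧
  (D ∧ s % 4 = 1 → ∀ a < N, a % 2 = 1 → b a .C ≠ none ∧ b a .R ≠ none) ∧
  (D ∧ s % 4 = 2 → ∀ a < N, a % 2 = 0 → b a .L ≠ none) ∧
  (D ∧ s % 4 = 3 → ∀ a < N, (a % 2 = 0 → b a .C ≠ none) ∧ (a % 2 = 1 → b a .R ≠ none))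

theorem stay_ne {y : Dir → Option Yt} {d} (h : stay y d ≠ none) : y .C ≠ none := by
  intro h1; apply h; simp [stay, h1, bodyOf]

theorem gs_C_ne {N a e s : ℕ} (hN : GoodN N) (he : e + 1 < N) (hs : s < N) (h0 : ¬ (e = 0 ∧ s = 0))
    (hD : instr N e ≠ .inl .dance) {y : Dir → Option Yt} (h : gs N a e s y .C ≠ none) : y .C ≠ none := by
  rcases slot_cases hN (show e < N by omega) with h1 | h1 | h1 | h1 | h1
  · subst h1
    have hw : ¬ (posOf N (hd N 0 s)).isFst = true := by
      rw [posOf_isFst]; simp [hd]; omega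
    rw [gs, GG] at h
    have : (kof N a 0 (hd N 0 s) y).ie = .inl .start := instr_zero N
    rw [this] at h
    simp only at h
    rw [if_neg (by exact hw)] at h
    exact stay_ne h
  · by_cases h2 : a = hd N e s
    · rw [gs_on hs h1.2.2 h2, if_pos rfl] at h
      intro h3
      apply h
      simp [pres, h3, bodyOf]
    · rw [gs_off h1.2.2 h2] at h
      exact stay_ne h
  · rw [gs_idle h1.2.2.2] at h; exact stay_ne h
  · exact absurd h1.2.2.2 hD
  · omega

theorem QI_step {N e s : ℕ} (hN : GoodN N) (he : e + 1 < N) (hs : s < N) (h0 : ¬ (e = 0 ∧ s = 0))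
    {b b' : Blk} (hb : ∀ a < N, ∀ d, b' a d ≠ none → bstep N e s b a d ≠ none)
    (h : QI N (instr N e = .inl .dance) (s + 1) b') : QI N (instr N e = .inl .dance) s b := by
  have h4 := hN.d4
  by_cases hD : instr N e = .inl .dance
  · have hee : e % 2 = 0 := by
      rcases slot_cases hN (show e < N by omega) with h1 | h1 | h1 | h1 | h1
      · rw [h1, instr_zero] at hD; simp at hD
      · rw [hD] at h1; exact absurd h1.2.2 (by simp [isPass])
      · rw [hD] at h1; simp at h1
      · exact h1.2.2.1
      · omega
    obtain ⟨q0, q1, q2, q3⟩ := h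
    refine ⟨?_, ?_, ?_, ?_⟩
    · intro h1 a ha
      have h1 : s % 4 = 0 := by simpa [hD] using h1
      rcases Nat.mod_two_eq_zero_or_one a with hp | hp
      · have := hb (a + 1) (by omega) .R (q1 ⟨hD, by omega⟩ (a + 1) (by omega) (by omega)).2
        simp only [bstep] at this
        rw [if_neg (by omega), gs_dance hD hee, if_pos h1, if_neg (by omega), if_pos rfl] at this
        intro h5; apply this; simp [h5, bodyOf]
      · have := hb a ha .C (q1 ⟨hD, by omega⟩ a ha hp).1
        simp only [bstep] at this
        rw [gs_dance hD hee, if_pos h1, if_pos hp] at this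
        exact stay_ne this
    · rintro ⟨-, h1⟩ a ha hp
      have := hb (a - 1) (by omega) .L (q2 ⟨hD, by omega⟩ (a - 1) (by omega) (by omega))
      simp only [bstep] at this
      rw [if_neg (by omega), gs_dance hD hee, if_neg (by omega), if_pos h1, if_pos ⟨by omega, rfl⟩,
        show a - 1 + 1 = a by omega] at this
      constructor <;> (intro h5; apply this; simp [h5, bodyOf])
    · rintro ⟨-, h1⟩ a ha hp
      have := hb a ha .C ((q3 ⟨hD, by omega⟩ a ha).1 hp)
      simp only [bstep] at this
      rw [gs_dance hD hee, if_neg (by omega), if_neg (by omega), if_pos h1, if_neg (by omega),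
        if_pos rfl] at this
      intro h5; apply this; simp [h5, pairOf]
    · rintro ⟨-, h1⟩ a ha
      have := hb a ha .C (q0 (Or.inr (by omega)) a ha)
      simp only [bstep] at this
      rw [gs_dance hD hee, if_neg (by omega), if_neg (by omega), if_neg (by omega)] at this
      constructor
      · intro hp
        rw [if_neg (by omega)] at this
        exact stay_ne this
      · intro hp
        rw [if_pos hp, if_pos rfl] at this
        intro h5; apply this; simp [h5, bodyOf]
  · refine ⟨?_, fun h1 => absurd h1.1 hD, fun h1 => absurd h1.1 hD, fun h1 => absurd h1.1 hD⟩
    intro _ a ha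
    exact gs_C_ne hN he hs h0 hD (hb a ha .C (h.1 (Or.inl hD) a ha))

theorem QI_back {N e s : ℕ} (hN : GoodN N) {c : ℕ → PCf} (h : FO N c) (he : e + 1 < N) (hs : s < N)
    (h0 : ¬ (e = 0 ∧ s = 0)) {X : ℤ}
    (hq : QI N (instr N e = .inl .dance) (s + 1) (blk N (c (e * N + s + 1)) X)) :
    QI N (instr N e = .inl .dance) s (blk N (c (e * N + s)) X) := by
  refine QI_step hN he hs h0 (fun a ha d hv => ?_) hq
  rw [← pstep_blk hN he hs _ X ha d]
  refine ne_none_cle (h _ ?_) hv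
  have : (e + 1) * N ≤ N * N := Nat.mul_le_mul_right _ he.le
  nlinarith

theorem QI_all {N : ℕ} (hN : GoodN N) {c : ℕ → PCf} (h : FO N c) {X : ℤ}
    (hq : ∀ a < N, blk N (c ((N - 1) * N)) X a .C ≠ none) :
    ∀ k, ∀ e, e + k + 2 = N → ∀ i s, i + s = N → ¬ (e = 0 ∧ s = 0) →
      QI N (instr N e = .inl .dance) s (blk N (c (e * N + s)) X) := by
  have h4 := hN.d4
  have hl := hN.len
  intro k
  induction k with
  | zero =>
    intro e he i
    induction i with
    | zero =>
      intro s hs h0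
      have e1 : e * N + s = (N - 1) * N := by
        rw [show N - 1 = e + 1 by omega, add_mul]; omega
      rw [e1]
      have hs4 : s % 4 = 0 := by omega
      exact ⟨fun _ => hq, fun h1 => by omega, fun h1 => by omega, fun h1 => by omega⟩
    | succ i ih =>
      intro s hs h0
      exact QI_back hN h (by omega) (by omega) h0 (ih (s + 1) (by omega) (by omega))
  | succ k ihk =>
    intro e he i
    induction i with
    | zero =>
      intro s hs h0
      have e1 : e * N + s = (e + 1) * N + 0 := by rw [add_mul]; omega
      rw [e1]
      have hs4 : s % 4 = 0 := by omega
      have := (ihk (e + 1) (by omega) N 0 (by omega) (by omega)).1 (Or.inr rfl)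
      exact ⟨fun _ => this, fun h1 => by omega, fun h1 => by omega, fun h1 => by omega⟩
    | succ i ih =>
      intro s hs h0
      exact QI_back hN h (by omega) (by omega) h0 (ih (s + 1) (by omega) (by omega))

theorem eff_local {N : ℕ} (hN : GoodN N) {c : ℕ → PCf} (h : FO N c) {X : ℤ}
    (hq : ∀ a < N, blk N (c ((N - 1) * N)) X a .C ≠ none) {n : ℕ} (h1 : 1 ≤ n) (h2 : n ≤ (N - 1) * N)
    {a : ℕ} (ha : a < N) : ∃ (j : ℤ) (d : Dir), |j - (N * X + a)| ≤ 1 ∧ c n (j + d.off) d ≠ none := by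
  have h4 := hN.d4
  have hl := hN.len
  have hNp : 0 < N := by omega
  obtain ⟨e, s, he, hs, h0, rfl⟩ : ∃ e s, e + 2 ≤ N ∧ s ≤ N ∧ ¬ (e = 0 ∧ s = 0) ∧ n = e * N + s := by
    have hdm := Nat.div_add_mod n N
    have hm := Nat.mod_lt n hNp
    rw [mul_comm] at hdm
    have heN : n / N ≤ N - 1 := Nat.div_le_of_le_mul (by rw [mul_comm]; exact h2)
    by_cases h5 : n / N + 2 ≤ N
    · refine ⟨n / N, n % N, h5, hm.le, ?_, hdm.symm⟩
      rintro ⟨h6, h7⟩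
      rw [h6, h7] at hdm; omega
    · have h6 : n / N = N - 1 := by omega
      rw [h6] at hdm
      refine ⟨N - 2, N, by omega, le_rfl, by omega, ?_⟩
      have : (N - 2) * N + N = (N - 1) * N := by
        rw [show N - 1 = (N - 2) + 1 by omega, add_mul, one_mul]
      omega
  have q := QI_all hN h hq (N - 2 - e) e (by omega) (N - s) s (by omega) h0
  obtain ⟨q0, q1, q2, q3⟩ := q
  by_cases hD : instr N e = .inl .dance
  · have hs4 : s % 4 = 0 ∨ s % 4 = 1 ∨ s % 4 = 2 ∨ s % 4 = 3 := by omega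
    rcases hs4 with h5 | h5 | h5 | h5
    · exact ⟨N * X + a, .C, by simp, by simpa [Dir.off, blk] using q0 (Or.inr h5) a ha⟩
    · rcases Nat.mod_two_eq_zero_or_one a with hp | hp
      · refine ⟨N * X + a, .R, by simp, ?_⟩
        have := (q1 ⟨hD, h5⟩ (a + 1) (by omega) (by omega)).2
        rw [blk] at this
        convert this using 2
        simp [Dir.off]; ring
      · exact ⟨N * X + a, .C, by simp, by simpa [Dir.off, blk] using (q1 ⟨hD, h5⟩ a ha hp).1⟩
    · rcases Nat.mod_two_eq_zero_or_one a with hp | hp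
      · refine ⟨N * X + a + 1, .L, by simp, ?_⟩
        have := q2 ⟨hD, h5⟩ a ha hp
        rw [blk] at this
        convert this using 2
        simp [Dir.off]
      · refine ⟨N * X + a, .L, by simp, ?_⟩
        have := q2 ⟨hD, h5⟩ (a - 1) (by omega) (by omega)
        rw [blk, Nat.cast_sub (by omega)] at this
        convert this using 2
        simp [Dir.off]; ring
    · rcases Nat.mod_two_eq_zero_or_one a with hp | hp
      · exact ⟨N * X + a, .C, by simp, by simpa [Dir.off, blk] using (q3 ⟨hD, h5⟩ a ha).1 hp⟩
      · refine ⟨N * X + a - 1, .R, by simp, ?_⟩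
        have := (q3 ⟨hD, h5⟩ a ha).2 hp
        rw [blk] at this
        convert this using 2
        simp [Dir.off]
  · exact ⟨N * X + a, .C, by simp, by simpa [Dir.off, blk] using q0 (Or.inl hD) a ha⟩


set_option linter.unusedSectionVars false
set_option linter.unusedSimpArgs false
set_option linter.unusedVariables false
set_option linter.constructorNameAsVariable false

/-! #### counting -/

def VBx (N : ℕ) (c : PCf) (X : ℤ) : Prop := ∃ A e w P, VB N (blk N c X) A e w P

theorem bslot_empty {N : ℕ} {b : Blk} (h : ∀ a < N, ∀ d, b a d = none) :
    ∀ e, ∀ a < N, ∀ d, bslot N e b a d = none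
  | 0 => h
  | e + 1 => brun_none (bslot_empty h e) N

theorem run_empty {N : ℕ} (hN : GoodN N) (c : PCf) (X : ℤ)
    (h : ∀ a < N, ∀ d, blk N c X a d = none) {n : ℕ} (h2 : n < 3 * N)
    {a : ℕ} (ha : a < N) (d : Dir) : run N n c (N * X + a) d = none := by
  have hl := hN.len
  have hNp : 0 < N := by omega
  have hdm := Nat.div_add_mod n N
  have hm := Nat.mod_lt n hNp
  have he : n / N < 3 := Nat.div_lt_of_lt_mul (by rw [mul_comm]; exact h2)
  rw [← hdm, mul_comm]
  have := run_blk hN (show n / N + 1 < N by omega) c X (n % N) hm.le a ha d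
  rw [blk] at this
  rw [this]
  refine brun_none (fun a ha d => ?_) _ a ha d
  rw [run_slot hN c X _ (by omega) a ha d, bslot_empty h _ a ha d]

theorem vac {N e s : ℕ} (hN : GoodN N) {c : ℕ → PCf} (h : FO N c) (he : e + 1 < N) (hs : s < N)
    (hD : instr N e = .inl .dance) (hee : e % 2 = 0) {a : ℕ} (ha : a < N)
    (hsa : (s % 4 = 0 ∧ a % 2 = 0) ∨ (s % 4 = 1 ∧ a % 2 = 1)) (X : ℤ) (d : Dir) :
    c (e * N + s + 1) (N * X + a) d = none := by
  by_contra hv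
  have hn : e * N + s < N * N := by
    have : (e + 1) * N ≤ N * N := Nat.mul_le_mul_right _ he.le
    nlinarith
  have h1 := ne_none_cle (h _ hn) hv
  have h2 := pstep_blk hN he hs (c (e * N + s)) X ha d
  rw [blk] at h2
  rw [h2] at h1
  apply h1
  rcases hsa with ⟨h3, h4⟩ | ⟨h3, h4⟩
  · cases d with
    | C => simp [bstep, gs_dance hD hee, h3, h4]
    | R =>
      simp only [bstep]
      split_ifs with h5
      · rfl
      · simp [gs_dance hD hee, h3, show (a - 1) % 2 = 1 by omega, stay]
    | L =>
      simp only [bstep]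
      split_ifs with h5
      · rfl
      · simp [gs_dance hD hee, h3, show (a + 1) % 2 = 1 by omega, stay]
  · cases d with
    | C => simp [bstep, gs_dance hD hee, h3, h4]
    | R =>
      simp only [bstep]
      split_ifs with h5
      · rfl
      · simp [gs_dance hD hee, h3]
    | L =>
      simp only [bstep]
      split_ifs with h5
      · rfl
      · simp [gs_dance hD hee, h3, show (a + 1) % 2 = 0 by omega]

/-- vacant times -/
noncomputable def vacSet (N a : ℕ) : Finset ℕ :=
  (Finset.range 100 ×ˢ Finset.range (N / 4)).image fun ik =>
    (2 * prog.length + 2 + 2 * ik.1) * N + (4 * ik.2 + a % 2) + 1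

theorem vacSet_card {N : ℕ} (hN : GoodN N) (a : ℕ) : (vacSet N a).card = 25 * N := by
  have h4 := hN.d4
  have hl := hN.len
  rw [vacSet, Finset.card_image_of_injOn]
  · simp; omega
  · rintro ⟨i, k⟩ h1 ⟨i', k'⟩ h2 h
    simp only [Finset.coe_product, Set.mem_prod, Finset.mem_coe, Finset.mem_range] at h1 h2
    simp only at h
    have e1 : ∀ i k : ℕ, k < N / 4 → ((2 * prog.length + 2 + 2 * i) * N + (4 * k + a % 2)) / N =
        2 * prog.length + 2 + 2 * i := by
      intro i k hk
      rw [mul_comm, Nat.mul_add_div (by omega), Nat.div_eq_of_lt (by omega), add_zero]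
    have h5 : (2 * prog.length + 2 + 2 * i) * N + (4 * k + a % 2) =
        (2 * prog.length + 2 + 2 * i') * N + (4 * k' + a % 2) := by omega
    have h6 := congrArg (· / N) h5
    simp only [e1 i k h1.2, e1 i' k' h2.2] at h6
    have h7 : i = i' := by omega
    subst h7
    have h8 : k = k' := by omega
    rw [h8]

theorem vacSet_spec {N : ℕ} (hN : GoodN N) {c : ℕ → PCf} (h : FO N c) {a : ℕ} (ha : a < N)
    {n : ℕ} (hn : n ∈ vacSet N a) : (3 * N ≤ n ∧ n ≤ (N - 1) * N) ∧
      ∀ (X : ℤ) (d : Dir), c n (N * X + a) d = none := by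
  have h4 := hN.d4
  have hl := hN.len
  simp only [vacSet, Finset.mem_image, Finset.mem_product, Finset.mem_range, Prod.exists] at hn
  obtain ⟨i, k, ⟨hi, hk⟩, rfl⟩ := hn
  have hpl : prog.length = mainProg.length + 1 := by simp [prog]
  refine ⟨⟨?_, ?_⟩, ?_⟩
  · have : 3 * N ≤ (2 * prog.length + 2 + 2 * i) * N := Nat.mul_le_mul_right _ (by omega)
    omega
  · have : (2 * prog.length + 2 + 2 * i + 1) * N ≤ (N - 1) * N := Nat.mul_le_mul_right _ (by omega)
    rw [add_mul] at this
    omega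
  · intro X d
    refine vac hN h (by omega) (by omega) (instr_dance (by omega) (by omega) (by omega)) (by omega) ha ?_ X d
    omega

attribute [irreducible] vacSet

theorem dom_valid {N : ℕ} (hN : GoodN N) {c : ℕ → PCf} (h : FO N c) {X : ℤ} {a : ℕ} (ha : a < N)
    {n : ℕ} (h1 : 3 * N ≤ n) (h2 : n ≤ (N - 1) * N) {d} (hv : c n (N * X + a) d ≠ none) :
    VBx N (c 0) X := by
  by_contra hx
  have : (N - 1) * N ≤ N * N := Nat.mul_le_mul_right _ (by omega)
  exact ne_none_cle (h.dom hN n (by omega)) hv (run_bad hN _ X hx h1 h2 ha d)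

open Classical in
theorem count_le {N : ℕ} (hN : GoodN N) {c : ℕ → PCf} (h : FO N c) (X : ℤ) {a : ℕ} (ha : a < N) :
    ((Finset.range (N * N)).filter fun n => ∃ d, c n (N * X + a) d ≠ none).card ≤
      (N * N - 25 * N) * ind (VBx N (c 0) X) +
      (3 * N * ind (∃ a < N, ∃ d, c 0 (N * X + a) d ≠ none) +
        N * ind (∃ d : Dir, VBx N (c 0) (X + d.off))) := by
  have h4 := hN.d4
  have hl := hN.len
  have e0 : (N - 1) * N + N = N * N := by
    obtain ⟨n, rfl⟩ : ∃ n, N = n + 1 := ⟨N - 1, by omega⟩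
    simp; ring
  have e1 : 210 * N ≤ N * N := Nat.mul_le_mul_right _ (by omega)
  set S1 : Finset ℕ := if VBx N (c 0) X then Finset.Icc (3 * N) ((N - 1) * N) \ vacSet N a else ∅ with hS1
  set S2 : Finset ℕ := if (∃ a < N, ∃ d, c 0 (N * X + a) d ≠ none) then Finset.range (3 * N) else ∅ with hS2
  set S3 : Finset ℕ := if (∃ d : Dir, VBx N (c 0) (X + d.off)) then
    Finset.Ico ((N - 1) * N + 1) (N * N) else ∅ with hS3
  have hsub : vacSet N a ⊆ Finset.Icc (3 * N) ((N - 1) * N) := by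
    intro n hn
    have hz := vacSet_spec hN h ha hn
    exact Finset.mem_Icc.2 hz.1
  have c1 : S1.card ≤ (N * N - 25 * N) * ind (VBx N (c 0) X) := by
    rw [hS1, ind]
    split_ifs
    · rw [Finset.card_sdiff_of_subset hsub, vacSet_card hN]
      simp; omega
    · simp
  have c2 : S2.card ≤ 3 * N * ind (∃ a < N, ∃ d, c 0 (N * X + a) d ≠ none) := by
    rw [hS2, ind]
    split_ifs <;> simp
  have c3 : S3.card ≤ N * ind (∃ d : Dir, VBx N (c 0) (X + d.off)) := by
    rw [hS3, ind]
    split_ifs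
    · simp; omega
    · simp
  calc _ ≤ (S1 ∪ (S2 ∪ S3)).card := Finset.card_le_card ?_
    _ ≤ S1.card + (S2.card + S3.card) :=
      (Finset.card_union_le _ _).trans (Nat.add_le_add_left (Finset.card_union_le _ _) _)
    _ ≤ _ := by omega
  intro n hn
  obtain ⟨hn, d, hv⟩ := Finset.mem_filter.1 hn
  rw [Finset.mem_range] at hn
  simp only [Finset.mem_union]
  by_cases h1 : n < 3 * N
  · right; left
    rw [hS2, if_pos]
    · exact Finset.mem_range.2 h1
    · by_contra hx
      push Not at hx
      exact ne_none_cle (h.dom hN n hn.le) hv (run_empty hN _ X hx h1 ha d)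
  by_cases h2 : n ≤ (N - 1) * N
  · left
    rw [hS1, if_pos (dom_valid hN h ha (by omega) h2 hv), Finset.mem_sdiff, Finset.mem_Icc]
    refine ⟨⟨by omega, h2⟩, fun h3 => hv ((vacSet_spec hN h ha h3).2 X d)⟩
  · right; right
    rw [hS3, if_pos]
    · rw [Finset.mem_Ico]; omega
    · obtain ⟨s, rfl⟩ : ∃ s, n = (N - 1) * N + (s + 1) := ⟨n - (N - 1) * N - 1, by omega⟩
      have h3 := transit_back hN h s (by omega) hv
      have hn3 : 3 * N ≤ (N - 1) * N := Nat.mul_le_mul_right _ (by omega)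
      have key : ∀ (X' : ℤ) (a' : ℤ), 0 ≤ a' → a' < N →
          (N : ℤ) * X + a - (s + 1) * d.off = N * X' + a' → VBx N (c 0) X' := by
        intro X' a' g1 g2 g3
        lift a' to ℕ using g1
        rw [g3] at h3
        exact dom_valid hN h (by exact_mod_cast g2) hn3 le_rfl h3
      cases d with
      | C => exact ⟨.C, key _ a (by omega) (by omega) (by simp [Dir.off])⟩
      | R =>
        by_cases g : s + 1 ≤ a
        · exact ⟨.C, key _ (a - (s + 1)) (by omega) (by omega) (by simp [Dir.off]; ring)⟩
        · exact ⟨.L, key _ (N + a - (s + 1)) (by omega) (by omega) (by simp [Dir.off]; ring)⟩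
      | L =>
        by_cases g : a + (s + 1) < N
        · exact ⟨.C, key _ (a + (s + 1)) (by omega) (by omega) (by simp [Dir.off]; ring)⟩
        · exact ⟨.R, key _ (a + (s + 1) - N) (by omega) (by omega) (by simp [Dir.off]; ring)⟩


set_option linter.unusedSectionVars false
set_option linter.unusedSimpArgs false
set_option linter.unusedVariables false

/-! ### the automaton and the decoding map -/

theorem enc_inj {N : ℕ} (hN : GoodN N) {A e w A' e' w' : ℕ} {y y' : Yt} (hA : A < N) (he : e < N)
    (hw : w < N) (h : ∀ a < N, encN N A e w y a = encN N A' e' w' y' a) :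
    A = A' ∧ e = e' ∧ w = w' ∧ y = y' := by
  have hc : code y < N := (code_lt y).trans hN.cy
  have h1 := h A hA
  have h2 := h e he
  have h3 := h w hw
  have h4 := h _ hc
  simp only [encN, Letter.mk.injEq, decide_eq_decide] at h1 h2 h3 h4
  exact ⟨h1.1.1 trivial, h2.2.1.1 trivial, h3.2.2.1.1 trivial, code_inj (h4.2.2.2.1 trivial)⟩

theorem VB.unique {N : ℕ} (hN : GoodN N) {b : Blk} {A e w P A' e' w' P'} (h : VB N b A e w P)
    (h' : VB N b A' e' w' P') : A = A' ∧ e = e' ∧ w = w' ∧ P = P' := by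
  have hp : 0 < N := by have := h.hA; omega
  have key : ∀ d y, P d = some y → ∃ y', P' d = some y' ∧ A = A' ∧ e = e' ∧ w = w' ∧ y = y' := by
    intro d y hy
    have h0 := h.eq 0 hp d
    rw [h'.eq 0 hp d, hy] at h0
    cases hy' : P' d with
    | none => simp [hy'] at h0
    | some y' =>
      refine ⟨y', rfl, enc_inj hN h.hA h.he h.hw fun a ha => ?_⟩
      have h1 := h.eq a ha d
      rw [h'.eq a ha d, hy, hy'] at h1
      simp only [Option.map_some, Option.some.injEq, Yt.letter.injEq] at h1
      exact h1.symm
  obtain ⟨d, y, hy⟩ := h.ne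
  obtain ⟨_, _, h1, h2, h3, _⟩ := key d y hy
  refine ⟨h1, h2, h3, funext fun d => ?_⟩
  cases hy : P d with
  | some y =>
    obtain ⟨y', h4, _, _, _, rfl⟩ := key d y hy
    exact h4.symm
  | none =>
    have h0 := h.eq 0 hp d
    rw [h'.eq 0 hp d, hy] at h0
    cases hy' : P' d with
    | none => rfl
    | some y' => simp [hy'] at h0

section Machine

variable {N : ℕ} [NeZero N]

/-- all messages of the cell carry the tag `g`, and there is a message -/
def OneTag (s : CState N (N * N) Yt) (g : Tag N (N * N)) : Prop :=
  (∃ d m, s d = some m) ∧ ∀ d m, s d = some m → m.1 = g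

theorem OneTag.unique {s : CState N (N * N) Yt} {g g'} (h : OneTag s g) (h' : OneTag s g') : g = g' := by
  obtain ⟨⟨d, m, hm⟩, h1⟩ := h
  rw [← h1 d m hm, h'.2 d m hm]

def pay (s : CState N (N * N) Yt) : Dir → Option Yt := fun d => (s d).map Prod.snd

open Classical in
noncomputable def outM (s : CState N (N * N) Yt) : CState N (N * N) Yt := fun d =>
  if h : ∃ g, OneTag s g then
    (gg N h.choose.1.val h.choose.2.val (pay s) d).map
      fun y => (h.choose + ((d.off : ZMod N), (1 : ZMod (N * N))), y)
  else none

theorem outM_pos {s : CState N (N * N) Yt} {g} (h : OneTag s g) (d : Dir) : outM s d =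
    (gg N g.1.val g.2.val (pay s) d).map fun y => (g + ((d.off : ZMod N), (1 : ZMod (N * N))), y) := by
  have hx : ∃ g, OneTag s g := ⟨g, h⟩
  rw [outM, dif_pos hx, hx.choose_spec.unique h]

theorem outM_neg {s : CState N (N * N) Yt} (h : ¬ ∃ g, OneTag s g) (d : Dir) : outM s d = none := by
  rw [outM, dif_neg h]

theorem outM_some {s : CState N (N * N) Yt} {d m} (h : outM s d = some m) : ∃ g, OneTag s g ∧
    gg N g.1.val g.2.val (pay s) d = some m.2 ∧ m.1 = g + ((d.off : ZMod N), (1 : ZMod (N * N))) := by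
  by_cases hx : ∃ g, OneTag s g
  · obtain ⟨g, hg⟩ := hx
    refine ⟨g, hg, ?_⟩
    rw [outM_pos hg] at h
    obtain ⟨y, hy, rfl⟩ := Option.map_eq_some_iff.1 h
    exact ⟨hy, rfl⟩
  · rw [outM_neg hx] at h
    simp at h

open Classical in
/-- the part of phase `p` -/
noncomputable def zp (p : Tag N (N * N)) (z : Orb N (N * N) Yt) (n : ℕ) : PCf := fun j d =>
  (z (p.2.val + n) (p.1.val + j) d).bind fun m =>
    if m.1 = ((j : ZMod N), (n : ZMod (N * N))) then some m.2 else none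

theorem zp_iff {p : Tag N (N * N)} {z : Orb N (N * N) Yt} {n j d y} : zp p z n j d = some y ↔
    z (p.2.val + n) (p.1.val + j) d = some (((j : ZMod N), (n : ZMod (N * N))), y) := by
  unfold zp
  cases h : z (p.2.val + n) (p.1.val + j) d with
  | none => simp
  | some m =>
    obtain ⟨g, y'⟩ := m
    simp only [Option.bind_some, Option.some.injEq, Prod.mk.injEq]
    by_cases hg : g = ((j : ZMod N), (n : ZMod (N * N)))
    · simp [hg]
    · simp [hg]

theorem phase_iff {p : Tag N (N * N)} {n : ℕ} {j : ℤ} {g : Tag N (N * N)} :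
    phase (p.2.val + n) (p.1.val + j) g = p ↔ g = ((j : ZMod N), (n : ZMod (N * N))) := by
  unfold phase
  obtain ⟨p1, p2⟩ := p
  obtain ⟨g1, g2⟩ := g
  have k1 : (p1.val : ZMod N) = p1 := ZMod.natCast_zmod_val p1
  have k2 : (p2.val : ZMod (N * N)) = p2 := ZMod.natCast_zmod_val p2
  simp only [Prod.mk.injEq, Int.cast_add, Nat.cast_add, Int.cast_natCast, k1, k2]
  constructor
  · rintro ⟨h1, h2⟩
    constructor
    · linear_combination -h1
    · linear_combination -h2
  · rintro ⟨rfl, rfl⟩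
    constructor <;> ring

theorem zp_ne {p : Tag N (N * N)} {z : Orb N (N * N) Yt} {n : ℕ} {j : ℤ} {d} :
    zp p z n j d ≠ none ↔ ∃ m, z (p.2.val + n) (p.1.val + j) d = some m ∧
      phase (p.2.val + n) (p.1.val + j) m.1 = p := by
  rw [Option.ne_none_iff_exists']
  constructor
  · rintro ⟨y, h⟩
    exact ⟨_, zp_iff.1 h, phase_iff.2 rfl⟩
  · rintro ⟨⟨g, y⟩, h, h2⟩
    obtain rfl := phase_iff.1 h2
    exact ⟨y, zp_iff.2 h⟩

theorem livep_iff {p : Tag N (N * N)} {z : Orb N (N * N) Yt} {n : ℕ} {j : ℤ} :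
    LiveP p z (p.2.val + n) (p.1.val + j) ↔ ∃ d, zp p z n j d ≠ none := by
  simp only [zp_ne, LiveP]

theorem effp_iff {p : Tag N (N * N)} {z : Orb N (N * N) Yt} {n : ℕ} {j : ℤ} :
    EffP p z (p.2.val + n) (p.1.val + j) ↔ ∃ d, zp p z (n + 1) (j + d.off) d ≠ none := by
  simp only [zp_ne, EffP, add_assoc]

theorem val_int (j : ℤ) : ((j : ZMod N)).val = (j % N).toNat := by
  have h := ZMod.val_intCast (n := N) j
  omega

theorem zp_faulty {z : Orb N (N * N) Yt} (hz : Faulty outM z) (p : Tag N (N * N)) (θ : ℕ) :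
    FO N fun n => zp p z (N * N * θ + n) := by
  intro n hn j d v hv
  have h1 := zp_iff.1 hv
  rw [show p.2.val + (N * N * θ + (n + 1)) = p.2.val + (N * N * θ + n) + 1 by ring] at h1
  obtain ⟨g, hg, h3, h4⟩ := outM_some (hz _ _ _ _ h1)
  have hg' : g = (((j - d.off : ℤ) : ZMod N), ((N * N * θ + n : ℕ) : ZMod (N * N))) := by
    obtain ⟨g1, g2⟩ := g
    simp only [Prod.mk_add_mk, Prod.mk.injEq] at h4
    rw [Prod.mk.injEq]
    constructor
    · push_cast; linear_combination -h4.1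
    · have := h4.2
      push_cast at this ⊢
      linear_combination -this
  have hv1 : g.1.val = ((j - d.off) % N).toNat := by rw [hg', val_int]
  have hv2 : g.2.val = n := by
    rw [hg', Nat.cast_add, Nat.cast_mul, ZMod.natCast_self, zero_mul, zero_add, ZMod.val_natCast,
      Nat.mod_eq_of_lt hn]
  have hpay : pay (z (p.2.val + (N * N * θ + n)) (p.1.val + j - d.off)) =
      zp p z (N * N * θ + n) (j - d.off) := by
    funext d'
    rw [add_sub_assoc] at hg ⊢
    unfold pay
    cases hm : z (p.2.val + (N * N * θ + n)) (p.1.val + (j - d.off)) d' with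
    | none =>
      symm
      by_contra hne
      obtain ⟨m, hm', _⟩ := zp_ne.1 hne
      rw [hm] at hm'
      simp at hm'
    | some m =>
      symm
      rw [Option.map_some, zp_iff, hm]
      have := hg.2 d' m hm
      rw [hg'] at this
      rw [← this]
  simp only [pstep]
  rw [← hpay, ← hv1]
  rw [hv2] at h3
  exact h3

def tagOf (N A e w : ℕ) : Tag N (N * N) := ((A : ZMod N), ((e * N + hd N e w : ℕ) : ZMod (N * N)))

theorem tag_lt {A e w : ℕ} (he : e < N) (hw : w < N) : e * N + hd N e w < N * N := by
  have := hd_lt (e := e) hw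
  have h2 : (e + 1) * N ≤ N * N := Nat.mul_le_mul_right _ he
  rw [add_mul] at h2
  omega

theorem tagOf_dec {A e w : ℕ} (hA : A < N) (he : e < N) (hw : w < N) :
    (tagOf N A e w).1.val = A ∧ (tagOf N A e w).2.val / N = e ∧
      hd N ((tagOf N A e w).2.val / N) ((tagOf N A e w).2.val % N) = w := by
  have h1 : (tagOf N A e w).2.val = e * N + hd N e w := by
    rw [tagOf, ZMod.val_natCast, Nat.mod_eq_of_lt (tag_lt (A := A) he hw)]
  have hh := hd_lt (e := e) hw
  have h2 : (e * N + hd N e w) / N = e := by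
    rw [mul_comm, Nat.mul_add_div (by omega), Nat.div_eq_of_lt hh, add_zero]
  have h3 : (e * N + hd N e w) % N = hd N e w := by
    rw [mul_comm, Nat.mul_add_mod, Nat.mod_eq_of_lt hh]
  refine ⟨?_, ?_, ?_⟩
  · rw [tagOf, ZMod.val_natCast, Nat.mod_eq_of_lt hA]
  · rw [h1, h2]
  · rw [h1, h2, h3, hd_hd hw]

theorem gg_tagOf {A e w : ℕ} (hA : A < N) (he : e < N) (hw : w < N) (P : Dir → Option Yt) (d : Dir) :
    gg N (tagOf N A e w).1.val (tagOf N A e w).2.val P d = GG (kof N A e w P) d := by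
  obtain ⟨h1, h2, h3⟩ := tagOf_dec hA he hw
  rw [gg, h1, h3, h2]

theorem tagOf_next (hN : GoodN N) {A e w : ℕ} (hA : A < N) (he : e < N) (hw : w < N) (d : Dir) :
    tagOf N (xf N A e w (.A d)) (xf N A e w .E) (xf N A e w .W) =
      tagOf N A e w + ((d.off : ZMod N), (1 : ZMod (N * N))) := by
  have h4 := hN.d4
  have hc : ((N : ℕ) : ZMod N) = 0 := ZMod.natCast_self N
  rw [tagOf, tagOf, Prod.mk_add_mk, Prod.mk.injEq]
  constructor
  · cases d with
    | C => simp [xf, Dir.off]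
    | R =>
      simp only [xf, Dir.off, up]
      split_ifs with h
      · have h9 : ((A + 1 : ℕ) : ZMod N) = 0 := by rw [h]; exact hc
        push_cast at h9 ⊢
        exact h9.symm
      · push_cast; simp
    | L =>
      simp only [xf, Dir.off, dn]
      split_ifs with h
      · subst h
        rw [Nat.cast_sub (by omega)]; simp
      · rw [Nat.cast_sub (by omega)]; push_cast; ring
  · have hT : ((N * N : ℕ) : ZMod (N * N)) = 0 := ZMod.natCast_self _
    rw [← Nat.cast_one, ← Nat.cast_add]
    simp only [xf]
    unfold nxt
    by_cases he2 : e % 2 = 1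
    · rw [if_pos he2]
      by_cases hw0 : w = 0
      · rw [if_pos hw0]
        simp only [up]
        by_cases heN : e + 1 = N
        · rw [if_pos heN]
          have : e * N + hd N e w + 1 = N * N := by
            have h9 : e * N + N = N * N := by rw [← add_one_mul, heN]
            simp only [hd, if_pos he2]; omega
          rw [this, hT]
          simp [hd, hw0]
        · rw [if_neg heN]
          congr 1
          have h9 : (e + 1) * N = e * N + N := by ring
          simp only [hd, if_pos he2, if_neg (show ¬ (e + 1) % 2 = 1 by omega)]
          omega
      · rw [if_neg hw0]
        congr 1
        simp only [hd, if_pos he2]; omega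
    · rw [if_neg he2]
      by_cases hw0 : w + 1 = N
      · rw [if_pos hw0]
        simp only [up, if_neg (show ¬ e + 1 = N by omega)]
        congr 1
        have h9 : (e + 1) * N = e * N + N := by ring
        simp only [hd, if_neg he2, if_pos (show (e + 1) % 2 = 1 by omega)]
        omega
      · rw [if_neg hw0]
        congr 1
        simp only [hd, if_neg he2]; omega

open Classical in
noncomputable def DM (p : Tag N (N * N)) (z : Orb N (N * N) Yt) : Orb N (N * N) Yt := fun θ X d =>
  if h : ∃ q : ℕ × ℕ × ℕ × (Dir → Option Yt),
      VB N (blk N (zp p z (N * N * θ)) X) q.1 q.2.1 q.2.2.1 q.2.2.2 then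
    (h.choose.2.2.2 d).map fun y => (tagOf N h.choose.1 h.choose.2.1 h.choose.2.2.1, y)
  else none

theorem DM_pos (hN : GoodN N) {p : Tag N (N * N)} {z : Orb N (N * N) Yt} {θ X A e w P}
    (h : VB N (blk N (zp p z (N * N * θ)) X) A e w P) (d : Dir) :
    DM p z θ X d = (P d).map fun y => (tagOf N A e w, y) := by
  have hx : ∃ q : ℕ × ℕ × ℕ × (Dir → Option Yt),
      VB N (blk N (zp p z (N * N * θ)) X) q.1 q.2.1 q.2.2.1 q.2.2.2 := ⟨⟨A, e, w, P⟩, h⟩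
  obtain ⟨h1, h2, h3, h4⟩ := hx.choose_spec.unique hN h
  rw [DM, dif_pos hx, h1, h2, h3, h4]

theorem DM_neg {p : Tag N (N * N)} {z : Orb N (N * N) Yt} {θ X}
    (h : ¬ VBx N (zp p z (N * N * θ)) X) (d : Dir) : DM p z θ X d = none := by
  rw [DM, dif_neg]
  rintro ⟨⟨A, e, w, P⟩, h2⟩
  exact h ⟨A, e, w, P, h2⟩

theorem DM_some (hN : GoodN N) {p : Tag N (N * N)} {z : Orb N (N * N) Yt} {θ X d m}
    (h : DM p z θ X d = some m) : ∃ A e w P y, VB N (blk N (zp p z (N * N * θ)) X) A e w P ∧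
      P d = some y ∧ m = (tagOf N A e w, y) := by
  by_cases hx : VBx N (zp p z (N * N * θ)) X
  · obtain ⟨A, e, w, P, hv⟩ := hx
    rw [DM_pos hN hv] at h
    obtain ⟨y, hy, rfl⟩ := Option.map_eq_some_iff.1 h
    exact ⟨A, e, w, P, y, hv, hy, rfl⟩
  · rw [DM_neg hx] at h
    simp at h

theorem live_DM (hN : GoodN N) {p : Tag N (N * N)} {z : Orb N (N * N) Yt} {θ X} :
    Live (DM p z) θ X ↔ VBx N (zp p z (N * N * θ)) X := by
  constructor
  · rintro ⟨d, m, h⟩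
    obtain ⟨A, e, w, P, y, h, _⟩ := DM_some hN h
    exact ⟨A, e, w, P, h⟩
  · rintro ⟨A, e, w, P, h⟩
    obtain ⟨d, y, hy⟩ := h.ne
    exact ⟨d, _, by rw [DM_pos hN h, hy]; rfl⟩

theorem zp_dom (hN : GoodN N) {z : Orb N (N * N) Yt} (hz : Faulty outM z) (p : Tag N (N * N)) (θ : ℕ) :
    cle (zp p z (N * N * (θ + 1))) (run N (N * N) (zp p z (N * N * θ))) := by
  have := (zp_faulty hz p θ).dom hN (N * N) le_rfl
  simpa [mul_add] using this

theorem h1_M (hN : GoodN N) (p : Tag N (N * N)) (z : Orb N (N * N) Yt) (hz : Faulty outM z) :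
    Faulty outM (DM p z) := by
  intro θ X d m hm
  obtain ⟨A, e, w, P, y, h, hy, rfl⟩ := DM_some hN hm
  have hl := hN.len
  have hdom := zp_dom hN hz p θ
  have hcell : ∀ a < N, run N (N * N) (zp p z (N * N * θ)) (N * X + a) d =
      some (.letter (encN N A e w y a)) := by
    intro a ha
    apply hdom
    have := h.eq a ha d
    rw [hy] at this
    exact this
  by_cases hx : VBx N (zp p z (N * N * θ)) (X - d.off)
  · obtain ⟨A', e', w', P', h'⟩ := hx
    have hg : ∀ a < N, (GG (kof N A' e' w' P') d).map (fun y => Yt.letter (encN N (xf N A' e' w' (.A d))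
        (xf N A' e' w' .E) (xf N A' e' w' .W) y a)) = some (.letter (encN N A e w y a)) := by
      intro a ha
      rw [← hcell a ha, run_period_good hN _ X d h' ha]
    cases hG : GG (kof N A' e' w' P') d with
    | none =>
      have := hg 0 (by omega)
      rw [hG] at this
      simp at this
    | some y' =>
      have key := enc_inj hN h.hA h.he h.hw (y' := y') (A' := xf N A' e' w' (.A d))
        (e' := xf N A' e' w' .E) (w' := xf N A' e' w' .W) (y := y) (fun a ha => by
          have := hg a ha
          rw [hG] at this
          simp only [Option.map_some, Option.some.injEq, Yt.letter.injEq] at this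
          exact this.symm)
      have hone : OneTag (DM p z θ (X - d.off)) (tagOf N A' e' w') := by
        constructor
        · exact (live_DM hN).2 ⟨_, _, _, _, h'⟩
        · intro d' m hm
          rw [DM_pos hN h'] at hm
          obtain ⟨y, hy, rfl⟩ := Option.map_eq_some_iff.1 hm
          rfl
      have hpay : pay (DM p z θ (X - d.off)) = P' := by
        funext d'
        rw [pay, DM_pos hN h', Option.map_map]
        exact Option.map_id'
      rw [outM_pos hone, hpay, gg_tagOf h'.hA h'.he h'.hw, hG, Option.map_some,
        ← tagOf_next hN h'.hA h'.he h'.hw, ← key.1, ← key.2.1, ← key.2.2.1, ← key.2.2.2]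
  · have := hcell 0 (by omega)
    rw [run_period_bad hN _ X d hx (by omega)] at this
    simp at this

theorem eff_cells (hN : GoodN N) {p : Tag N (N * N)} {z : Orb N (N * N) Yt} {θ X}
    (h : Eff (DM p z) θ X) : ∃ d : Dir, ∀ a < N,
      zp p z (N * N * θ + N * N) (N * (X + d.off) + a) d ≠ none := by
  obtain ⟨d, m, h0⟩ := h
  obtain ⟨A, e, w, P, y, h, hy, rfl⟩ := DM_some hN h0
  refine ⟨d, fun a ha => ?_⟩
  have := h.eq a ha d
  rw [hy, blk, mul_add, mul_one] at this
  rw [this]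
  simp

theorem h3'_M (hN : GoodN N) (p : Tag N (N * N)) (z : Orb N (N * N) Yt) (hz : Faulty outM z) (θ : ℕ)
    (X : ℤ) (h : Eff (DM p z) θ X) (τ : ℕ) (hτ : τ < N * N - N) (a : ℕ) (ha : a < N) :
    ∃ j : ℤ, |j - (p.1.val + N * X + a)| ≤ 1 ∧ EffP p z (p.2.val + N * N * θ + τ) j := by
  obtain ⟨d, hc⟩ := eff_cells hN h
  have hl := hN.len
  have hF := zp_faulty hz p θ
  have e0 : (N - 1) * N + N = N * N := by
    rw [← add_one_mul, Nat.sub_add_cancel (by omega)]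
  have hq : ∀ a < N, blk N ((fun n => zp p z (N * N * θ + n)) ((N - 1) * N)) X a .C ≠ none := by
    intro a ha
    have := transit_back hN hF (j := N * (X + d.off) + a) (d := d) (N - 1) (by omega) (by
      rw [Nat.sub_add_cancel (by omega), e0]
      exact hc a ha)
    rw [blk]
    convert this using 2
    rw [Nat.cast_sub (by omega)]; push_cast; ring
  obtain ⟨j, d', hj, hv⟩ := eff_local hN hF hq (n := τ + 1) (by omega) (by omega) ha
  refine ⟨p.1.val + j, ?_, ?_⟩
  · rw [show (p.1.val : ℤ) + j - (p.1.val + N * X + a) = j - (N * X + a) by ring]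
    exact hj
  · rw [add_assoc, effp_iff]
    exact ⟨d', hv⟩

theorem h3_M (hN : GoodN N) (p : Tag N (N * N)) (z : Orb N (N * N) Yt) (hz : Faulty outM z) (θ : ℕ)
    (X : ℤ) (h : Eff (DM p z) θ X) (τ : ℕ) (hτ : τ < N * N) :
    ∃ j : ℤ, p.1.val + N * (X - 1) ≤ j ∧ j < p.1.val + N * (X + 2) ∧
      EffP p z (p.2.val + N * N * θ + τ) j := by
  have hl := hN.len
  have e0 : N ≤ N * N := by nlinarith
  by_cases hx : τ < N * N - N
  · obtain ⟨j, hj, hv⟩ := h3'_M hN p z hz θ X h τ hx 0 (by omega)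
    rw [abs_le] at hj
    refine ⟨j, ?_, ?_, hv⟩
    · rw [mul_sub]; push_cast at hj; omega
    · rw [mul_add]; push_cast at hj; omega
  · obtain ⟨d, hc⟩ := eff_cells hN h
    have hF := zp_faulty hz p θ
    have hb := transit_back' hN hF (j := N * (X + d.off) + (0 : ℕ)) (d := d) (hc 0 (by omega))
      (N * N - τ - 1) (by omega)
    have e1 : N * N - (N * N - τ - 1) = τ + 1 := by omega
    simp only [e1] at hb
    set k : ℕ := N * N - τ - 1 with hk
    have hkN : k < N := by omega
    refine ⟨p.1.val + (N * (X + d.off) + (0 : ℕ) - k * d.off - d.off), ?_, ?_, ?_⟩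
    · cases d <;> simp [Dir.off] <;> ring_nf <;> omega
    · cases d <;> simp [Dir.off] <;> ring_nf <;> omega
    · rw [add_assoc, effp_iff]
      refine ⟨d, ?_⟩
      rw [sub_add_cancel]
      exact hb

open Classical in
theorem h4_M (hN : GoodN N) (p : Tag N (N * N)) (z : Orb N (N * N) Yt) (hz : Faulty outM z) (θ : ℕ)
    (X : ℤ) (a : ℕ) (ha : a < N) :
    ((Finset.range (N * N)).filter fun τ =>
      LiveP p z (p.2.val + N * N * (θ + 1) + τ) (p.1.val + N * X + a)).card ≤
    (N * N - 25 * N) * ind (Live (DM p z) (θ + 1) X) +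
      (4 * N) * ∑ d : Dir, (ind (Live (DM p z) (θ + 1) (X + d.off)) + ind (Live (DM p z) θ (X + d.off))) := by
  have hl := hN.len
  have hF := zp_faulty hz p (θ + 1)
  have hc := count_le hN hF X ha
  simp only [add_zero] at hc
  have e1 : ∀ τ, LiveP p z (p.2.val + N * N * (θ + 1) + τ) (p.1.val + N * X + a) ↔
      ∃ d, zp p z (N * N * (θ + 1) + τ) (N * X + a) d ≠ none := by
    intro τ
    rw [add_assoc, add_assoc, livep_iff]
  simp only [e1, live_DM hN]
  refine hc.trans ?_
  gcongr
  have i1 : ind (∃ d : Dir, VBx N (zp p z (N * N * (θ + 1))) (X + d.off)) ≤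
      ∑ d : Dir, ind (VBx N (zp p z (N * N * (θ + 1))) (X + d.off)) := by
    by_cases hx : ∃ d : Dir, VBx N (zp p z (N * N * (θ + 1))) (X + d.off)
    · obtain ⟨d, hd⟩ := hx
      calc _ ≤ 1 := by unfold ind; split_ifs <;> simp
        _ = ind (VBx N (zp p z (N * N * (θ + 1))) (X + d.off)) := by rw [ind, if_pos hd]
        _ ≤ _ := Finset.single_le_sum (f := fun d : Dir => ind (VBx N (zp p z (N * N * (θ + 1))) (X + d.off)))
          (fun _ _ => Nat.zero_le _) (Finset.mem_univ d)
    · rw [ind, if_neg hx]; exact Nat.zero_le _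
  have i2 : ind (∃ a < N, ∃ d, zp p z (N * N * (θ + 1)) (N * X + a) d ≠ none) ≤
      ∑ d : Dir, ind (VBx N (zp p z (N * N * θ)) (X + d.off)) := by
    by_cases hx : ∃ a < N, ∃ d, zp p z (N * N * (θ + 1)) (N * X + a) d ≠ none
    · obtain ⟨a, ha, d, hd⟩ := hx
      have h2 := ne_none_cle (zp_dom hN hz p θ) hd
      have h3 : VBx N (zp p z (N * N * θ)) (X - d.off) := by
        by_contra h3
        exact h2 (run_period_bad hN _ X d h3 ha)
      obtain ⟨d', hd'⟩ : ∃ d' : Dir, X - d.off = X + d'.off := by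
        cases d
        · exact ⟨.R, by simp [Dir.off]⟩
        · exact ⟨.C, by simp [Dir.off]⟩
        · exact ⟨.L, by simp [Dir.off]; ring⟩
      rw [hd'] at h3
      calc _ ≤ 1 := by unfold ind; split_ifs <;> simp
        _ = ind (VBx N (zp p z (N * N * θ)) (X + d'.off)) := by rw [ind, if_pos h3]
        _ ≤ _ := Finset.single_le_sum (f := fun d : Dir => ind (VBx N (zp p z (N * N * θ)) (X + d.off)))
          (fun _ _ => Nat.zero_le _) (Finset.mem_univ d')
    · rw [ind, if_neg hx]; exact Nat.zero_le _
  rw [Finset.sum_add_distrib]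
  nlinarith

theorem hyp_M (hN : GoodN N) : Hyp N (N * N) (25 * N) (4 * N) Yt outM DM where
  N16 := by have := hN.len; omega
  N4 := hN.d4
  T4 := (Nat.dvd_trans ⟨2, rfl⟩ hN.d4).mul_right N
  TN := Nat.mul_le_mul_right _ (by have := hN.len; omega)
  VT := Nat.mul_le_mul_right _ (by have := hN.len; omega)
  VQ := by have := hN.len; omega
  h0 := by
    intro s d m h
    obtain ⟨g, hg, _, h3⟩ := outM_some h
    refine ⟨hg.1, fun d' m' h' => ?_⟩
    rw [hg.2 d' m' h', h3]
  h1 := h1_M hN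
  h2 := by
    intro p z θ X h a ha
    obtain ⟨A, e, w, P, h⟩ := (live_DM hN).1 h
    obtain ⟨d, y, hy⟩ := h.ne
    rw [add_assoc, livep_iff]
    refine ⟨d, ?_⟩
    have := h.eq a ha d
    rw [hy, blk] at this
    rw [this]; simp
  h3 := h3_M hN
  h3' := h3'_M hN
  h4 := h4_M hN

end Machine


set_option linter.unusedSectionVars false
set_option linter.unusedSimpArgs false
set_option linter.unusedVariables false

/-! ### the cellular automaton -/

section Final

variable {N : ℕ} [NeZero N]

noncomputable def Ph (x : ℤ → CState N (N * N) Yt) : ℤ → CState N (N * N) Yt := fun j d =>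
  outM (x (j - d.off)) d

theorem orbit_faulty (x : ℤ → CState N (N * N) Yt) : Faulty outM (fun t => Ph^[t] x) := by
  intro t j d m h
  simp only [Function.iterate_succ_apply'] at h
  exact h

noncomputable def cfg (n : ℕ) (c : PCf) : ℤ → CState N (N * N) Yt := fun j d =>
  (c j d).map fun y => (((j : ZMod N), (n : ZMod (N * N))), y)

theorem pay_cfg (n : ℕ) (c : PCf) (j : ℤ) : pay (cfg (N := N) n c j) = c j := by
  funext d
  rw [pay, cfg, Option.map_map]
  exact Option.map_id'

theorem cfg_empty {n : ℕ} {c : PCf} {j : ℤ} (h : ∀ d, c j d = none) :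
    ¬ ∃ g, OneTag (cfg (N := N) n c j) g := by
  rintro ⟨g, ⟨d, m, hm⟩, _⟩
  rw [cfg, h] at hm
  simp at hm

theorem cfg_one {n : ℕ} {c : PCf} {j : ℤ} (h : ¬ ∀ d, c j d = none) :
    OneTag (cfg (N := N) n c j) ((j : ZMod N), (n : ZMod (N * N))) := by
  push Not at h
  obtain ⟨d, hd⟩ := h
  obtain ⟨y, hy⟩ := Option.ne_none_iff_exists'.1 hd
  refine ⟨⟨d, _, by rw [cfg, hy]; rfl⟩, ?_⟩
  intro d' m hm
  obtain ⟨y, _, rfl⟩ := Option.map_eq_some_iff.1 hm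
  rfl

theorem Ph_cfg (n : ℕ) (c : PCf) : Ph (cfg (N := N) n c) = cfg (n + 1) (pstep N (n % (N * N)) c) := by
  funext j d
  rw [Ph, cfg, pstep]
  by_cases h : ∀ d', c (j - d.off) d' = none
  · rw [outM_neg (cfg_empty h), gg_none h]; rfl
  · rw [outM_pos (cfg_one h), pay_cfg, val_int, ZMod.val_natCast]
    congr 1
    funext y
    simp

theorem Ph_run (c : PCf) : ∀ n ≤ N * N, Ph^[n] (cfg (N := N) 0 c) = cfg n (run N n c)
  | 0, _ => rfl
  | n + 1, h => by
    rw [Function.iterate_succ_apply', Ph_run c n (by omega), Ph_cfg, Nat.mod_eq_of_lt (by omega)]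
    rfl

theorem Ph_period (c : PCf) : Ph^[N * N] (cfg (N := N) 0 c) = cfg 0 (run N (N * N) c) := by
  rw [Ph_run c _ le_rfl]
  funext j d
  simp [cfg]

/-- decoded tags -/
def dA (g : Tag N (N * N)) : ℕ := g.1.val
def dE (g : Tag N (N * N)) : ℕ := g.2.val / N
def dW (g : Tag N (N * N)) : ℕ := hd N (g.2.val / N) (g.2.val % N)

theorem dA_lt (g : Tag N (N * N)) : dA g < N := ZMod.val_lt _
theorem dE_lt (g : Tag N (N * N)) : dE g < N := Nat.div_lt_of_lt_mul (ZMod.val_lt g.2)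
theorem dW_lt (g : Tag N (N * N)) : dW g < N := hd_lt (Nat.mod_lt _ (NeZero.pos N))

theorem tagOf_d (g : Tag N (N * N)) : tagOf N (dA g) (dE g) (dW g) = g := by
  rw [tagOf]
  have h1 : dE g * N + hd N (dE g) (dW g) = g.2.val := by
    rw [dW, dE, hd_hd (Nat.mod_lt _ (NeZero.pos N)), Nat.div_add_mod']
  rw [h1, dA]
  simp only [ZMod.natCast_zmod_val]

/-- encoding of a configuration -/
noncomputable def ec (x : ℤ → CState N (N * N) Yt) : PCf := fun j d =>
  (x (j / N) d).map fun m => .letter (encN N (dA m.1) (dE m.1) (dW m.1) m.2 (j % N).toNat)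

noncomputable def SS (x : ℤ → CState N (N * N) Yt) : ℤ → CState N (N * N) Yt := cfg 0 (ec x)

theorem ec_blk (x : ℤ → CState N (N * N) Yt) (X : ℤ) {a : ℕ} (ha : a < N) (d : Dir) :
    ec x (N * X + a) d =
      (x X d).map fun m => .letter (encN N (dA m.1) (dE m.1) (dW m.1) m.2 a) := by
  have h1 : ((N : ℤ) * X + a) / N = X := by
    rw [Int.mul_add_ediv_left _ _ (by omega), Int.ediv_eq_zero_of_lt (by omega) (by omega), add_zero]
  rw [ec, addr_eq ha, h1]

theorem ec_one {x : ℤ → CState N (N * N) Yt} {X : ℤ} {g} (h : OneTag (x X) g) :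
    VB N (blk N (ec x) X) (dA g) (dE g) (dW g) (pay (x X)) where
  hA := dA_lt g
  he := dE_lt g
  hw := dW_lt g
  ne := by
    obtain ⟨⟨d, m, hm⟩, _⟩ := h
    exact ⟨d, m.2, by rw [pay, hm]; rfl⟩
  eq := by
    intro a ha d
    rw [blk, ec_blk x X ha, pay]
    cases hm : x X d with
    | none => rfl
    | some m => simp [h.2 d m hm]

theorem ec_empty {x : ℤ → CState N (N * N) Yt} {X : ℤ} (h : ∀ d, x X d = none) :
    ¬ ∃ A e w P, VB N (blk N (ec x) X) A e w P := by
  rintro ⟨A, e, w, P, hv⟩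
  obtain ⟨d, y, hy⟩ := hv.ne
  have := hv.eq 0 (NeZero.pos N) d
  rw [hy, blk, ec_blk x X (NeZero.pos N), h] at this
  simp at this

theorem period_SS (hN : GoodN N) {x : ℤ → CState N (N * N) Yt} {n c} (hx : x = cfg n c) :
    Ph^[N * N] (SS x) = SS (Ph x) := by
  have hp := NeZero.pos N
  rw [SS, Ph_period, SS]
  congr 1
  funext j d
  obtain ⟨X, a, ha, rfl⟩ : ∃ (X : ℤ) (a : ℕ), a < N ∧ j = N * X + a := by
    have h2 := Int.emod_nonneg j (show (N : ℤ) ≠ 0 by omega)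
    have h3 := Int.emod_lt_of_pos j (show (0 : ℤ) < N by omega)
    have h1 := Int.mul_ediv_add_emod j N
    refine ⟨j / N, (j % N).toNat, by omega, ?_⟩
    rw [Int.toNat_of_nonneg h2, h1]
  rw [ec_blk _ X ha, Ph]
  by_cases h : ∀ d', c (X - d.off) d' = none
  · have h1 : ∀ d', x (X - d.off) d' = none := by
      intro d'
      rw [hx, cfg, h]; rfl
    rw [run_period_bad hN _ X d (ec_empty h1) ha, outM_neg]
    · rfl
    · rw [hx]; exact cfg_empty h
  · obtain ⟨g, hg⟩ : ∃ g, OneTag (x (X - d.off)) g := ⟨_, by rw [hx]; exact cfg_one h⟩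
    rw [run_period_good hN _ X d (ec_one hg) ha, outM_pos hg]
    have hgg := gg_tagOf (dA_lt g) (dE_lt g) (dW_lt g) (pay (x (X - d.off))) d
    rw [tagOf_d] at hgg
    rw [hgg, Option.map_map]
    congr 1
    funext y
    have hn := tagOf_next hN (dA_lt g) (dE_lt g) (dW_lt g) d
    rw [tagOf_d] at hn
    simp only [Function.comp_apply]
    rw [← hn]
    have b1 : xf N (dA g) (dE g) (dW g) (.A d) < N := by
      cases d
      · exact dn_lt (dA_lt g)
      · exact dA_lt g
      · exact up_lt (dA_lt g)
    have b2 : xf N (dA g) (dE g) (dW g) .E < N := by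
      have := up_lt (dE_lt g)
      have := dE_lt g
      simp only [xf, nxt]
      split_ifs <;> simp_all
    have b3 : xf N (dA g) (dE g) (dW g) .W < N := by
      have := dW_lt g
      simp only [xf, nxt]
      split_ifs <;> simp only <;> omega
    obtain ⟨t1, t2, t3⟩ := tagOf_dec b1 b2 b3
    generalize tagOf N (xf N (dA g) (dE g) (dW g) (.A d)) (xf N (dA g) (dE g) (dW g) .E)
      (xf N (dA g) (dE g) (dW g) .W) = G at t1 t2 t3 ⊢
    have t1' : dA G = _ := t1
    have t2' : dE G = _ := t2
    have t3' : dW G = _ := t3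
    rw [t1', t2', t3']

def PCx (x : ℤ → CState N (N * N) Yt) : Prop := ∃ n c, x = cfg n c

theorem PCx.ph {x : ℤ → CState N (N * N) Yt} (h : PCx x) : PCx (Ph x) := by
  obtain ⟨n, c, rfl⟩ := h
  exact ⟨_, _, Ph_cfg n c⟩

theorem PCx.iter {x : ℤ → CState N (N * N) Yt} (h : PCx x) : ∀ n, PCx (Ph^[n] x)
  | 0 => h
  | n + 1 => by
    rw [Function.iterate_succ_apply']
    exact (PCx.iter h n).ph

theorem PCx.ss (x : ℤ → CState N (N * N) Yt) : PCx (SS x) := ⟨0, ec x, rfl⟩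

theorem periods (hN : GoodN N) {x : ℤ → CState N (N * N) Yt} (h : PCx x) :
    ∀ i, Ph^[N * N * i] (SS x) = SS (Ph^[i] x)
  | 0 => rfl
  | i + 1 => by
    rw [mul_add, mul_one, add_comm, Function.iterate_add_apply, periods hN h i]
    obtain ⟨n, c, hc⟩ := h.iter i
    rw [period_SS hN hc, Function.iterate_succ_apply']

theorem pcx_iter {u : ℤ → CState N (N * N) Yt} (h : PCx u) (k : ℕ) : PCx (SS^[k] u) := by
  cases k with
  | zero => exact h
  | succ k => rw [Function.iterate_succ_apply']; exact PCx.ss _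

theorem hier (hN : GoodN N) {u : ℤ → CState N (N * N) Yt} (h : PCx u) :
    ∀ k, Ph^[(N * N) ^ k] (SS^[k] u) = SS^[k] (Ph u)
  | 0 => by simp
  | k + 1 => by
    rw [Function.iterate_succ_apply', pow_succ', periods hN (pcx_iter h k), hier hN h k,
      Function.iterate_succ_apply']

def FL (x : ℤ → CState N (N * N) Yt) : Prop := ∀ j, x j ≠ fun _ => none

theorem FL.ss {x : ℤ → CState N (N * N) Yt} (h : FL x) : FL (SS x) := by
  intro j hj
  apply h (j / N)
  funext d
  have := congrFun hj d
  simp only [SS, cfg, ec, Option.map_eq_none_iff] at this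
  exact this

theorem FL.iter {x : ℤ → CState N (N * N) Yt} (h : FL x) : ∀ k, FL (SS^[k] x)
  | 0 => h
  | k + 1 => by
    rw [Function.iterate_succ_apply']
    exact (FL.iter h k).ss

noncomputable def seedC : PCf := fun _ d => if d = .C then
  some (.body (⟨fun _ => false, fun _ => false, fun _ => false, fun _ => false, fun _ => false⟩, none)) else none

theorem seed_FL (hN : GoodN N) : FL (Ph (cfg (N := N) 1 seedC)) := by
  have hl := hN.len
  intro j hj
  have := congrFun hj .C
  rw [Ph_cfg] at this
  simp only [cfg, Option.map_eq_none_iff] at this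
  have h1 : 1 < N := by omega
  have h2 : 1 < N * N := by nlinarith
  rw [Nat.mod_eq_of_lt h2, pstep] at this
  have h3 := gg_eq_gs (N := N) (a := ((j - Dir.C.off) % N).toNat) (e := 0) h1 (seedC (j - Dir.C.off)) .C
  rw [zero_mul, zero_add] at h3
  rw [h3, gs] at this
  have h4 : GG (kof N ((j - Dir.C.off) % N).toNat 0 (hd N 0 1) (seedC (j - Dir.C.off))) .C =
      stay (seedC (j - Dir.C.off)) .C := by
    have hi : (kof N ((j - Dir.C.off) % N).toNat 0 (hd N 0 1) (seedC (j - Dir.C.off))).ie =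
      .inl .start := instr_zero N
    have hw : ¬ (kof N ((j - Dir.C.off) % N).toNat 0 (hd N 0 1) (seedC (j - Dir.C.off))).q.w.isFst = true := by
      have : ¬ (posOf N (hd N 0 1)).isFst = true := by
        rw [posOf_isFst]; simp [hd]
      exact this
    unfold GG
    rw [hi]
    simp only
    rw [if_neg hw]
    rfl
  rw [h4] at this
  simp [stay, seedC, bodyOf] at this

/-- there are orbits of full density at any time -/
theorem full_late (hN : GoodN N) (n : ℕ) : ∃ x : ℤ → CState N (N * N) Yt, FL (Ph^[n] x) := by
  have hl := hN.len
  have h2 : 1 < N * N := by nlinarith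
  have h3 : n ≤ (N * N) ^ n := (Nat.lt_pow_self h2).le
  refine ⟨Ph^[(N * N) ^ n - n] (SS^[n] (cfg 1 seedC)), ?_⟩
  rw [← Function.iterate_add_apply, Nat.add_sub_cancel' h3, hier hN ⟨1, seedC, rfl⟩]
  exact (seed_FL hN).iter n

theorem Ph_none : Ph (fun _ _ => none : ℤ → CState N (N * N) Yt) = fun _ _ => none := by
  funext j d
  rw [Ph, outM_neg]
  rintro ⟨g, ⟨d, m, h⟩, _⟩
  simp at h

theorem Ph_density (hN : GoodN N) (ε : ℝ) (hε : 0 < ε) : ∃ C : ℝ, ∀ x : ℤ → CState N (N * N) Yt,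
    ∀ (j : ℤ) (W : ℕ), (∑ t ∈ Finset.range W, (ind (Ph^[t] x j ≠ fun _ => none) : ℝ)) ≤ ε * W + C := by
  obtain ⟨C, hC⟩ := density_zero (hyp_M hN) ε hε
  refine ⟨C, fun x j W => ?_⟩
  have := hC _ (orbit_faulty x) j W
  rw [cnt_eq_sum] at this
  push_cast at this
  refine le_trans (le_of_eq ?_) this
  refine Finset.sum_congr rfl fun t _ => ?_
  congr 2
  rw [eq_iff_iff, Live]
  constructor
  · intro h
    by_contra hx
    apply h
    funext d
    by_contra hd
    obtain ⟨m, hm⟩ := Option.ne_none_iff_exists'.1 hd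
    exact hx ⟨d, m, hm⟩
  · rintro ⟨d, m, h⟩ h2
    rw [h2] at h
    simp at h

end Final

theorem exists_goodN : ∃ N, GoodN N := by
  refine ⟨4 * (prog.length + cY + 60), ⟨_, rfl⟩, by omega, by omega⟩


/-! ### unique ergodicity and conclusion -/

theorem ue_of_density {m : ℕ} {B : Fin (m + 1)} {Φ : (ℤ → Fin (m + 1)) → (ℤ → Fin (m + 1))}
    (hc : Continuous Φ) (hB : Φ (fun _ => B) = fun _ => B)
    (hd : ∀ ε : ℝ, 0 < ε → ∃ C : ℝ, ∀ (x : ℤ → Fin (m + 1)) (j : ℤ) (W : ℕ),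
      (∑ t ∈ Finset.range W, if Φ^[t] x j ≠ B then (1 : ℝ) else 0) ≤ ε * W + C) :
    ∃! μ : Measure (ℤ → Fin (m + 1)), IsProbabilityMeasure μ ∧
          ∀ A : Set (ℤ → Fin (m + 1)), MeasurableSet A → μ (Φ ⁻¹' A) = μ A := by
  have hm : Measurable Φ := hc.measurable
  refine ⟨Measure.dirac (fun _ => B), ⟨inferInstance, fun A hA => ?_⟩, ?_⟩
  · rw [Measure.dirac_apply' _ hA, Measure.dirac_apply' _ (hm hA)]
    have : (fun _ => B : ℤ → Fin (m + 1)) ∈ Φ ⁻¹' A ↔ (fun _ => B : ℤ → Fin (m + 1)) ∈ A := by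
      rw [Set.mem_preimage, hB]
    by_cases hb : (fun _ => B : ℤ → Fin (m + 1)) ∈ A
    · rw [Set.indicator_of_mem hb, Set.indicator_of_mem (this.2 hb)]
    · rw [Set.indicator_of_notMem hb, Set.indicator_of_notMem (mt this.1 hb)]
  · rintro μ ⟨hp, hinv⟩
    have hit : ∀ (n : ℕ) (A : Set (ℤ → Fin (m + 1))), MeasurableSet A → μ (Φ^[n] ⁻¹' A) = μ A := by
      intro n
      induction n with
      | zero => intro A _; rfl
      | succ n ih =>
        intro A hA
        rw [Function.iterate_succ, Set.preimage_comp, hinv _ ((hm.iterate n) hA), ih A hA]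
    have hz : ∀ j : ℤ, μ {x | x j ≠ B} = 0 := by
      intro j
      have hA : MeasurableSet {x : ℤ → Fin (m + 1) | x j ≠ B} :=
        measurable_pi_apply (X := fun _ : ℤ => Fin (m + 1)) j (measurableSet_singleton B).compl
      set q : ℝ := μ.real {x | x j ≠ B} with hq
      have hle : ∀ ε : ℝ, 0 < ε → q ≤ ε := by
        intro ε hε
        obtain ⟨C, hC⟩ := hd ε hε
        have hW : ∀ W : ℕ, (W : ℝ) * q ≤ ε * W + C := by
          intro W
          have e1 : ∀ t : ℕ, ∫ x, (if Φ^[t] x j ≠ B then (1 : ℝ) else 0) ∂μ = q := by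
            intro t
            have : (fun x => if Φ^[t] x j ≠ B then (1 : ℝ) else 0) =
                (Φ^[t] ⁻¹' {x | x j ≠ B}).indicator 1 := by
              funext x
              simp [Set.indicator]
            rw [this, integral_indicator_one ((hm.iterate t) hA), hq, Measure.real, Measure.real,
              hit t _ hA]
          have e2 : ∀ t ∈ Finset.range W, Integrable (fun x => if Φ^[t] x j ≠ B then (1 : ℝ) else 0) μ := by
            intro t _
            have : (fun x => if Φ^[t] x j ≠ B then (1 : ℝ) else 0) =
                (Φ^[t] ⁻¹' {x | x j ≠ B}).indicator 1 := by
              funext x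
              simp [Set.indicator]
            rw [this]
            exact (integrable_const (1 : ℝ)).indicator ((hm.iterate t) hA)
          calc (W : ℝ) * q = ∑ t ∈ Finset.range W, ∫ x, (if Φ^[t] x j ≠ B then (1 : ℝ) else 0) ∂μ := by
                simp only [e1]; simp
            _ = ∫ x, ∑ t ∈ Finset.range W, (if Φ^[t] x j ≠ B then (1 : ℝ) else 0) ∂μ :=
                (integral_finsetSum _ e2).symm
            _ ≤ ∫ x, (ε * W + C) ∂μ :=
                integral_mono (integrable_finsetSum _ e2) (integrable_const _) fun x => hC x j W
            _ = ε * W + C := by simp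
        by_contra hlt
        push Not at hlt
        obtain ⟨W, hW2⟩ := exists_nat_gt (C / (q - ε))
        rw [div_lt_iff₀ (by linarith)] at hW2
        have := hW W
        nlinarith
      have h0 : q = 0 := le_antisymm (le_of_forall_pos_le_add fun ε hε => by
        have := hle ε hε; linarith) measureReal_nonneg
      rw [hq, measureReal_eq_zero_iff] at h0
      exact h0
    have hbc : μ {(fun _ => B : ℤ → Fin (m + 1))}ᶜ = 0 := by
      have : ({(fun _ => B : ℤ → Fin (m + 1))}ᶜ : Set (ℤ → Fin (m + 1))) ⊆ ⋃ j : ℤ, {x | x j ≠ B} := by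
        intro x hx
        by_contra h
        simp only [Set.mem_iUnion, Set.mem_setOf_eq, not_exists, not_not] at h
        exact hx (funext h)
      exact measure_mono_null this (measure_iUnion_null hz)
    ext A hA
    rw [Measure.dirac_apply' _ hA]
    by_cases hb : (fun _ => B : ℤ → Fin (m + 1)) ∈ A
    · rw [Set.indicator_of_mem hb]
      have : μ Aᶜ = 0 := by
        refine measure_mono_null ?_ hbc
        rintro x hx rfl
        exact hx hb
      simpa using (prob_compl_eq_zero_iff hA).1 this
    · rw [Set.indicator_of_notMem hb]
      refine measure_mono_null ?_ hbc
      rintro x hx rfl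
      exact hb hx

theorem besicovitch_full {α : Type} [DecidableEq α] {x y : ℤ → α} (h : ∀ j, x j ≠ y j) :
    besicovitchDist x y = 1 := by
  unfold besicovitchDist
  have : (fun n : ℕ => (((Finset.Icc (-(n : ℤ)) (n : ℤ)).filter fun i => x i ≠ y i).card : ℝ) /
        (2 * (n : ℝ) + 1)) = fun _ => 1 := by
    funext n
    rw [Finset.filter_true_of_mem (fun i _ => h i), Int.card_Icc,
      show ((n : ℤ) + 1 - (-(n : ℤ))).toNat = 2 * n + 1 by omega]
    push_cast
    exact div_self (by positivity)
  rw [this, limsup_const]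


/-- There exists a cellular automaton with a quiescent state which is
uniquely ergodic but not asymptotically nilpotent in density. -/
theorem exists_uniquelyErgodic_not_AND_CA :
    ∃ (m : ℕ) (B : Fin (m + 1)) (Φ : (ℤ → Fin (m + 1)) → (ℤ → Fin (m + 1))),
      Continuous Φ ∧
      (∀ x : ℤ → Fin (m + 1), Φ (fun i => x (i + 1)) = fun i => Φ x (i + 1)) ∧
      Φ (fun _ => B) = (fun _ => B) ∧
      (∃! μ : Measure (ℤ → Fin (m + 1)), IsProbabilityMeasure μ ∧
          ∀ A : Set (ℤ → Fin (m + 1)), MeasurableSet A → μ (Φ ⁻¹' A) = μ A) ∧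
      ¬ (∀ ε : ℝ, 0 < ε → ∃ n : ℕ, ∀ x : ℤ → Fin (m + 1),
          besicovitchDist (Φ^[n] x) (fun _ => B) < ε) := by
  obtain ⟨N, hN⟩ := exists_goodN
  have hl := hN.len
  haveI : NeZero N := ⟨by omega⟩
  classical
  obtain ⟨m, hm⟩ : ∃ m, Fintype.card (CState N (N * N) Yt) = m + 1 :=
    Nat.exists_eq_succ_of_ne_zero (@Fintype.card_ne_zero _ _ ⟨fun _ => none⟩)
  obtain ⟨E⟩ : Nonempty (CState N (N * N) Yt ≃ Fin (m + 1)) := ⟨Fintype.equivFinOfCardEq hm⟩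
  obtain ⟨F, hF0⟩ : ∃ F : (Dir → Fin (m + 1)) → Fin (m + 1),
    F = fun v => E fun d => outM (E.symm (v d)) d := ⟨_, rfl⟩
  obtain ⟨Φ, hΦ0⟩ : ∃ Φ : (ℤ → Fin (m + 1)) → (ℤ → Fin (m + 1)),
    Φ = fun x j => F fun d => x (j - d.off) := ⟨_, rfl⟩
  have hΦ : ∀ x : ℤ → Fin (m + 1), Φ x = fun j => E (Ph (fun i => E.symm (x i)) j) := by
    intro x
    rw [hΦ0, hF0]
    rfl
  have hit : ∀ (n : ℕ) (x : ℤ → Fin (m + 1)), Φ^[n] x = fun j => E (Ph^[n] (fun i => E.symm (x i)) j) := by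
    intro n x
    induction n with
    | zero => simp
    | succ n ih =>
      rw [Function.iterate_succ_apply', ih, hΦ, Function.iterate_succ_apply']
      simp
  have hc : Continuous Φ := by
    rw [hΦ0]
    refine continuous_pi fun j => ?_
    have hF : Continuous F := continuous_of_discreteTopology
    exact hF.comp (continuous_pi fun d => continuous_apply _)
  have hB : Φ (fun _ => E fun _ => none) = fun _ => E fun _ => none := by
    rw [hΦ]
    simp only [Equiv.symm_apply_apply]
    funext j
    rw [Ph_none]
  refine ⟨m, E fun _ => none, Φ, hc, ?_, hB, ue_of_density hc hB ?_, ?_⟩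
  · intro x
    funext j
    simp only [hΦ0]
    congr 1
    funext d
    congr 1
    ring
  · intro ε hε
    obtain ⟨C, hC⟩ := Ph_density hN ε hε
    refine ⟨C, fun x j W => le_trans (le_of_eq ?_) (hC (fun i => E.symm (x i)) j W)⟩
    refine Finset.sum_congr rfl fun t _ => ?_
    rw [hit, ind]
    simp only [ne_eq, EmbeddingLike.apply_eq_iff_eq]
    split_ifs <;> simp
  · intro hA
    obtain ⟨n, hn⟩ := hA (1 / 2) (by norm_num)
    obtain ⟨x, hx⟩ := full_late hN n
    have h1 := hn fun i => E (x i)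
    rw [besicovitch_full] at h1
    · norm_num at h1
    · intro j
      rw [hit]
      simp only [Equiv.symm_apply_apply]
      exact fun h => hx j (E.injective h)
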